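/- arXiv:math/9705223 — 2 statements merged into one kernel-verified Lean document; each statement's English description precedes it below -/
import Mathlib

section
/- Let n \ge 3 and a \ge 1 be integers. There exists an integer N (depending on n and a) such that for every odd integer q > N the following holds. If a is even, writing g(y) := y^{2n-1} \cdot (1 + y^2 + ... + y^{2a-2})^{n-3} \cdot (1 + y^2 + ... + y^{a-2})^4 \cdot (1 + 3y^2 - y^a + y^{a+2}) = \sum_k g_k y^k, then a^{n+1} \cdot M(n,q,a) = 4 \sum_k g_k (q-k)^n. If a is odd, let h(y) be the unique polynomial with (1+y) \cdot h(y) = 2 - y^{a-1} + y^a, and write g(y) := y^{2n-1} \cdot (1 + y^2 + ... + y^{2a-2})^{n-3} \cdot (1 + y + ... + y^{a-1})^4 \cdot h(y) = \sum_k g_k y^k; then a^{n+1} \cdot M(n,q,a) = \sum_k g_k (q-k)^n. -/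
open Polynomial

/-- `x` avoids the integer interval `[u, v]` in `ZMod q`. -/
def Avoids {q : ℕ} (x : ZMod q) (u v : ℤ) : Prop :=
  ∀ k : ℤ, u ≤ k → k ≤ v → x ≠ (k : ZMod q)

/-- Count for the type `B` deformation: `x_i`, `x_i - x_j` and `x_i + x_j`
all avoid `[u, v]`. -/
noncomputable def N_B (n q : ℕ) (u v : ℤ) : ℕ :=
  Set.ncard {x : Fin n → ZMod q |
    (∀ i, Avoids (x i) u v) ∧
    ∀ i j : Fin n, i < j → Avoids (x i - x j) u v ∧ Avoids (x i + x j) u v}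

/-- Count for the type `C` deformation: `2x_i`, `x_i - x_j` and `x_i + x_j`
all avoid `[u, v]`. -/
noncomputable def N_C (n q : ℕ) (u v : ℤ) : ℕ :=
  Set.ncard {x : Fin n → ZMod q |
    (∀ i, Avoids (2 * x i) u v) ∧
    ∀ i j : Fin n, i < j → Avoids (x i - x j) u v ∧ Avoids (x i + x j) u v}

/-- Count for the type `BC` deformation: `x_i`, `2x_i`, `x_i - x_j` and `x_i + x_j`
all avoid `[u, v]`. -/
noncomputable def N_BC (n q : ℕ) (u v : ℤ) : ℕ :=
  Set.ncard {x : Fin n → ZMod q |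
    (∀ i, Avoids (x i) u v ∧ Avoids (2 * x i) u v) ∧
    ∀ i j : Fin n, i < j → Avoids (x i - x j) u v ∧ Avoids (x i + x j) u v}

/-- Count for the type `D` deformation: `x_i - x_j` and `x_i + x_j`
avoid `[u, v]`. -/
noncomputable def N_D (n q : ℕ) (u v : ℤ) : ℕ :=
  Set.ncard {x : Fin n → ZMod q |
    ∀ i j : Fin n, i < j → Avoids (x i - x j) u v ∧ Avoids (x i + x j) u v}

/-- `1 + y + y^2 + ... + y^(m-1)`. -/
noncomputable def phi (m : ℕ) : ℚ[X] := ∑ i ∈ Finset.range m, X ^ i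

/-- `1 + y^2 + y^4 + ... + y^(2(m-1))`. -/
noncomputable def phi2 (m : ℕ) : ℚ[X] := ∑ i ∈ Finset.range m, X ^ (2 * i)

/-- For `g = ∑_k g_k y^k`, the sum `∑_k g_k (q - k)^n`. -/
noncomputable def polysum (g : ℚ[X]) (q n : ℕ) : ℚ :=
  ∑ k ∈ Finset.range (g.natDegree + 1), g.coeff k * ((q : ℚ) - (k : ℚ)) ^ n

/-- The number of `n`-tuples over `ZMod q` with all coordinates nonzero and
`x_i - x_j`, `x_i + x_j` avoiding `[0, a]` for `i < j`. -/
noncomputable def Mcount (n q a : ℕ) : ℕ :=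
  Set.ncard {x : Fin n → ZMod q |
    (∀ i, x i ≠ 0) ∧
    ∀ i j : Fin n, i < j →
      Avoids (x i - x j) 0 (a : ℤ) ∧ Avoids (x i + x j) 0 (a : ℤ)}

/-! ### Part A: shift operators -/

noncomputable def Sh : Module.End ℚ (ℤ → ℚ) := LinearMap.funLeft ℚ ℚ (fun N : ℤ => N - 1)

noncomputable def act (p : ℚ[X]) (f : ℤ → ℚ) : ℤ → ℚ := aeval Sh p f

theorem Sh_apply (f : ℤ → ℚ) (N : ℤ) : Sh f N = f (N - 1) := rfl

theorem Sh_pow_apply (k : ℕ) (f : ℤ → ℚ) (N : ℤ) : (Sh ^ k) f N = f (N - k) := by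
  induction k generalizing N with
  | zero => simp
  | succ k ih =>
    rw [pow_succ', Module.End.mul_apply, Sh_apply, ih]
    congr 1; push_cast; ring

theorem act_apply (p : ℚ[X]) (f : ℤ → ℚ) (N : ℤ) :
    act p f N = ∑ k ∈ Finset.range (p.natDegree + 1), p.coeff k * f (N - k) := by
  unfold act
  rw [aeval_eq_sum_range]
  simp [LinearMap.sum_apply, Finset.sum_apply, Sh_pow_apply]

theorem act_mul (p r : ℚ[X]) (f : ℤ → ℚ) : act (p * r) f = act p (act r f) := by
  unfold act; rw [map_mul]; rfl

theorem act_add (p r : ℚ[X]) (f : ℤ → ℚ) : act (p + r) f = act p f + act r f := by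
  unfold act; rw [map_add]; rfl

theorem act_sub (p r : ℚ[X]) (f : ℤ → ℚ) : act (p - r) f = act p f - act r f := by
  unfold act; rw [map_sub]; rfl

theorem act_add_right (p : ℚ[X]) (f g : ℤ → ℚ) : act p (f + g) = act p f + act p g := by
  unfold act; rw [map_add]

theorem act_sub_right (p : ℚ[X]) (f g : ℤ → ℚ) : act p (f - g) = act p f - act p g := by
  unfold act; rw [map_sub]

theorem act_smul_right (p : ℚ[X]) (c : ℚ) (f : ℤ → ℚ) : act p (c • f) = c • act p f := by
  unfold act; rw [map_smul]

theorem act_zero_right (p : ℚ[X]) : act p 0 = 0 := by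
  unfold act; rw [map_zero]

theorem act_C (c : ℚ) (f : ℤ → ℚ) : act (C c) f = c • f := by
  unfold act; rw [aeval_C]; rfl

theorem act_X_pow (k : ℕ) (f : ℤ → ℚ) (N : ℤ) : act (X ^ k) f N = f (N - k) := by
  unfold act; rw [map_pow, aeval_X, Sh_pow_apply]

theorem act_sum {ι : Type*} (s : Finset ι) (p : ι → ℚ[X]) (f : ℤ → ℚ) (N : ℤ) :
    act (∑ i ∈ s, p i) f N = ∑ i ∈ s, act (p i) f N := by
  unfold act; rw [map_sum]; simp [LinearMap.sum_apply, Finset.sum_apply]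

theorem polysum_eq_act (g : ℚ[X]) (q n : ℕ) :
    polysum g q n = act g (fun N : ℤ => (N : ℚ) ^ n) q := by
  rw [act_apply]; unfold polysum; simp

theorem act_id_mul (p : ℚ[X]) (f : ℤ → ℚ) :
    act p (fun N : ℤ => (N : ℚ) * f N) =
      (fun N : ℤ => (N : ℚ) * act p f N) - act (X * derivative p) f := by
  induction p using Polynomial.induction_on' with
  | add p r hp hr =>
    rw [act_add, hp, hr, derivative_add, mul_add, act_add, act_add]
    funext N; simp; ring
  | monomial k c =>
    funext N
    rw [← C_mul_X_pow_eq_monomial]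
    have h : X * derivative (C c * X ^ k : ℚ[X]) = C (c * k) * X ^ k := by
      rcases k with _ | k
      · simp
      · rw [derivative_C_mul_X_pow]; simp only [Nat.add_sub_cancel]; ring
    rw [h]
    simp only [act_mul, act_C, Pi.sub_apply, Pi.smul_apply, act_X_pow, smul_eq_mul]
    push_cast; ring

theorem act_kill (p : ℚ[X]) (D : ℤ → ℚ) (hD : act p D = 0) (j : ℕ) (r : ℚ[X]) :
    act (r * p ^ (j + 1)) (fun N => (N : ℚ) ^ j * D N) = 0 := by
  induction j generalizing r with
  | zero => simp [act_mul, hD, act_zero_right]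
  | succ j ih =>
    have h1 : (fun N : ℤ => (N : ℚ) ^ (j + 1) * D N) =
        fun N : ℤ => (N : ℚ) * ((N : ℚ) ^ j * D N) := by funext N; ring
    rw [h1, act_id_mul (r * p ^ (j + 1 + 1)) (fun N : ℤ => (N : ℚ) ^ j * D N)]
    have h2 : r * p ^ (j + 1 + 1) = (r * p) * p ^ (j + 1) := by ring
    have h3 : X * derivative (r * p ^ (j + 1 + 1)) =
        (X * (derivative r * p + r * (C ((j : ℚ) + 1 + 1) * derivative p))) * p ^ (j + 1) := by
      rw [derivative_mul, derivative_pow]; simp; ring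
    rw [h3, ih, h2, ih]; funext N; simp

theorem act_congr_even (p : ℚ[X]) (f g : ℤ → ℚ) (h : ∀ N, Even N → f N = g N) (N : ℤ)
    (hN : Even N) : act (expand ℚ 2 p) f N = act (expand ℚ 2 p) g N := by
  rw [act_apply, act_apply]
  refine Finset.sum_congr rfl fun k _ => ?_
  rw [coeff_expand (by norm_num)]
  split_ifs with hk
  · rw [h]
    obtain ⟨j, rfl⟩ := hk
    rw [Int.even_sub]; simp [hN]
  · simp

theorem act_expand (p : ℚ[X]) (f : ℤ → ℚ) (N : ℤ) :
    act (expand ℚ 2 p) f N = ∑ k ∈ Finset.range (p.natDegree + 1), p.coeff k * f (N - 2 * k) := by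
  have h : expand ℚ 2 p = ∑ k ∈ Finset.range (p.natDegree + 1), C (p.coeff k) * X ^ (2 * k) := by
    conv_lhs => rw [p.as_sum_range_C_mul_X_pow]
    simp [map_sum, ← pow_mul]
  rw [h, act_sum]
  refine Finset.sum_congr rfl fun k _ => ?_
  rw [act_mul, act_C, Pi.smul_apply, act_X_pow]; simp

/-! periodic functions -/

theorem phi2_eq (m : ℕ) : phi2 m = expand ℚ 2 (phi m) := by
  unfold phi phi2; simp [map_sum, ← pow_mul]

theorem phi_succ (m : ℕ) : phi (m + 1) = phi m + X ^ m := by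
  unfold phi; rw [Finset.sum_range_succ]

theorem phi_mul (m : ℕ) : (1 - X) * phi m = 1 - X ^ m := by
  unfold phi; exact mul_neg_geom_sum X m

theorem phi2_mul (m : ℕ) : (1 - X ^ 2) * phi2 m = 1 - X ^ (2 * m) := by
  unfold phi2; simp only [pow_mul]; exact mul_neg_geom_sum (X ^ 2) m

theorem phi2_succ (m : ℕ) : phi2 (m + 1) = phi2 m + X ^ (2 * m) := by
  unfold phi2; rw [Finset.sum_range_succ]

/-- number of multiples of `a` in a window of length `a` -/
theorem window (a : ℕ) (ha : 1 ≤ a) (N : ℤ) :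
    (∑ k ∈ Finset.range a, (if (a : ℤ) ∣ N - k then (1 : ℚ) else 0)) = 1 := by
  have ha' : (0 : ℤ) < a := by exact_mod_cast ha
  have h0 := Int.emod_nonneg N ha'.ne'
  have h1 := Int.emod_lt_of_pos N ha'
  rw [Finset.sum_eq_single (N % a).toNat]
  · rw [if_pos]
    rw [Int.toNat_of_nonneg h0]; exact Int.dvd_self_sub_emod
  · intro k hk hne
    rw [if_neg]
    intro hd
    apply hne
    have hk' := Finset.mem_range.1 hk
    have : N % a = (k : ℤ) % a := by
      apply Int.emod_emod_of_dvd .. |>.symm.trans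
      · exact Int.emod_emod_of_dvd N dvd_rfl ▸ (Int.emod_eq_emod_iff_emod_sub_eq_zero.2
          (Int.emod_eq_zero_of_dvd hd))
      · exact dvd_rfl
    rw [Int.emod_eq_of_lt (a := (k : ℤ)) (by omega) (by omega)] at this
    omega
  · intro h; exfalso; apply h; rw [Finset.mem_range]; omega

noncomputable def ef0 (n a : ℕ) : ℤ → ℚ :=
  fun N => (N : ℚ) ^ n * (if (2 * a : ℤ) ∣ N then 1 else 0)

noncomputable def ef1 (n a : ℕ) : ℤ → ℚ :=
  fun N => (N : ℚ) ^ n * (if (2 * a : ℤ) ∣ N - a then 1 else 0)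

noncomputable def alph (a : ℕ) (P : ℚ[X]) : ℚ[X] := phi a ^ 2 - P * (1 + X ^ a)

theorem dvd_split (a : ℕ) (ha : 1 ≤ a) (N : ℤ) :
    ((if (2 * a : ℤ) ∣ N then (1 : ℚ) else 0) + (if (2 * a : ℤ) ∣ N - a then 1 else 0))
      = if (a : ℤ) ∣ N then 1 else 0 := by
  have ha' : (0 : ℤ) < a := by exact_mod_cast ha
  by_cases h : (a : ℤ) ∣ N
  · obtain ⟨k, rfl⟩ := h
    have e1 : (2 * a : ℤ) ∣ a * k ↔ 2 ∣ k := by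
      rw [mul_comm 2 (a : ℤ)]; exact Int.mul_dvd_mul_iff_left ha'.ne'
    have e2 : (2 * a : ℤ) ∣ a * k - a ↔ 2 ∣ k - 1 := by
      rw [mul_comm 2 (a : ℤ), show (a * k - a : ℤ) = a * (k - 1) by ring]
      exact Int.mul_dvd_mul_iff_left ha'.ne'
    simp only [e1, e2, dvd_mul_right, if_true]
    rcases Int.emod_two_eq_zero_or_one k with hk | hk
    · rw [if_pos (by omega), if_neg (by omega)]; simp
    · rw [if_neg (by omega), if_pos (by omega)]; simp
  · rw [if_neg h, if_neg, if_neg]; · simp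
    · intro h2; apply h
      have := (Dvd.intro_left (2 : ℤ) rfl : (a : ℤ) ∣ 2 * a).trans h2
      simpa using dvd_add this (dvd_refl (a : ℤ))
    · intro h2; exact h ((Dvd.intro_left (2 : ℤ) rfl : (a : ℤ) ∣ 2 * a).trans h2)

theorem ef_add (n a : ℕ) (ha : 1 ≤ a) :
    ef0 n a + ef1 n a = fun N : ℤ => (N : ℚ) ^ n * (if (a : ℤ) ∣ N then 1 else 0) := by
  funext N; simp only [ef0, ef1, Pi.add_apply, ← mul_add, dvd_split a ha]

theorem chi_kill (a : ℕ) :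
    act (1 + X ^ a) (fun N : ℤ => (if (2 * a : ℤ) ∣ N then (1 : ℚ) else 0) -
      (if (2 * a : ℤ) ∣ N - a then 1 else 0)) = 0 := by
  funext N
  rw [act_add, Pi.add_apply, act_X_pow, ← pow_zero X, act_X_pow]
  have : (2 * a : ℤ) ∣ N - a - a ↔ (2 * a : ℤ) ∣ N := by
    rw [show N - a - a = N - 2 * a by ring]; exact dvd_sub_self_right
  simp only [this]; simp

theorem even_D_kill (b : ℕ) (hb : 1 ≤ b) :
    act (phi2 b) (fun N : ℤ => (b : ℚ) * (if ((2 * b : ℕ) : ℤ) ∣ N then (1 : ℚ) else 0) -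
      (if (2 : ℤ) ∣ N then 1 else 0)) = 0 := by
  funext N
  unfold phi2
  rw [act_sum]
  simp only [act_X_pow, Finset.sum_sub_distrib, ← Finset.mul_sum]
  by_cases h : (2 : ℤ) ∣ N
  · obtain ⟨M, rfl⟩ := h
    have e1 : ∀ k : ℕ, (((2 * b : ℕ) : ℤ) ∣ 2 * M - ((2 * k : ℕ) : ℤ)) ↔ (b : ℤ) ∣ M - k := by
      intro k; push_cast; rw [← mul_sub]; exact Int.mul_dvd_mul_iff_left (by norm_num)
    have e2 : ∀ k : ℕ, ((2 : ℤ) ∣ 2 * M - ((2 * k : ℕ) : ℤ)) ↔ True := by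
      intro k; push_cast; rw [← mul_sub]; simp
    simp only [e1, e2, window b hb]; simp
  · have e1 : ∀ k : ℕ, (((2 * b : ℕ) : ℤ) ∣ N - ((2 * k : ℕ) : ℤ)) ↔ False := by
      intro k; simp only [iff_false]; intro hd
      have : (2 : ℤ) ∣ N - ((2 * k : ℕ) : ℤ) := dvd_trans ⟨b, by push_cast; ring⟩ hd
      push_cast at this; omega
    have e2 : ∀ k : ℕ, ((2 : ℤ) ∣ N - ((2 * k : ℕ) : ℤ)) ↔ False := by
      intro k; push_cast; simp only [iff_false]; omega
    simp only [e1, e2]; simp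

theorem odd_D_kill (a : ℕ) (ha : 1 ≤ a) :
    act (phi a) (fun N : ℤ => (a : ℚ) * (if (a : ℤ) ∣ N then (1 : ℚ) else 0) - 1) = 0 := by
  funext N
  unfold phi
  rw [act_sum]
  simp only [act_X_pow, Finset.sum_sub_distrib, ← Finset.mul_sum, window a ha]
  simp

theorem even_final (t b' N' : ℕ) (b a n : ℕ) (hb : b = b' + 1) (hab : a = 2 * b) (hn : n = t + 3)
    (PL PR aL aR : ℚ[X]) (hPL : PL = phi b' * phi b) (hPR : PR = phi b ^ 2)
    (haL : aL = alph a PL) (haR : aR = alph a PR) :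
    (a : ℚ) * (act (expand ℚ 2 (X ^ n * phi a ^ t * (aL * aR))) (ef0 n a) (2 * N') +
       act (X ^ (2 * a) * expand ℚ 2 (X ^ n * phi a ^ t * ((2 * PL) * (2 * PR)))) (ef0 n a) (2 * N') +
       act (X ^ a * expand ℚ 2 (X ^ n * phi a ^ t * (aL * (2 * PR) + (2 * PL) * aR)))
         (ef1 n a) (2 * N')) =
    4 * act (X ^ (2 * n + 2 * a - 2) * (phi2 a ^ t * phi2 b ^ 4 *
      (1 + 3 * X ^ 2 - X ^ a + X ^ (a + 2)))) (fun N : ℤ => (N : ℚ) ^ n) (2 * N') := by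
  have ha : 1 ≤ a := by omega
  set AA := expand ℚ 2 (X ^ n * phi a ^ t * (aL * aR)) with hAA
  set BB := X ^ (2 * a) * expand ℚ 2 (X ^ n * phi a ^ t * ((2 * PL) * (2 * PR))) with hBB
  set CC := X ^ a * expand ℚ 2 (X ^ n * phi a ^ t * (aL * (2 * PR) + (2 * PL) * aR)) with hCC
  -- basic polynomial facts
  set p := phi2 b' with hp
  set Y : ℚ[X] := X ^ (2 * b') with hY
  have hXa : (X : ℚ[X]) ^ a = Y * X ^ 2 := by rw [hY, ← pow_add]; congr 1; omega
  have hpb : phi2 b = p + Y := by rw [hb, phi2_succ]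
  have hpm : (1 - X ^ 2) * p = 1 - Y := phi2_mul b'
  have hne : (1 - X ^ 2 : ℚ[X]) ≠ 0 := by
    intro h; have := congrArg (fun r => r.coeff 2) h
    simp [coeff_one] at this
  have hpa : phi2 a = (p + Y) * (1 + Y * X ^ 2) := by
    apply mul_left_cancel₀ hne
    rw [phi2_mul, show 2 * a = a * 2 by ring, pow_mul, hXa]
    linear_combination (-(1 + Y * X ^ 2)) * hpm
  have hpc : (1 - X ^ 2) * (p + Y) = 1 - Y * X ^ 2 := by linear_combination hpm
  have eaL : expand ℚ 2 aL = phi2 a ^ 2 - p * (p + Y) * (1 + (Y * X ^ 2) ^ 2) := by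
    rw [haL, alph, hPL]
    simp only [map_sub, map_mul, map_pow, map_add, map_one, ← phi2_eq, expand_X, hpb]
    rw [← hXa]; ring
  have eaR : expand ℚ 2 aR = phi2 a ^ 2 - (p + Y) ^ 2 * (1 + (Y * X ^ 2) ^ 2) := by
    rw [haR, alph, hPR]
    simp only [map_sub, map_mul, map_pow, map_add, map_one, ← phi2_eq, expand_X, hpb]
    rw [← hXa]; ring
  have ePL : expand ℚ 2 (2 * PL) = 2 * (p * (p + Y)) := by
    rw [hPL]; simp only [map_mul, ← phi2_eq, hpb, map_ofNat]; rfl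
  have ePR : expand ℚ 2 (2 * PR) = 2 * (p + Y) ^ 2 := by
    rw [hPR]; simp only [map_mul, map_pow, ← phi2_eq, hpb, map_ofNat]
  have hAA' : AA = X ^ (2 * n) * phi2 a ^ t * (expand ℚ 2 aL * expand ℚ 2 aR) := by
    rw [hAA]; simp only [map_mul, map_pow, ← phi2_eq, expand_X]; ring
  have hBB' : BB = X ^ (2 * n) * phi2 a ^ t *
      ((Y * X ^ 2) ^ 2 * (expand ℚ 2 (2 * PL) * expand ℚ 2 (2 * PR))) := by
    rw [hBB, map_mul, map_mul _ (2 * PL)]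
    simp only [map_mul _ (X ^ n), map_pow, ← phi2_eq, expand_X]; rw [← hXa]; ring
  have hCC' : CC = X ^ (2 * n) * phi2 a ^ t *
      ((Y * X ^ 2) * (expand ℚ 2 aL * expand ℚ 2 (2 * PR) + expand ℚ 2 (2 * PL) * expand ℚ 2 aR)) := by
    rw [hCC, map_mul, map_add, map_mul _ aL, map_mul _ (2 * PL)]
    simp only [map_mul _ (X ^ n), map_pow, ← phi2_eq, expand_X]; rw [← hXa]; ring
  have hU : AA + BB + CC = 4 * (X ^ (2 * n + 2 * a - 2) * (phi2 a ^ t * phi2 b ^ 4 *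
      (1 + 3 * X ^ 2 - X ^ a + X ^ (a + 2)))) := by
    have hx : (X : ℚ[X]) ^ (2 * n + 2 * a - 2) = X ^ (2 * n) * (Y ^ 2 * X ^ 2) := by
      rw [hY, ← pow_mul, ← pow_add, ← pow_add]; congr 1; omega
    have hL : expand ℚ 2 aL + (Y * X ^ 2) * expand ℚ 2 (2 * PL) =
        (p + Y) ^ 2 * Y * (1 + 3 * X ^ 2 - X ^ a + X ^ (a + 2)) := by
      rw [eaL, ePL, hpa, pow_add, hXa]
      linear_combination (- p * (p + Y) * (1 - Y * X ^ 2)) * (-hpc)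
        + (- (p + Y) ^ 2 * (1 - Y * X ^ 2)) * hpm
    have hR : expand ℚ 2 aR + (Y * X ^ 2) * expand ℚ 2 (2 * PR) =
        4 * (p + Y) ^ 2 * (Y * X ^ 2) := by
      rw [eaR, ePR, hpa]; ring
    have : AA + BB + CC = X ^ (2 * n) * phi2 a ^ t *
      ((expand ℚ 2 aL + (Y * X ^ 2) * expand ℚ 2 (2 * PL)) *
       (expand ℚ 2 aR + (Y * X ^ 2) * expand ℚ 2 (2 * PR))) := by
      rw [hAA', hBB', hCC']; ring
    rw [this, hL, hR, hx, hpb]; ring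
  have hV : ∃ r : ℚ[X], AA + BB - CC = r * (1 + X ^ a) ^ (n + 1) := by
    refine ⟨X ^ (2 * n) * (p + Y) ^ t * (((p + Y) ^ 2 - p * (p + Y)) * 
      ((p + Y) ^ 2 - (p + Y) ^ 2)), ?_⟩
    have : AA + BB - CC = X ^ (2 * n) * phi2 a ^ t *
      ((expand ℚ 2 aL - (Y * X ^ 2) * expand ℚ 2 (2 * PL)) *
       (expand ℚ 2 aR - (Y * X ^ 2) * expand ℚ 2 (2 * PR))) := by
      rw [hAA', hBB', hCC']; ring
    rw [this, eaL, ePL, eaR, ePR, hpa, hXa, hn]; ring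
  have h1 : act (AA + BB - CC) (ef0 n a - ef1 n a) = 0 := by
    obtain ⟨r, hr⟩ := hV
    rw [hr]
    have := act_kill _ _ (chi_kill a) n r
    rw [← this]; congr 1; funext N
    simp only [ef0, ef1, Pi.sub_apply]; ring
  have h2 : (b : ℚ) • act (AA + BB + CC) (ef0 n a + ef1 n a) =
      act (AA + BB + CC) (fun N : ℤ => (N : ℚ) ^ n * (if (2 : ℤ) ∣ N then 1 else 0)) := by
    have : AA + BB + CC = (4 * X ^ (2 * n + 2 * a - 2) * (1 + Y * X ^ 2) ^ t *
      (1 + 3 * X ^ 2 - X ^ a + X ^ (a + 2))) * phi2 b ^ (n + 1) := by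
      rw [hU, hpa, hpb, hn, mul_pow]; ring
    have h3 := act_kill _ _ (even_D_kill b (by omega)) n (4 * X ^ (2 * n + 2 * a - 2) *
      (1 + Y * X ^ 2) ^ t * (1 + 3 * X ^ 2 - X ^ a + X ^ (a + 2)))
    rw [← this] at h3
    rw [← act_smul_right, ← sub_eq_zero, ← act_sub_right, ← h3, ef_add n a ha]
    congr 1; funext N
    simp only [Pi.sub_apply, Pi.smul_apply, smul_eq_mul, ← hab]; ring
  have h4 : act (AA + BB + CC) (fun N : ℤ => (N : ℚ) ^ n * (if (2 : ℤ) ∣ N then 1 else 0)) (2 * N')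
      = act (AA + BB + CC) (fun N : ℤ => (N : ℚ) ^ n) (2 * N') := by
    have : ∃ r, AA + BB + CC = expand ℚ 2 r := by
      refine ⟨X ^ n * phi a ^ t * (aL * aR) + X ^ a * (X ^ n * phi a ^ t * ((2 * PL) * (2 * PR))) +
        X ^ b * (X ^ n * phi a ^ t * (aL * (2 * PR) + (2 * PL) * aR)), ?_⟩
      rw [map_add, map_add, ← hAA, map_mul _ (X ^ a), map_mul _ (X ^ b), hBB, hCC, map_pow, map_pow,
        expand_X, ← pow_mul, ← pow_mul, ← hab]
    obtain ⟨r, hr⟩ := this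
    rw [hr]
    apply act_congr_even
    · intro N hN; rw [if_pos hN.two_dvd]; ring
    · exact even_two_mul _
  have h5 : act (4 * (X ^ (2 * n + 2 * a - 2) * (phi2 a ^ t * phi2 b ^ 4 *
      (1 + 3 * X ^ 2 - X ^ a + X ^ (a + 2))))) (fun N : ℤ => (N : ℚ) ^ n) (2 * N') =
      4 * act (X ^ (2 * n + 2 * a - 2) * (phi2 a ^ t * phi2 b ^ 4 *
      (1 + 3 * X ^ 2 - X ^ a + X ^ (a + 2)))) (fun N : ℤ => (N : ℚ) ^ n) (2 * N') := by
    rw [act_mul, show (4 : ℚ[X]) = C 4 from rfl, act_C]; simp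
  rw [← h5, ← hU, ← h4, ← h2]
  have h6 := congrFun h1 (2 * N')
  simp only [act_add, act_sub, act_add_right, act_sub_right, Pi.add_apply, Pi.sub_apply,
    Pi.smul_apply, smul_eq_mul, Pi.zero_apply] at h6 ⊢
  have hab' : (a : ℚ) = 2 * b := by rw [hab]; push_cast; ring
  rw [hab']
  linear_combination (b : ℚ) * h6

theorem odd_final (t N' : ℕ) (b a n : ℕ) (hab : a = 2 * b + 1) (hn : n = t + 3)
    (PL PR aL aR : ℚ[X]) (hPL : PL = phi b ^ 2) (hPR : PR = phi b * phi (b + 1))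
    (haL : aL = alph a PL) (haR : aR = alph a PR) (h : ℚ[X])
    (hh : (1 + X) * h = 2 - X ^ (a - 1) + X ^ a) :
    (a : ℚ) * (act (expand ℚ 2 (X ^ n * phi a ^ t * (aL * aR))) (ef0 n a) (2 * N') +
       act (X ^ (2 * a) * expand ℚ 2 (X ^ n * phi a ^ t * ((2 * PL) * (2 * PR)))) (ef0 n a) (2 * N') +
       act (X ^ a * expand ℚ 2 (X ^ n * phi a ^ t * (aL * (2 * PR) + (2 * PL) * aR)))
         (ef1 n a) (2 * N')) =
    act (X ^ (2 * n + 2 * a - 2) * (phi2 a ^ t * phi a ^ 4 * h))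
      (fun N : ℤ => (N : ℚ) ^ n) (2 * N') := by
  have ha : 1 ≤ a := by omega
  set AA := expand ℚ 2 (X ^ n * phi a ^ t * (aL * aR)) with hAA
  set BB := X ^ (2 * a) * expand ℚ 2 (X ^ n * phi a ^ t * ((2 * PL) * (2 * PR))) with hBB
  set C0 := X ^ n * phi a ^ t * (aL * (2 * PR) + (2 * PL) * aR) with hC0
  set CC := X ^ a * expand ℚ 2 C0 with hCC
  set p := phi2 b with hp
  set Y : ℚ[X] := X ^ (2 * b) with hY
  set Z := phi a with hZ
  have hXa : (X : ℚ[X]) ^ a = Y * X := by rw [hY, hab, pow_succ]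
  have hpb : phi2 (b + 1) = p + Y := by rw [phi2_succ]
  have hpm : (1 - X ^ 2) * p = 1 - Y := phi2_mul b
  have hZm : (1 - X) * Z = 1 - Y * X := by rw [hZ, phi_mul, hXa]
  have hne : (1 - X ^ 2 : ℚ[X]) ≠ 0 := by
    intro h; have := congrArg (fun r => r.coeff 2) h
    simp [coeff_one] at this
  have hne1 : (1 + X : ℚ[X]) ≠ 0 := by
    intro h; have := congrArg (fun r => r.coeff 0) h
    simp at this
  have hpa : phi2 a = Z * ((1 - X) * p + Y) := by
    apply mul_left_cancel₀ hne
    rw [phi2_mul, show 2 * a = a * 2 by ring, pow_mul, hXa]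
    linear_combination (-(1 + X) * ((1 - X) * p + Y)) * hZm - (1 - Y * X) * hpm
  have hhp : h = 2 * ((1 - X) * p) + Y := by
    apply mul_left_cancel₀ hne1
    rw [hh, hXa, show a - 1 = 2 * b by omega, ← hY]
    linear_combination (-2) * hpm
  have eaL : expand ℚ 2 aL = phi2 a ^ 2 - p ^ 2 * (1 + (Y * X) ^ 2) := by
    rw [haL, alph, hPL]
    simp only [map_sub, map_mul, map_pow, map_add, map_one, ← phi2_eq, expand_X, ← hp]
    rw [← hXa]; ring
  have eaR : expand ℚ 2 aR = phi2 a ^ 2 - p * (p + Y) * (1 + (Y * X) ^ 2) := by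
    rw [haR, alph, hPR]
    simp only [map_sub, map_mul, map_pow, map_add, map_one, ← phi2_eq, expand_X, ← hp, hpb]
    rw [← hXa]; ring
  have ePL : expand ℚ 2 (2 * PL) = 2 * p ^ 2 := by
    rw [hPL]; simp only [map_mul, map_pow, ← phi2_eq, map_ofNat, ← hp]
  have ePR : expand ℚ 2 (2 * PR) = 2 * (p * (p + Y)) := by
    rw [hPR]; simp only [map_mul, ← phi2_eq, hpb, map_ofNat, ← hp]
  have hAA' : AA = X ^ (2 * n) * phi2 a ^ t * (expand ℚ 2 aL * expand ℚ 2 aR) := by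
    rw [hAA]; simp only [map_mul, map_pow, hZ, ← phi2_eq, expand_X]; ring
  have hBB' : BB = X ^ (2 * n) * phi2 a ^ t *
      ((Y * X) ^ 2 * (expand ℚ 2 (2 * PL) * expand ℚ 2 (2 * PR))) := by
    rw [hBB, map_mul, map_mul _ (2 * PL)]
    simp only [map_mul _ (X ^ n), map_pow, hZ, ← phi2_eq, expand_X]; rw [← hXa]; ring
  have hCC' : CC = X ^ (2 * n) * phi2 a ^ t *
      ((Y * X) * (expand ℚ 2 aL * expand ℚ 2 (2 * PR) + expand ℚ 2 (2 * PL) * expand ℚ 2 aR)) := by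
    rw [hCC, hC0, map_mul, map_add, map_mul _ aL, map_mul _ (2 * PL)]
    simp only [map_mul _ (X ^ n), map_pow, hZ, ← phi2_eq, expand_X]; rw [← hXa]; ring
  have hU : AA + BB + CC = X ^ (2 * n + 2 * a - 2) * (phi2 a ^ t * Z ^ 4 * h) := by
    have hx : (X : ℚ[X]) ^ (2 * n + 2 * a - 2) = X ^ (2 * n) * Y ^ 2 := by
      rw [hY, ← pow_mul, ← pow_add]; congr 1; omega
    have hL : expand ℚ 2 aL + (Y * X) * expand ℚ 2 (2 * PL) = Z ^ 2 * Y * h := by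
      rw [eaL, ePL, hpa, hhp]
      linear_combination (p ^ 2 * ((1 - X) * Z + (1 - Y * X))) * hZm
    have hR : expand ℚ 2 aR + (Y * X) * expand ℚ 2 (2 * PR) = Z ^ 2 * Y := by
      rw [eaR, ePR, hpa]
      linear_combination (p * (p + Y) * ((1 - X) * Z + (1 - Y * X))) * hZm + Z ^ 2 * Y * hpm
    have : AA + BB + CC = X ^ (2 * n) * phi2 a ^ t *
      ((expand ℚ 2 aL + (Y * X) * expand ℚ 2 (2 * PL)) *
       (expand ℚ 2 aR + (Y * X) * expand ℚ 2 (2 * PR))) := by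
      rw [hAA', hBB', hCC']; ring
    rw [this, hL, hR, hx]; ring
  have h2 : (a : ℚ) • act (AA + BB + CC) (ef0 n a + ef1 n a) =
      act (AA + BB + CC) (fun N : ℤ => (N : ℚ) ^ n) := by
    have : AA + BB + CC = (X ^ (2 * n + 2 * a - 2) * ((1 - X) * p + Y) ^ t * h) * Z ^ (n + 1) := by
      rw [hU, hpa, hn, mul_pow]; ring
    have h3 := act_kill _ _ (odd_D_kill a ha) n
      (X ^ (2 * n + 2 * a - 2) * ((1 - X) * p + Y) ^ t * h)
    rw [← this] at h3
    rw [← act_smul_right, ← sub_eq_zero, ← act_sub_right, ← h3, ef_add n a ha]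
    congr 1; funext N
    simp only [Pi.sub_apply, Pi.smul_apply, smul_eq_mul]; ring
  have z1 : act (AA + BB) (ef1 n a) (2 * N') = 0 := by
    have : ∃ r, AA + BB = expand ℚ 2 r := by
      refine ⟨X ^ n * Z ^ t * (aL * aR) + X ^ a * (X ^ n * Z ^ t * ((2 * PL) * (2 * PR))), ?_⟩
      rw [map_add, ← hAA, map_mul _ (X ^ a), hBB, map_pow, expand_X, ← pow_mul]
    obtain ⟨r, hr⟩ := this
    rw [hr, act_congr_even r _ 0, act_zero_right]; · rfl
    · intro N hN
      simp only [ef1, Pi.zero_apply]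
      rw [if_neg]; · simp
      rintro ⟨k, hk⟩
      obtain ⟨j, rfl⟩ := hN
      rw [hab] at hk; push_cast at hk
      have : (2 * (2 * (b : ℤ) + 1) * k) = 2 * ((2 * b + 1) * k) := by ring
      omega
    · exact even_two_mul _
  have z2 : act CC (ef0 n a) (2 * N') = 0 := by
    rw [hCC, mul_comm, act_mul, act_congr_even C0 _ 0, act_zero_right]; · rfl
    · intro N hN
      rw [act_X_pow]
      simp only [ef0, Pi.zero_apply]
      rw [if_neg]; · simp
      rintro ⟨k, hk⟩
      obtain ⟨j, rfl⟩ := hN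
      rw [hab] at hk; push_cast at hk
      have : (2 * (2 * (b : ℤ) + 1) * k) = 2 * ((2 * b + 1) * k) := by ring
      omega
    · exact even_two_mul _
  rw [← hU, ← h2]
  simp only [act_add, act_add_right, Pi.add_apply, Pi.smul_apply, smul_eq_mul] at z1 ⊢
  linear_combination (-(a : ℚ)) * z1 - (a : ℚ) * z2

open Finset in
theorem sort_count {n : ℕ} {D : Type} [Fintype D] (K : Fin n → D → ℤ) (V : (Fin n → D) → Prop)
    (hV : ∀ g, V g → Function.Injective (fun i => K i (g i))) :
    Nat.card {g // V g} = ∑ σ : Equiv.Perm (Fin n),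
      Nat.card {h : Fin n → D // V (h ∘ σ.symm) ∧ StrictMono (fun k => K (σ k) (h k))} := by
  classical
  simp only [Nat.card_eq_fintype_card, Fintype.card_subtype]
  rw [Finset.card_eq_sum_card_fiberwise (f := fun g => Tuple.sort (fun i => K i (g i)))
    (t := Finset.univ) (fun _ _ => Finset.mem_coe.2 (Finset.mem_univ _))]
  refine Finset.sum_congr rfl fun σ _ => ?_
  refine Finset.card_nbij' (fun g => g ∘ σ) (fun h => h ∘ σ.symm) ?_ ?_ ?_ ?_
  · intro g hg
    simp only [coe_filter, mem_univ, true_and, Set.mem_ofPred_eq, mem_filter] at hg ⊢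
    obtain ⟨h1, h2⟩ := hg
    have h3 := (Tuple.eq_sort_iff.1 h2.symm).1
    refine ⟨by simpa [Function.comp_assoc] using h1, ?_⟩
    exact h3.strictMono_of_injective ((hV g h1).comp σ.injective)
  · intro h hh
    simp only [coe_filter, mem_univ, true_and, Set.mem_ofPred_eq, mem_filter] at hh ⊢
    refine ⟨hh.1, (Tuple.eq_sort_iff.2 ⟨?_, ?_⟩).symm⟩
    · have := hh.2.monotone
      convert this using 2 with k
      simp
    · intro i j hij he
      have := hh.2 hij
      simp only [Function.comp_apply, Equiv.symm_apply_apply] at he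
      exact absurd he this.ne
  · intro g _; funext k; simp
  · intro g _; funext k; simp

noncomputable def GF (N : ℕ) (f : (Fin N → ℕ) → ℚ) : PowerSeries ℚ :=
  PowerSeries.mk fun b => ∑ e ∈ Finset.Nat.antidiagonalTuple N b, f e

theorem sum_cons (N b : ℕ) (f : (Fin (N + 1) → ℕ) → ℚ) :
    ∑ e ∈ Finset.Nat.antidiagonalTuple (N + 1) b, f e =
    ∑ p ∈ Finset.HasAntidiagonal.antidiagonal b, ∑ e ∈ Finset.Nat.antidiagonalTuple N p.2, f (Fin.cons p.1 e) := by
  rw [Finset.sum_sigma']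
  refine Finset.sum_nbij' (fun e => ⟨(e 0, ∑ i, Fin.tail e i), Fin.tail e⟩)
    (fun p => Fin.cons p.1.1 p.2) ?_ ?_ ?_ ?_ ?_
  · intro e he
    simp only [Finset.mem_sigma, Finset.HasAntidiagonal.mem_antidiagonal, Finset.Nat.mem_antidiagonalTuple] at he ⊢
    rw [Fin.sum_univ_succ] at he
    exact ⟨he, trivial⟩
  · rintro ⟨⟨i, j⟩, e⟩ he
    simp only [Finset.mem_sigma, Finset.HasAntidiagonal.mem_antidiagonal, Finset.Nat.mem_antidiagonalTuple] at he ⊢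
    rw [Fin.sum_univ_succ]
    simp only [Fin.cons_zero, Fin.cons_succ]; omega
  · intro e he; simp
  · rintro ⟨⟨i, j⟩, e⟩ he
    simp only [Finset.mem_sigma, Finset.HasAntidiagonal.mem_antidiagonal, Finset.Nat.mem_antidiagonalTuple] at he
    simp [he.2]
  · intro e he; simp

theorem GF_zero (c : ℚ) : GF 0 (fun _ => c) = PowerSeries.C c := by
  ext b
  rw [GF, PowerSeries.coeff_mk, PowerSeries.coeff_C]
  cases b <;> simp

theorem GF_cons (N : ℕ) (g : ℕ → ℚ) (f : (Fin N → ℕ) → ℚ) :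
    GF (N + 1) (fun e => g (e 0) * f (Fin.tail e)) = PowerSeries.mk g * GF N f := by
  ext b
  rw [PowerSeries.coeff_mul, GF, PowerSeries.coeff_mk, sum_cons]
  refine Finset.sum_congr rfl fun p _ => ?_
  simp only [Fin.cons_zero, Fin.tail_cons, GF, PowerSeries.coeff_mk, Finset.mul_sum]

noncomputable def pairS (L : ℕ → ℕ → ℚ) : PowerSeries ℚ :=
  PowerSeries.mk fun b => ∑ p ∈ Finset.HasAntidiagonal.antidiagonal b, L p.1 p.2

theorem GF_pair (N : ℕ) (L : ℕ → ℕ → ℚ) (f : (Fin N → ℕ) → ℚ) :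
    GF (N + 2) (fun e => L (e 0) (e 1) * f (Fin.tail (Fin.tail e))) = pairS L * GF N f := by
  ext b
  have h0 : PowerSeries.coeff b (GF (N + 2) (fun e => L (e 0) (e 1) * f (Fin.tail (Fin.tail e)))) =
      ∑ p ∈ Finset.HasAntidiagonal.antidiagonal b, ∑ r ∈ Finset.HasAntidiagonal.antidiagonal p.2,
        L p.1 r.1 * PowerSeries.coeff r.2 (GF N f) := by
    rw [GF, PowerSeries.coeff_mk, sum_cons]
    refine Finset.sum_congr rfl fun p _ => ?_
    rw [sum_cons]
    refine Finset.sum_congr rfl fun r _ => ?_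
    rw [GF, PowerSeries.coeff_mk, Finset.mul_sum]
    rfl
  rw [h0, PowerSeries.coeff_mul]
  simp only [pairS, PowerSeries.coeff_mk, Finset.sum_mul]
  rw [Finset.sum_sigma', Finset.sum_sigma']
  refine Finset.sum_nbij' (fun p => ⟨(p.1.1 + p.2.1, p.2.2), (p.1.1, p.2.1)⟩)
    (fun p => ⟨(p.2.1, p.2.2 + p.1.2), (p.2.2, p.1.2)⟩) ?_ ?_ ?_ ?_ ?_
  · rintro ⟨⟨i, j⟩, ⟨k, l⟩⟩ h; simp at h ⊢; omega
  · rintro ⟨⟨i, j⟩, ⟨k, l⟩⟩ h; simp at h ⊢; omega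
  · rintro ⟨⟨i, j⟩, ⟨k, l⟩⟩ h; simp at h ⊢; omega
  · rintro ⟨⟨i, j⟩, ⟨k, l⟩⟩ h; simp at h ⊢; omega
  · rintro ⟨⟨i, j⟩, ⟨k, l⟩⟩ h
    rfl

theorem GF_two (R : ℕ → ℕ → ℚ) : GF 2 (fun e => R (e 0) (e 1)) = pairS R := by
  have := GF_pair 0 R (fun _ => 1)
  rw [GF_zero] at this
  simpa using this

/-- middle product and right pair. -/
theorem GF_midR (t : ℕ) (F : Fin t → ℕ → ℚ) (R : ℕ → ℕ → ℚ) :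
    GF (t + 2) (fun e => (∏ k : Fin t, F k (e (k.castAdd 2))) *
      R (e (Fin.last t).castSucc) (e (Fin.last (t + 1)))) =
      (∏ k, PowerSeries.mk (F k)) * pairS R := by
  induction t with
  | zero => simpa using GF_two R
  | succ t ih =>
    rw [Fin.prod_univ_succ, mul_assoc, ← ih (fun k => F k.succ), ← GF_cons]
    congr 1; funext e
    rw [Fin.prod_univ_succ, mul_assoc]
    rfl

theorem GF_all (t : ℕ) (L R : ℕ → ℕ → ℚ) (F : Fin t → ℕ → ℚ) :
    GF (t + 4) (fun e => L (e 0) (e 1) * ((∏ k : Fin t, F k (e (k.castAdd 2).succ.succ)) *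
      R (e (Fin.last t).castSucc.succ.succ) (e (Fin.last (t + 3))))) =
      pairS L * ((∏ k, PowerSeries.mk (F k)) * pairS R) := by
  rw [← GF_midR, ← GF_pair]
  rfl

/-- gaps of a chain -/
def gap {N : ℕ} (b : ℕ) (β : Fin (N + 1) → ℕ) : Fin (N + 2) → ℕ :=
  Fin.cons (β 0) (Fin.snoc (α := fun _ => ℕ) (fun k : Fin N => β k.succ - β k.castSucc) (b - β (Fin.last N)))

@[simp] theorem gap_zero {N : ℕ} (b : ℕ) (β : Fin (N + 1) → ℕ) : gap b β 0 = β 0 := rfl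

@[simp] theorem gap_mid {N : ℕ} (b : ℕ) (β : Fin (N + 1) → ℕ) (k : Fin N) :
    gap b β k.castSucc.succ = β k.succ - β k.castSucc := by
  rw [gap, Fin.cons_succ, Fin.snoc_castSucc]

@[simp] theorem gap_last {N : ℕ} (b : ℕ) (β : Fin (N + 1) → ℕ) :
    gap b β (Fin.last (N + 1)) = b - β (Fin.last N) := by
  rw [← Fin.succ_last, gap, Fin.cons_succ, Fin.snoc_last]

theorem telescope (N : ℕ) (β : Fin (N + 1) → ℕ) (hβ : Monotone β) :
    β 0 + ∑ k : Fin N, (β k.succ - β k.castSucc) = β (Fin.last N) := by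
  induction N with
  | zero => simp
  | succ N ih =>
    rw [Fin.sum_univ_castSucc]
    have := ih (fun k => β k.castSucc) (fun i j h => hβ (by simpa using h))
    simp only [Fin.castSucc_zero] at this
    have h2 : β (Fin.last N).castSucc ≤ β (Fin.last N).succ := hβ (Fin.castSucc_le_succ _)
    have h3 : ∀ k : Fin N, β k.castSucc.succ = β k.succ.castSucc := fun k => by rw [Fin.succ_castSucc]
    simp only [h3, ← Fin.succ_last]
    omega

theorem sum_gap {N : ℕ} (b : ℕ) (β : Fin (N + 1) → ℕ) (hβ : Monotone β) (hb : β (Fin.last N) ≤ b) :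
    ∑ k, gap b β k = b := by
  rw [Fin.sum_univ_succ, Fin.sum_univ_castSucc, Fin.succ_last, gap_zero, gap_last]
  simp only [gap_mid]
  have := telescope N β hβ
  omega

theorem gap_inj {N : ℕ} (b : ℕ) (β γ : Fin (N + 1) → ℕ) (hβ : Monotone β) (hγ : Monotone γ)
    (h : gap b β = gap b γ) : β = γ := by
  funext k
  induction k using Fin.induction with
  | zero => simpa using congrFun h 0
  | succ k ih =>
    have h1 := congrFun h k.castSucc.succ
    simp only [gap_mid] at h1
    have h2 : β k.castSucc ≤ β k.succ := hβ (Fin.castSucc_le_succ _)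
    have h3 : γ k.castSucc ≤ γ k.succ := hγ (Fin.castSucc_le_succ _)
    omega

theorem gap_surj {N : ℕ} (b : ℕ) (e : Fin (N + 2) → ℕ) (he : ∑ k, e k = b) :
    ∃ β : Fin (N + 1) → ℕ, Monotone β ∧ β (Fin.last N) ≤ b ∧ gap b β = e := by
  set β : Fin (N + 1) → ℕ := fun k => Fin.partialSum e k.succ.castSucc with hβ
  have h0 : β 0 = e 0 := by
    simp only [hβ]
    rw [← Fin.succ_castSucc, Fin.partialSum_succ]; simp
  have hs : ∀ k : Fin N, β k.succ = β k.castSucc + e k.castSucc.succ := by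
    intro k
    simp only [hβ]
    rw [← Fin.succ_castSucc, Fin.partialSum_succ, Fin.succ_castSucc]
  have hm : Monotone β := by
    rw [Fin.monotone_iff_le_succ]
    intro i; rw [hs]; omega
  have hd : ∀ k : Fin N, β k.succ - β k.castSucc = e k.castSucc.succ := by
    intro k; rw [hs]; omega
  have hl : β (Fin.last N) + e (Fin.last (N + 1)) = b := by
    rw [← telescope N β hm, ← he, Fin.sum_univ_succ, Fin.sum_univ_castSucc, h0, Fin.succ_last]
    simp only [hd]; ring
  refine ⟨β, hm, by omega, ?_⟩
  funext k
  refine Fin.cases ?_ (fun k => ?_) k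
  · exact h0
  · refine Fin.lastCases ?_ (fun k => ?_) k
    · rw [Fin.succ_last, gap_last]; change b - β (Fin.last N) = e (Fin.last (N + 1)); omega
    · rw [gap_mid, hd]

open Classical in
theorem chain_count {N b : ℕ} (P : (Fin (N + 1) → Fin (b + 1)) → Prop) (R : (Fin (N + 2) → ℕ) → Prop)
    (hP : ∀ β, P β → Monotone β)
    (hPR : ∀ β : Fin (N + 1) → Fin (b + 1), Monotone β → (P β ↔ R (gap b (fun k => (β k : ℕ))))) :
    Nat.card {β // P β} = ∑ e ∈ Finset.Nat.antidiagonalTuple (N + 2) b, if R e then 1 else 0 := by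
  rw [Nat.card_eq_fintype_card, Fintype.card_subtype, ← Finset.card_filter]
  have mm : ∀ β : Fin (N + 1) → Fin (b + 1), Monotone β → Monotone (fun k => (β k : ℕ)) :=
    fun β h i j hij => h hij
  refine Finset.card_bij (fun β _ => gap b (fun k => (β k : ℕ))) ?_ ?_ ?_
  · intro β hβ
    simp only [Finset.mem_filter, Finset.mem_univ, true_and] at hβ
    have hm := hP β hβ
    simp only [Finset.mem_filter, Finset.Nat.mem_antidiagonalTuple]
    exact ⟨sum_gap _ _ (mm _ hm) (by have := (β (Fin.last N)).2; omega), (hPR β hm).1 hβ⟩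
  · intro β hβ γ hγ h
    simp only [Finset.mem_filter, Finset.mem_univ, true_and] at hβ hγ
    have := gap_inj b _ _ (mm _ (hP β hβ)) (mm _ (hP γ hγ)) h
    funext k
    exact Fin.ext (congrFun this k)
  · intro e he
    simp only [Finset.mem_filter, Finset.Nat.mem_antidiagonalTuple] at he
    obtain ⟨β, h1, h2, h3⟩ := gap_surj b e he.1
    have hlt : ∀ k, β k < b + 1 := fun k => by
      have := h1 (Fin.le_last k); omega
    refine ⟨fun k => ⟨β k, hlt k⟩, ?_, h3⟩
    simp only [Finset.mem_filter, Finset.mem_univ, true_and]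
    rw [hPR _ (fun i j hij => h1 hij)]
    simpa only [h3] using he.2

def key {n : ℕ} (i : Fin n) (s : Bool) : ℤ := if s then ((n : ℤ) - i) else -((n : ℤ) - i)

theorem key_pos {n : ℕ} (i : Fin n) (s : Bool) : 0 < key i s ↔ s = true := by
  have := i.2
  cases s <;> simp [key] <;> omega

theorem key_neg {n : ℕ} (i : Fin n) (s : Bool) : key i s < 0 ↔ s = false := by
  have := i.2
  cases s <;> simp [key] <;> omega

theorem key_le {n : ℕ} (i : Fin n) (s : Bool) : key i s ≤ n := by
  have := i.2
  cases s <;> simp [key] <;> omega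

theorem key_ge {n : ℕ} (i : Fin n) (s : Bool) : -(n : ℤ) ≤ key i s := by
  have := i.2
  cases s <;> simp [key] <;> omega

theorem key_inj {n : ℕ} (i j : Fin n) (s r : Bool) (h : key i s = key j r) : i = j := by
  have := i.2
  have := j.2
  apply Fin.ext
  cases s <;> cases r <;> simp [key] at h <;> omega

theorem key_neg_inj {n : ℕ} (i j : Fin n) (s r : Bool) (h : key i s = -key j r) : i = j := by
  have := i.2
  have := j.2
  apply Fin.ext
  cases s <;> cases r <;> simp [key] at h <;> omega

abbrev Config (n : ℕ) := Equiv.Perm (Fin n) × (Fin n → Bool)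

def ww {n : ℕ} (c : Config n) (k : Fin n) : ℤ := key (c.1 k) (c.2 k)

theorem sort_split {n B : ℕ} (K : Fin n → Bool × Fin (B + 1) → ℤ)
    (V : (Fin n → Bool × Fin (B + 1)) → Prop)
    (hV : ∀ g, V g → Function.Injective (fun i => K i (g i))) :
    Nat.card {g // V g} = ∑ c : Config n,
      Nat.card {β : Fin n → Fin (B + 1) // V ((fun k => (c.2 k, β k)) ∘ c.1.symm) ∧
        StrictMono (fun k => K (c.1 k) (c.2 k, β k))} := by
  rw [sort_count K V hV, Fintype.sum_prod_type]
  refine Finset.sum_congr rfl fun σ _ => ?_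
  rw [← Nat.card_sigma]
  refine Nat.card_congr ⟨fun h => ⟨fun k => (h.1 k).1, ⟨fun k => (h.1 k).2, h.2⟩⟩,
    fun h => ⟨fun k => (h.1 k, h.2.1 k), h.2.2⟩, fun h => rfl, fun h => rfl⟩

noncomputable def HH : PowerSeries ℚ := PowerSeries.mk 1

theorem mk_ge (l : ℕ) : PowerSeries.mk (fun x => if l ≤ x then (1 : ℚ) else 0) =
    PowerSeries.X ^ l * HH := by
  ext b
  rw [PowerSeries.coeff_mk, PowerSeries.coeff_X_pow_mul', HH]
  simp

theorem GF_ge (N : ℕ) (lo : Fin N → ℕ) :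
    GF N (fun e => if ∀ k, lo k ≤ e k then 1 else 0) = PowerSeries.X ^ (∑ k, lo k) * HH ^ N := by
  induction N with
  | zero => simpa using GF_zero 1
  | succ N ih =>
    rw [Fin.sum_univ_succ, pow_add, pow_succ,
      show (PowerSeries.X : PowerSeries ℚ) ^ lo 0 * PowerSeries.X ^ (∑ i : Fin N, lo i.succ) * (HH ^ N * HH)
      = (PowerSeries.X ^ lo 0 * HH) * (PowerSeries.X ^ (∑ i : Fin N, lo i.succ) * HH ^ N) by ring,
      ← ih, ← mk_ge, ← GF_cons]
    congr 1; funext e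
    rw [ite_zero_mul_ite_zero, one_mul]
    congr 1
    rw [Fin.forall_fin_succ]
    rfl

def dd {N : ℕ} (c : Config (N + 1)) (k : Fin N) : ℕ := if ww c k.succ < ww c k.castSucc then 1 else 0

def bL {N : ℕ} (c : Config (N + 1)) : ℕ := if ww c 0 < 0 then 1 else 0
def bR {N : ℕ} (c : Config (N + 1)) : ℕ := if 0 < ww c (Fin.last N) then 1 else 0

def okB (x y : Bool) {b : ℕ} (d : Bool × Fin (b + 1)) : Prop :=
  (x = true → (d.2 : ℕ) = 0 → d.1 = true) ∧ (y = true → (d.2 : ℕ) = b → d.1 = false)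

def lo {N : ℕ} (x y : Bool) (c : Config (N + 1)) : Fin (N + 2) → ℕ :=
  Fin.cons (x.toNat * bL c) (Fin.snoc (α := fun _ => ℕ) (dd c) (y.toNat * bR c))

theorem okB_card (x y : Bool) (b : ℕ) :
    Nat.card {d : Bool × Fin (b + 1) // okB x y d} = 2 * b + 2 - x.toNat - y.toNat := by
  classical
  have e : {d : Bool × Fin (b + 1) // okB x y d} ≃
    {β : Fin (b + 1) // ¬ (y = true ∧ β = Fin.last b)} ⊕ {β : Fin (b + 1) // ¬ (x = true ∧ β = 0)} :=
    { toFun := fun d => match d with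
        | ⟨(true, β), h⟩ => Sum.inl ⟨β, by
            rintro ⟨h1, rfl⟩; exact absurd (h.2 h1 rfl) (by simp)⟩
        | ⟨(false, β), h⟩ => Sum.inr ⟨β, by
            rintro ⟨h1, rfl⟩; exact absurd (h.1 h1 rfl) (by simp)⟩
      invFun := fun d => match d with
        | Sum.inl ⟨β, h⟩ => ⟨(true, β), ⟨fun _ _ => rfl, fun h1 h2 =>
            absurd ⟨h1, Fin.ext h2⟩ h⟩⟩
        | Sum.inr ⟨β, h⟩ => ⟨(false, β), ⟨fun h1 h2 => absurd ⟨h1, Fin.ext h2⟩ h, fun _ _ => rfl⟩⟩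
      left_inv := by rintro ⟨⟨s, β⟩, h⟩; cases s <;> rfl
      right_inv := by rintro (⟨β, h⟩ | ⟨β, h⟩) <;> rfl }
  rw [Nat.card_congr e, Nat.card_sum]
  have h1 : ∀ (z : Bool) (v : Fin (b + 1)),
      Nat.card {β : Fin (b + 1) // ¬ (z = true ∧ β = v)} = b + 1 - z.toNat := by
    intro z v
    cases z
    · simp [Nat.card_eq_fintype_card]
    · simp [Nat.card_eq_fintype_card]
  rw [h1, h1]
  cases x <;> cases y <;> simp <;> omega

theorem step_lt (n : ℕ) (u v w w' : ℤ) (h1 : w ≤ n) (h2 : -(n : ℤ) ≤ w) (h3 : w' ≤ n)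
    (h4 : -(n : ℤ) ≤ w') :
    u * (2 * n + 1) + w < v * (2 * n + 1) + w' ↔ (u < v ∨ (u = v ∧ w < w')) := by
  constructor
  · intro h
    rcases lt_trichotomy u v with h5 | h5 | h5
    · exact Or.inl h5
    · subst h5; right; exact ⟨rfl, by linarith⟩
    · exfalso; nlinarith
  · rintro (h | ⟨rfl, h⟩)
    · nlinarith
    · linarith

def KB {n b : ℕ} (i : Fin n) (d : Bool × Fin (b + 1)) : ℤ := ((d.2 : ℕ) : ℤ) * (2 * n + 1) + key i d.1

theorem KB_lt {n b : ℕ} (i j : Fin n) (d e : Bool × Fin (b + 1)) :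
    KB i d < KB j e ↔ ((d.2 : ℕ) < e.2 ∨ ((d.2 : ℕ) = e.2 ∧ key i d.1 < key j e.1)) := by
  rw [KB, KB, step_lt _ _ _ _ _ (key_le _ _) (key_ge _ _) (key_le _ _) (key_ge _ _)]
  norm_cast

theorem box_iff (N b : ℕ) (x y : Bool) (c : Config (N + 1)) (β : Fin (N + 1) → Fin (b + 1))
    (hβ : Monotone β) :
    ((∀ i, okB x y (((fun k => (c.2 k, β k)) ∘ c.1.symm) i)) ∧
      StrictMono (fun k => KB (c.1 k) (c.2 k, β k))) ↔
    ∀ k, lo x y c k ≤ gap b (fun k => (β k : ℕ)) k := by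
  have hm : ∀ k : Fin N, (β k.castSucc : ℕ) ≤ β k.succ := fun k => hβ (Fin.castSucc_le_succ _)
  have hmid : StrictMono (fun k => KB (c.1 k) (c.2 k, β k)) ↔
      ∀ k : Fin N, dd c k ≤ (β k.succ : ℕ) - β k.castSucc := by
    rw [Fin.strictMono_iff_lt_succ]
    refine forall_congr' fun k => ?_
    rw [KB_lt]
    have hk := hm k
    have hne : ww c k.succ ≠ ww c k.castSucc := by
      intro h
      have := c.1.injective (key_inj _ _ _ _ h)
      exact absurd this (Fin.castSucc_lt_succ).ne'
    change ((β k.castSucc : ℕ) < β k.succ ∨ ((β k.castSucc : ℕ) = β k.succ ∧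
      ww c k.castSucc < ww c k.succ)) ↔ _
    rw [dd]
    split_ifs with h <;> omega
  have hall : (∀ i, okB x y (((fun k => (c.2 k, β k)) ∘ c.1.symm) i)) ↔
      ∀ k, okB x y (c.2 k, β k) := by
    constructor
    · intro h k
      have := h (c.1 k)
      simpa using this
    · intro h i; exact h _
  have hsp : (∀ k, lo x y c k ≤ gap b (fun k => (β k : ℕ)) k) ↔
      (lo x y c 0 ≤ gap b (fun k => (β k : ℕ)) 0 ∧
      (∀ k : Fin N, lo x y c k.castSucc.succ ≤ gap b (fun k => (β k : ℕ)) k.castSucc.succ) ∧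
      lo x y c (Fin.last (N + 1)) ≤ gap b (fun k => (β k : ℕ)) (Fin.last (N + 1))) := by
    rw [Fin.forall_fin_succ (n := N + 1), Fin.forall_fin_succ' (n := N), Fin.succ_last]
  rw [hall, hsp]
  simp only [gap_mid, gap_zero, gap_last]
  have e0 : lo x y c 0 = x.toNat * bL c := rfl
  have e1 : ∀ k : Fin N, lo x y c k.castSucc.succ = dd c k := fun k => by
    rw [lo, Fin.cons_succ, Fin.snoc_castSucc]
  have e2 : lo x y c (Fin.last (N + 1)) = y.toNat * bR c := by
    rw [← Fin.succ_last, lo, Fin.cons_succ, Fin.snoc_last]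
  simp only [e1]
  rw [e0, e2, ← hmid]
  have hb : (β (Fin.last N) : ℕ) ≤ b := by have := (β (Fin.last N)).2; omega
  constructor
  · rintro ⟨h1, h2⟩
    refine ⟨?_, h2, ?_⟩
    · have := (h1 0).1
      cases x
      · simp
      · simp only [Bool.toNat_true, one_mul, bL, forall_const] at this ⊢
        split_ifs with h
        · rw [ww, key_neg] at h
          simp only [h] at this
          by_contra h'
          exact absurd (this (by omega)) (by simp)
        · omega
    · have := (h1 (Fin.last N)).2
      cases y
      · simp
      · simp only [Bool.toNat_true, one_mul, bR, forall_const] at this ⊢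
        split_ifs with h
        · rw [ww, key_pos] at h
          simp only [h] at this
          by_contra h'
          exact absurd (this (by omega)) (by simp)
        · omega
  · rintro ⟨h1, h2, h3⟩
    refine ⟨fun k => ⟨?_, ?_⟩, h2⟩
    · rintro rfl hk
      simp only [] at hk ⊢
      have hle := h2.monotone (Fin.zero_le k)
      have hm0 : (β 0 : ℕ) ≤ β k := hβ (Fin.zero_le k)
      have h0 : (β 0 : ℕ) = 0 := by omega
      simp only [Bool.toNat_true, one_mul, bL, h0] at h1
      rw [← key_pos (c.1 k)]
      simp only [KB, h0, hk] at hle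
      split_ifs at h1 with h
      · omega
      · rw [ww] at h
        have hn := (key_neg (c.1 0) (c.2 0)).not.1 h
        have := (key_pos (c.1 0) (c.2 0)).2 (by simpa using hn)
        linarith
    · rintro rfl hk
      simp only [] at hk ⊢
      have hle := h2.monotone (Fin.le_last k)
      have hm0 : (β k : ℕ) ≤ β (Fin.last N) := hβ (Fin.le_last k)
      have h0 : (β (Fin.last N) : ℕ) = b := by omega
      simp only [Bool.toNat_true, one_mul, bR, h0] at h3
      rw [← key_neg (c.1 k)]
      simp only [KB, h0, hk] at hle
      split_ifs at h3 with h
      · omega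
      · rw [ww] at h
        have hn := (key_pos (c.1 (Fin.last N)) (c.2 (Fin.last N))).not.1 h
        have := (key_neg (c.1 (Fin.last N)) (c.2 (Fin.last N))).2 (by simpa using hn)
        linarith

theorem box (N : ℕ) (x y : Bool) :
    (∑ c : Config (N + 1), (PowerSeries.X : PowerSeries ℚ) ^ (x.toNat * bL c + ∑ k, dd c k + y.toNat * bR c))
      * HH ^ (N + 2) =
    PowerSeries.mk fun b => ((2 * b + 2 - x.toNat - y.toNat : ℕ) : ℚ) ^ (N + 1) := by
  classical
  ext b
  rw [PowerSeries.coeff_mk, Finset.sum_mul, map_sum, ← okB_card x y b]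
  have h1 : ∀ c : Config (N + 1), x.toNat * bL c + ∑ k, dd c k + y.toNat * bR c = ∑ k, lo x y c k := by
    intro c
    rw [Fin.sum_univ_succ, Fin.sum_univ_castSucc]
    simp [lo, add_assoc]
  simp only [h1, ← GF_ge]
  have h2 : Nat.card {g : Fin (N + 1) → Bool × Fin (b + 1) // ∀ i, okB x y (g i)} =
      Nat.card {d : Bool × Fin (b + 1) // okB x y d} ^ (N + 1) := by
    rw [Nat.card_congr (Equiv.subtypePiEquivPi), Nat.card_pi]
    simp
  rw [← Nat.cast_pow, ← h2]
  rw [sort_split KB, Nat.cast_sum]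
  · refine Finset.sum_congr rfl fun c _ => ?_
    rw [chain_count (R := fun e => ∀ k, lo x y c k ≤ e k)]
    · rw [GF, PowerSeries.coeff_mk]; push_cast; rfl
    · rintro β ⟨-, h⟩ i j hij
      by_contra hlt
      push Not at hlt
      rcases hij.lt_or_eq with h' | h'
      · have := h h'
        simp only [KB_lt] at this
        have h3 : (β j : ℕ) < β i := hlt
        omega
      · rw [h'] at hlt; exact lt_irrefl _ hlt
    · intro β hβ
      exact box_iff N b x y c β hβ
  · intro g _ i j hij
    have h1 := (KB_lt i j (g i) (g j)).not.1 (by simp only [] at hij; omega)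
    have h2 := (KB_lt j i (g j) (g i)).not.1 (by simp only [] at hij; omega)
    exact key_inj i j (g i).1 (g j).1 (by omega)

def PC (m a : ℕ) (w : ℤ) (p : ℕ) (w' : ℤ) (p' : ℕ) : Prop :=
  p ≠ p' ∧ (p < p' → w' < w → p + a < p') ∧ (p' < p → w < w' → p' + a < p) ∧
  (w + w' < 0 → a < p + p') ∧ (0 < w + w' → p + p' + a < 2 * m + 1)

theorem PC_symm (m a : ℕ) (w : ℤ) (p : ℕ) (w' : ℤ) (p' : ℕ) (h : PC m a w p w' p') :
    PC m a w' p' w p := by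
  obtain ⟨h1, h2, h3, h4, h5⟩ := h
  refine ⟨h1.symm, h3, h2, fun h => ?_, fun h => ?_⟩
  · rw [add_comm p']; exact h4 (by linarith)
  · rw [add_comm p']; exact h5 (by linarith)

def VC {n m : ℕ} (a : ℕ) (g : Fin n → Bool × Fin (m + 1)) : Prop :=
  (∀ i, 1 ≤ ((g i).2 : ℕ)) ∧ ∀ i j, i ≠ j →
    PC m a (key i (g i).1) (g i).2 (key j (g j).1) (g j).2

theorem avoids_iff (m a : ℕ) (ham : a ≤ m) (z : ℤ) (h1 : z ≤ 2 * m) (h2 : -(2 * m : ℤ) ≤ z) :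
    Avoids ((z : ℤ) : ZMod (2 * m + 1)) 0 (a : ℤ) ↔ ((z < 0 ∨ a < z) ∧ a < z + (2 * m + 1)) := by
  unfold Avoids
  simp only [ne_eq, ZMod.intCast_eq_intCast_iff_dvd_sub]
  constructor
  · intro h
    constructor
    · by_contra h'
      push Not at h'
      exact h z h'.1 h'.2 (by simp)
    · by_contra h'
      push Not at h'
      exact h (z + (2 * m + 1)) (by omega) (by omega) (by simp)
  · rintro ⟨h3, h4⟩ k hk1 hk2 ⟨r, hr⟩
    push_cast at hr
    have hr1 : r < 2 := by by_contra h; push Not at h; nlinarith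
    have hr2 : -1 < r := by by_contra h; push Not at h; nlinarith
    have : r = 0 ∨ r = 1 := by omega
    rcases this with rfl | rfl <;> omega

def sv {m : ℕ} (d : Bool × Fin (m + 1)) : ℤ := if d.1 then -((d.2 : ℕ) : ℤ) else ((d.2 : ℕ) : ℤ)

theorem pair_iff {n m : ℕ} (a : ℕ) (ham : a ≤ m) (i j : Fin n) (hij : i < j)
    (d e : Bool × Fin (m + 1)) (hd : 1 ≤ (d.2 : ℕ)) (he : 1 ≤ (e.2 : ℕ)) :
    (Avoids (((sv d : ℤ) : ZMod (2 * m + 1)) - ((sv e : ℤ) : ZMod (2 * m + 1))) 0 (a : ℤ) ∧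
     Avoids (((sv d : ℤ) : ZMod (2 * m + 1)) + ((sv e : ℤ) : ZMod (2 * m + 1))) 0 (a : ℤ)) ↔
    PC m a (key i d.1) d.2 (key j e.1) e.2 := by
  obtain ⟨s, p⟩ := d
  obtain ⟨r, p'⟩ := e
  have h1 := p.2
  have h2 := p'.2
  have h3 := i.2
  have h4 := j.2
  have h5 : (i : ℕ) < j := hij
  simp only [] at hd he
  rw [← Int.cast_sub, ← Int.cast_add, avoids_iff m a ham, avoids_iff m a ham]
  · cases s <;> cases r <;> simp [sv, key, PC] <;> omega
  all_goals cases s <;> cases r <;> simp [sv] <;> omega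

theorem Mcount_eq (n m a : ℕ) (ham : a ≤ m) :
    Mcount n (2 * m + 1) a = Nat.card {g : Fin n → Bool × Fin (m + 1) // VC a g} := by
  rw [Mcount]
  change _ = Set.ncard {g : Fin n → Bool × Fin (m + 1) | VC a g}
  symm
  have hVC : ∀ g : Fin n → Bool × Fin (m + 1), VC a g ↔ (∀ i, 1 ≤ ((g i).2 : ℕ)) ∧
      ∀ i j : Fin n, i < j →
      Avoids (((sv (g i) : ℤ) : ZMod (2 * m + 1)) - ((sv (g j) : ℤ) : ZMod (2 * m + 1))) 0 (a : ℤ) ∧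
      Avoids (((sv (g i) : ℤ) : ZMod (2 * m + 1)) + ((sv (g j) : ℤ) : ZMod (2 * m + 1))) 0 (a : ℤ) := by
    intro g
    rw [VC]
    refine and_congr_right fun h => ?_
    constructor
    · intro h' i j hij
      exact (pair_iff a ham i j hij _ _ (h i) (h j)).2 (h' i j hij.ne)
    · intro h' i j hij
      rcases lt_or_gt_of_ne hij with h1 | h1
      · exact (pair_iff a ham i j h1 _ _ (h i) (h j)).1 (h' i j h1)
      · exact PC_symm _ _ _ _ _ _ ((pair_iff a ham j i h1 _ _ (h j) (h i)).1 (h' j i h1))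
  refine Set.ncard_congr (fun g _ => fun i => ((sv (g i) : ℤ) : ZMod (2 * m + 1))) ?_ ?_ ?_
  · intro g hg
    have hg := (hVC g).1 hg
    refine ⟨fun i => ?_, hg.2⟩
    intro h0
    rw [ZMod.intCast_zmod_eq_zero_iff_dvd] at h0
    have h1 := hg.1 i
    have h2 := (g i).2.2
    push_cast at h0
    have h3 := Int.eq_zero_of_abs_lt_dvd h0 (by
      rw [abs_lt]
      cases h : (g i).1 <;> simp [sv, h] <;> omega)
    cases h : (g i).1 <;> simp only [sv, h, if_true, if_false, Bool.false_eq_true] at h3 <;> omega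
  · intro g g' hg hg' h
    funext i
    have h0 := congrFun h i
    simp only [ZMod.intCast_eq_intCast_iff_dvd_sub] at h0
    have h1 := hg.1 i
    have h2 := (g i).2.2
    have h1' := hg'.1 i
    have h2' := (g' i).2.2
    push_cast at h0
    have h3 := Int.eq_zero_of_abs_lt_dvd h0 (by
      rw [abs_lt]
      cases h : (g i).1 <;> cases h' : (g' i).1 <;> simp [sv, h, h'] <;> omega)
    refine Prod.ext ?_ (Fin.ext ?_)
    · cases h : (g i).1 <;> cases h' : (g' i).1 <;> simp [sv, h, h'] at h3 ⊢ <;> omega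
    · cases h : (g i).1 <;> cases h' : (g' i).1 <;> simp [sv, h, h'] at h3 ⊢ <;> omega
  · intro x hx
    have hle : ∀ i, (x i).valMinAbs.natAbs < m + 1 := fun i => by
      have := ZMod.natAbs_valMinAbs_le (x i); omega
    have hsv : ∀ i, ((sv ((decide ((x i).valMinAbs < 0), ⟨_, hle i⟩) : Bool × Fin (m + 1)) : ℤ) :
        ZMod (2 * m + 1)) = x i := by
      intro i
      conv_rhs => rw [← ZMod.coe_valMinAbs (x i)]
      congr 1
      by_cases h : (x i).valMinAbs < 0
      · simp only [sv, h, decide_true, if_true]; omega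
      · simp only [sv, h, decide_false, Bool.false_eq_true, if_false]; omega
    refine ⟨fun i => (decide ((x i).valMinAbs < 0), ⟨_, hle i⟩), ?_, ?_⟩
    · rw [Set.mem_ofPred_eq, hVC]
      refine ⟨fun i => ?_, ?_⟩
      · have h1 := hx.1 i
        rw [ne_eq, ← ZMod.valMinAbs_eq_zero] at h1
        simp only []; omega
      · simp only [hsv]; exact hx.2
    · funext i; exact hsv i

theorem claimA (N a : ℕ) (w : Fin (N + 1) → ℤ) (β : Fin (N + 1) → ℕ) (hβ : Monotone β)
    (hd : ∀ k : Fin N, w k.succ < w k.castSucc → a < β k.succ - β k.castSucc) :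
    ∀ k l, k ≤ l → β l ≤ β k + a → w k ≤ w l := by
  intro k l
  induction l using Fin.induction with
  | zero => intro h _; rw [Fin.le_zero_iff.1 h]
  | succ l ih =>
    intro h h'
    rcases h.lt_or_eq with h1 | h1
    · have h2 : k ≤ l.castSucc := Fin.le_castSucc_iff.2 h1
      have h3 : β l.castSucc ≤ β l.succ := hβ (Fin.castSucc_le_succ _)
      have h4 : β k ≤ β l.castSucc := hβ h2
      have h5 := ih h2 (by omega)
      by_contra h6
      have := hd l (by omega)
      omega
    · rw [h1]

theorem order_iff (t m a : ℕ) (w : Fin (t + 3) → ℤ)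
    (β : Fin (t + 3) → ℕ) (hβ : Monotone β) (hm : ∀ k, β k ≤ m) (d : Fin (t + 2) → ℕ)
    (hd : ∀ k, d k = if w k.succ < w k.castSucc then 1 else 0) :
    (((∀ k, 1 ≤ β k) ∧ ∀ k l, k ≠ l → PC m a (w k) (β k) (w l) (β l)) ∧ StrictMono β) ↔
    (1 ≤ β 0 ∧ (∀ k : Fin (t + 2), 1 + a * d k ≤ β k.succ - β k.castSucc) ∧
     (w 0 + w 1 < 0 → a < β 0 + β 1) ∧
     (0 < w (Fin.last (t + 1)).castSucc + w (Fin.last (t + 2)) →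
        β (Fin.last (t + 1)).castSucc + β (Fin.last (t + 2)) + a < 2 * m + 1)) := by
  constructor
  · rintro ⟨⟨h1, h2⟩, h3⟩
    refine ⟨h1 0, fun k => ?_, ?_, ?_⟩
    · have h4 : β k.castSucc < β k.succ := h3 Fin.castSucc_lt_succ
      have h5 := (h2 k.castSucc k.succ Fin.castSucc_lt_succ.ne).2.1 h4
      rw [hd]
      split_ifs with h
      · have := h5 h; omega
      · omega
    · intro h
      exact (h2 0 1 (by simp)).2.2.2.1 h
    · intro h
      exact (h2 _ _ (Fin.castSucc_lt_last _).ne).2.2.2.2 h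
  · rintro ⟨h1, h2, h3, h4⟩
    have hs : StrictMono β := by
      rw [Fin.strictMono_iff_lt_succ]
      intro k; have := h2 k; omega
    have cA := claimA (t + 2) a w β hβ (fun k hk => by
      have := h2 k; rw [hd, if_pos hk] at this; omega)
    have main : ∀ k l, k < l → PC m a (w k) (β k) (w l) (β l) := by
      intro k l hkl
      have hlt : β k < β l := hs hkl
      have h0k : β 0 ≤ β k := hβ (Fin.zero_le _)
      have hl1 : (1 : Fin (t + 3)) ≤ l := by
        have : (k : ℕ) < l := hkl
        rw [Fin.le_def]; simp; omega
      have hkl' : k ≤ (Fin.last (t + 1)).castSucc := by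
        have : (k : ℕ) < l := hkl
        have := l.2
        rw [Fin.le_def]; simp; omega
      have h1l : β 1 ≤ β l := hβ hl1
      have hll : β l ≤ β (Fin.last (t + 2)) := hβ (Fin.le_last _)
      have hkk : β k ≤ β (Fin.last (t + 1)).castSucc := hβ hkl'
      have h01 : β 0 ≤ β 1 := hβ (Fin.zero_le _)
      have hlast : β (Fin.last (t + 1)).castSucc ≤ β (Fin.last (t + 2)) := hβ (Fin.le_last _)
      have hm' := hm (Fin.last (t + 2))
      refine ⟨hlt.ne, fun _ h => ?_, fun h => absurd h (by omega), fun h => ?_, fun h => ?_⟩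
      · by_contra h'
        have := cA k l hkl.le (by omega)
        omega
      · by_contra h'
        have a1 := cA 0 k (Fin.zero_le _) (by omega)
        have a2 := cA 1 l hl1 (by omega)
        have := h3 (by omega)
        omega
      · by_contra h'
        have a1 := cA k _ hkl' (by omega)
        have a2 := cA l _ (Fin.le_last _) (by omega)
        have := h4 (by omega)
        omega
    refine ⟨⟨fun k => le_trans h1 (hβ (Fin.zero_le k)), fun k l hkl => ?_⟩, hs⟩
    rcases lt_or_gt_of_ne hkl with h | h
    · exact main k l h
    · exact PC_symm _ _ _ _ _ _ (main l k h)

theorem ww_inj {n : ℕ} (c : Config n) : Function.Injective (ww c) := fun _ _ h =>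
  c.1.injective (key_inj _ _ _ _ h)

noncomputable def LL {t : ℕ} (a : ℕ) (c : Config (t + 3)) (x y : ℕ) : ℚ :=
  if 1 ≤ x ∧ 1 + a * dd c 0 ≤ y ∧ (ww c 0 + ww c 1 < 0 → a < 2 * x + y) then 1 else 0

noncomputable def RR {t : ℕ} (a : ℕ) (c : Config (t + 3)) (y x : ℕ) : ℚ :=
  if 1 + a * dd c (Fin.last (t + 1)) ≤ y ∧
    (0 < ww c (Fin.last (t + 1)).castSucc + ww c (Fin.last (t + 2)) → a < 2 * x + y + 1) then 1 else 0

theorem Mcount_coeff (t m a : ℕ) (ham : a ≤ m) :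
    (Mcount (t + 3) (2 * m + 1) a : ℚ) = ∑ c : Config (t + 3), PowerSeries.coeff m
      (pairS (LL a c) * ((∏ k : Fin t, (PowerSeries.X ^ (1 + a * dd c k.castSucc.succ) * HH)) *
        pairS (RR a c))) := by
  classical
  rw [Mcount_eq _ _ _ ham, sort_split (fun _ d => ((d.2 : ℕ) : ℤ)), Nat.cast_sum]
  · refine Finset.sum_congr rfl fun c _ => ?_
    rw [chain_count (R := fun e : Fin (t + 4) → ℕ => 1 ≤ e 0 ∧
      (∀ k : Fin (t + 2), 1 + a * dd c k ≤ e k.castSucc.succ) ∧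
      (ww c 0 + ww c 1 < 0 → a < 2 * e 0 + e 1) ∧
      (0 < ww c (Fin.last (t + 1)).castSucc + ww c (Fin.last (t + 2)) →
        a < 2 * e (Fin.last (t + 3)) + e (Fin.last (t + 1)).castSucc.succ + 1))]
    · simp only [← mk_ge]
      rw [← GF_all, GF, PowerSeries.coeff_mk, Nat.cast_sum]
      refine Finset.sum_congr rfl fun e _ => ?_
      rw [Finset.prod_ite_zero, LL, RR]
      simp only [Finset.prod_const_one, ite_zero_mul_ite_zero, mul_one, Nat.cast_ite, Nat.cast_one,
        Nat.cast_zero]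
      congr 1
      rw [Fin.forall_fin_succ (n := t + 1), Fin.forall_fin_succ' (n := t)]
      simp only [Finset.mem_univ, forall_const, Fin.succ_last]
      have e1 : (Fin.last (t + 1)).castSucc.succ = (Fin.last t).castSucc.succ.succ := rfl
      have e2 : ∀ k : Fin t, k.castSucc.succ.castSucc.succ = (Fin.castAdd 2 k).succ.succ := fun k => rfl
      have e3 : (0 : Fin (t + 2)).castSucc.succ = 1 := rfl
      simp only [e1, e2, e3]
      apply propext
      tauto
    · rintro β ⟨-, h⟩ i j hij
      have := h.monotone hij
      simp only [Nat.cast_le] at this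
      exact this
    · intro β hβ
      have hb : ∀ k, (β k : ℕ) ≤ m := fun k => by have := (β k).2; omega
      have hmono : Monotone (fun k => (β k : ℕ)) := fun i j h => hβ h
      have key1 := order_iff t m a (ww c) (fun k => (β k : ℕ)) hmono
        hb (dd c) (fun k => rfl)
      have hV : VC a ((fun k => (c.2 k, β k)) ∘ c.1.symm) ↔ ((∀ k, 1 ≤ (β k : ℕ)) ∧
          ∀ k l, k ≠ l → PC m a (ww c k) (β k) (ww c l) (β l)) := by
        constructor
        · rintro ⟨h1, h2⟩
          refine ⟨fun k => by simpa using h1 (c.1 k), fun k l hkl => ?_⟩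
          simpa [ww] using h2 (c.1 k) (c.1 l) (c.1.injective.ne hkl)
        · rintro ⟨h1, h2⟩
          refine ⟨fun k => h1 _, fun k l hkl => ?_⟩
          simpa [ww] using h2 (c.1.symm k) (c.1.symm l) (c.1.symm.injective.ne hkl)
      have hS : StrictMono (fun k => (((β k : Fin (m + 1)) : ℕ) : ℤ)) ↔
          StrictMono (fun k => (β k : ℕ)) := by
        simp [StrictMono]
      rw [hV, hS, key1]
      have e3 : (1 : Fin (t + 4)) = (0 : Fin (t + 2)).castSucc.succ := rfl
      rw [e3]
      simp only [gap_zero, gap_mid, gap_last]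
      have e4 : (0 : Fin (t + 2)).succ = 1 := rfl
      have e5 : (0 : Fin (t + 2)).castSucc = 0 := rfl
      have e6 : (Fin.last (t + 1)).succ = Fin.last (t + 2) := rfl
      simp only [e4, e5, e6]
      have a1 := hmono (Fin.zero_le 1)
      have a2 : (β (Fin.last (t + 1)).castSucc : ℕ) ≤ β (Fin.last (t + 2)) := hmono (Fin.le_last _)
      have a3 := hb (Fin.last (t + 2))
      simp only [] at a1
      refine and_congr_right fun _ => and_congr_right fun _ => and_congr
        (imp_congr_right fun _ => ?_) (imp_congr_right fun _ => ?_) <;> omega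
  · intro g hg i j hij
    by_contra hne
    have := (hg.2 i j hne).1
    simp only [Nat.cast_inj] at hij
    exact this hij

noncomputable def TP : ℕ → ℚ[X]
  | 0 => 0
  | 1 => 0
  | a + 2 => phi a + X * TP a

theorem TP_odd (b : ℕ) : TP (2 * b + 1) = phi b ^ 2 := by
  have hne : (1 - X : ℚ[X]) ≠ 0 := by
    intro h; have := congrArg (fun r => r.coeff 0) h
    simp at this
  induction b with
  | zero => simp [TP, phi]
  | succ b ih =>
    rw [show 2 * (b + 1) + 1 = (2 * b + 1) + 2 by ring, TP, ih]
    apply mul_left_cancel₀ hne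
    apply mul_left_cancel₀ hne
    have h1 := phi_mul b
    have h2 := phi_mul (b + 1)
    have h3 := phi_mul (2 * b + 1)
    have e1 : (X : ℚ[X]) ^ (2 * b + 1) = (X ^ b) ^ 2 * X := by rw [pow_succ, pow_mul']
    rw [e1] at h3
    rw [pow_succ] at h2
    linear_combination (1 - X) * h3 + X * ((1 - X) * phi b + (1 - X ^ b)) * h1
      - ((1 - X) * phi (b + 1) + (1 - X ^ b * X)) * h2

theorem TP_even (b : ℕ) : TP (2 * b + 2) = phi b * phi (b + 1) := by
  have hne : (1 - X : ℚ[X]) ≠ 0 := by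
    intro h; have := congrArg (fun r => r.coeff 0) h
    simp at this
  induction b with
  | zero => simp [TP, phi]
  | succ b ih =>
    rw [show 2 * (b + 1) + 2 = (2 * b + 2) + 2 by ring, TP, ih]
    apply mul_left_cancel₀ hne
    apply mul_left_cancel₀ hne
    have h1 := phi_mul b
    have h2 := phi_mul (b + 1)
    have h4 := phi_mul (b + 1 + 1)
    have h3 := phi_mul (2 * b + 2)
    have e1 : (X : ℚ[X]) ^ (2 * b + 2) = (X ^ b) ^ 2 * X ^ 2 := by rw [pow_add, pow_mul']
    rw [e1] at h3
    rw [pow_succ] at h2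
    rw [pow_succ, pow_succ] at h4
    linear_combination (1 - X) * h3 + X * ((1 - X) * phi (b + 1)) * h1 + X * (1 - X ^ b) * h2
      - ((1 - X) * phi (b + 1 + 1)) * h2 - (1 - X ^ b * X) * h4

def tentL (a x y : ℕ) : ℚ := if 1 ≤ x ∧ 1 ≤ y ∧ 2 * x + y ≤ a then 1 else 0
def tentR (a y x : ℕ) : ℚ := if 1 ≤ y ∧ 2 * x + y + 1 ≤ a then 1 else 0

theorem coeff_phi (m k : ℕ) : (phi m).coeff k = if k < m then 1 else 0 := by
  simp [phi, Polynomial.finsetSum_coeff, coeff_X_pow]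

theorem pairS_tentL (a : ℕ) :
    pairS (tentL a) = PowerSeries.X ^ 2 * ((TP a : ℚ[X]) : PowerSeries ℚ) := by
  induction a using Nat.twoStepInduction with
  | zero =>
    ext b
    simp only [TP, Polynomial.coe_zero, mul_zero, map_zero, pairS, PowerSeries.coeff_mk]
    refine Finset.sum_eq_zero fun p _ => ?_
    rw [tentL, if_neg]; omega
  | one =>
    ext b
    simp only [TP, Polynomial.coe_zero, mul_zero, map_zero, pairS, PowerSeries.coeff_mk]
    refine Finset.sum_eq_zero fun p _ => ?_
    rw [tentL, if_neg]; omega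
  | more a ih _ =>
    have h : pairS (tentL (a + 2)) = PowerSeries.X * (PowerSeries.X * ((phi a : ℚ[X]) : PowerSeries ℚ)
        + pairS (tentL a)) := by
      ext b
      cases b with
      | zero => simp [pairS, tentL]
      | succ b =>
        rw [PowerSeries.coeff_succ_X_mul, map_add, pairS, PowerSeries.coeff_mk,
          Finset.Nat.sum_antidiagonal_succ, pairS, PowerSeries.coeff_mk]
        have e0 : tentL (a + 2) 0 (b + 1) = 0 := by simp [tentL]
        have e1 : ∀ p : ℕ × ℕ, tentL (a + 2) (p.1 + 1) p.2 =
            (if p.1 = 0 then (if 1 ≤ p.2 ∧ p.2 ≤ a then 1 else 0) else 0) + tentL a p.1 p.2 := by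
          rintro ⟨x, y⟩
          simp only [tentL]
          split_ifs <;> first | omega | norm_num
        simp only [e0, e1, Finset.sum_add_distrib, zero_add]
        congr 1
        have : ∑ x ∈ Finset.HasAntidiagonal.antidiagonal b, (if x.1 = 0 then
            (if 1 ≤ x.2 ∧ x.2 ≤ a then (1 : ℚ) else 0) else 0) = if 1 ≤ b ∧ b ≤ a then 1 else 0 := by
          rw [Finset.sum_eq_single (0, b)]
          · simp
          · rintro ⟨x, y⟩ h1 h2
            simp at h1 h2 ⊢
            intro h3 h4
            exfalso; apply h2 h3; omega
          · intro h; simp at h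
        rw [this]
        cases b with
        | zero => simp
        | succ b =>
          rw [PowerSeries.coeff_succ_X_mul, Polynomial.coeff_coe, coeff_phi]
          congr 1
          apply propext; omega
    rw [h, ih, TP]
    push_cast
    ring

theorem pairS_tentR (a : ℕ) :
    pairS (tentR a) = PowerSeries.X * ((TP (a + 1) : ℚ[X]) : PowerSeries ℚ) := by
  have h : PowerSeries.X * pairS (tentR a) = pairS (tentL (a + 1)) := by
    ext b
    cases b with
    | zero =>
      rw [PowerSeries.coeff_zero_X_mul, pairS, PowerSeries.coeff_mk]
      symm
      refine Finset.sum_eq_zero fun p hp => ?_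
      rw [Finset.HasAntidiagonal.mem_antidiagonal] at hp
      rw [tentL, if_neg]; omega
    | succ b =>
      rw [PowerSeries.coeff_succ_X_mul, pairS, pairS, PowerSeries.coeff_mk, PowerSeries.coeff_mk,
          Finset.Nat.sum_antidiagonal_succ, ← Finset.Nat.sum_antidiagonal_swap]
      have e0 : tentL (a + 1) 0 (b + 1) = 0 := by simp [tentL]
      simp only [e0, zero_add]
      refine Finset.sum_congr rfl fun p _ => ?_
      simp only [tentL, tentR, Prod.fst_swap, Prod.snd_swap]
      congr 1
      apply propext; omega
  rw [pairS_tentL] at h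
  apply mul_left_cancel₀ (PowerSeries.X_ne_zero (R := ℚ))
  rw [h]; ring

theorem pairS_sub (f g : ℕ → ℕ → ℚ) : pairS (fun x y => f x y - g x y) = pairS f - pairS g := by
  ext b; simp [pairS]

theorem pairS_smul (r : ℚ) (g : ℕ → ℕ → ℚ) :
    pairS (fun x y => r * g x y) = PowerSeries.C r * pairS g := by
  ext b; simp [pairS, Finset.mul_sum]

theorem pairS_mul (f g : ℕ → ℚ) : pairS (fun x y => f x * g y) =
    PowerSeries.mk f * PowerSeries.mk g := by
  ext b; simp [pairS, PowerSeries.coeff_mul]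

def mL {t : ℕ} (c : Config (t + 3)) : ℚ := if ww c 0 + ww c 1 < 0 ∧ ww c 0 < ww c 1 then 1 else 0
def mR {t : ℕ} (c : Config (t + 3)) : ℚ :=
  if 0 < ww c (Fin.last (t + 1)).castSucc + ww c (Fin.last (t + 2)) ∧
    ww c (Fin.last (t + 1)).castSucc < ww c (Fin.last (t + 2)) then 1 else 0

theorem pairS_LL {t : ℕ} (a : ℕ) (c : Config (t + 3)) :
    pairS (LL a c) = (PowerSeries.X * HH) * (PowerSeries.X ^ (1 + a * dd c 0) * HH)
      - PowerSeries.C (mL c) * (PowerSeries.X ^ 2 * ((TP a : ℚ[X]) : PowerSeries ℚ)) := by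
  rw [← pairS_tentL, ← pairS_smul, ← pow_one (PowerSeries.X : PowerSeries ℚ), ← mk_ge, pow_one,
    ← mk_ge, ← pairS_mul, ← pairS_sub]
  congr 1; funext x y
  have hw : ww c 0 ≠ ww c 1 := fun h => by
    have := ww_inj c h
    simp at this
  have e1 : (Fin.succ 0 : Fin (t + 3)) = 1 := rfl
  have e0 : (Fin.castSucc 0 : Fin (t + 3)) = 0 := rfl
  by_cases h1 : ww c 1 < ww c 0
  · have hd : dd c 0 = 1 := by simp [dd, e1, e0, h1]
    have hm : mL c = 0 := by rw [mL, if_neg]; omega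
    rw [LL, hd, hm, ite_zero_mul_ite_zero, zero_mul, sub_zero, mul_one, mul_one]
    congr 1
    apply propext; omega
  · have hd : dd c 0 = 0 := by simp [dd, e1, e0, h1]
    rw [LL, hd, mL, tentL, mul_zero]
    split_ifs <;> first | omega | norm_num

theorem pairS_RR {t : ℕ} (a : ℕ) (c : Config (t + 3)) :
    pairS (RR a c) = (PowerSeries.X ^ (1 + a * dd c (Fin.last (t + 1))) * HH) * HH
      - PowerSeries.C (mR c) * (PowerSeries.X * ((TP (a + 1) : ℚ[X]) : PowerSeries ℚ)) := by
  have h0 : HH = PowerSeries.mk (fun x => if 0 ≤ x then (1 : ℚ) else 0) := by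
    rw [mk_ge]; simp
  rw [← pairS_tentR, ← pairS_smul, ← mk_ge, h0, ← pairS_mul, ← pairS_sub]
  congr 1; funext y x
  have hw : ww c (Fin.last (t + 1)).castSucc ≠ ww c (Fin.last (t + 2)) := fun h => by
    have := ww_inj c h
    exact absurd this (Fin.castSucc_lt_last _).ne
  have e1 : (Fin.last (t + 1)).succ = Fin.last (t + 2) := rfl
  by_cases h1 : ww c (Fin.last (t + 2)) < ww c (Fin.last (t + 1)).castSucc
  · have hd : dd c (Fin.last (t + 1)) = 1 := by simp only [dd, e1, h1, if_true]
    have hm : mR c = 0 := by rw [mR, if_neg]; omega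
    rw [RR, hd, hm, ite_zero_mul_ite_zero, zero_mul, sub_zero, mul_one, mul_one]
    congr 1
    apply propext; omega
  · have hd : dd c (Fin.last (t + 1)) = 0 := by simp only [dd, e1, h1, if_false]
    rw [RR, hd, mR, tentR, mul_zero]
    split_ifs <;> first | omega | norm_num

theorem charZero_ps : CharZero (PowerSeries ℚ) := algebraRat.charZero _

theorem flip_sum {ι R : Type} [Fintype ι] [CommRing R] [IsDomain R] [CharZero R]
    (f : ι → ι) (hf : Function.Involutive f) (A B W : ι → R)
    (h : ∀ c, A c + A (f c) = B c + B (f c)) (hW : ∀ c, W (f c) = W c) :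
    ∑ c, A c * W c = ∑ c, B c * W c := by
  have h1 : ∀ D : ι → R, ∑ c, D (f c) * W c = ∑ c, D c * W c := by
    intro D
    rw [← Equiv.sum_comp (Function.Involutive.toPerm f hf) (fun c => D c * W c)]
    refine Finset.sum_congr rfl fun c _ => ?_
    simp [hW]
  have h2 : ∑ c, (A c + A (f c)) * W c = ∑ c, (B c + B (f c)) * W c := by
    simp only [h]
  simp only [add_mul, Finset.sum_add_distrib, h1] at h2
  have h3 : (2 : R) * ∑ c, A c * W c = 2 * ∑ c, B c * W c := by linear_combination h2
  exact mul_left_cancel₀ two_ne_zero h3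

def flipC {n : ℕ} (j : Fin n) (c : Config n) : Config n := (c.1, Function.update c.2 j (!c.2 j))

theorem flipC_inv {n : ℕ} (j : Fin n) : Function.Involutive (flipC j) := by
  intro c
  simp [flipC]

theorem key_not {n : ℕ} (i : Fin n) (s : Bool) : key i (!s) = - key i s := by
  cases s <;> simp [key]

theorem ww_flip_self {n : ℕ} (j : Fin n) (c : Config n) : ww (flipC j c) j = - ww c j := by
  simp [ww, flipC, key_not]

theorem ww_flip_ne {n : ℕ} (j k : Fin n) (c : Config n) (h : k ≠ j) :
    ww (flipC j c) k = ww c k := by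
  simp [ww, flipC, h]

theorem ww_ne_zero {n : ℕ} (c : Config n) (k : Fin n) : ww c k ≠ 0 := by
  intro h
  have h1 := key_pos (c.1 k) (c.2 k)
  have h2 := key_neg (c.1 k) (c.2 k)
  rw [← ww, h] at h1 h2
  cases hh : c.2 k <;> simp [hh] at h1 h2

theorem ww_ne_neg {n : ℕ} (c : Config n) (k l : Fin n) (h : k ≠ l) : ww c k ≠ - ww c l :=
  fun h' => h (c.1.injective (key_neg_inj _ _ _ _ h'))

theorem midL_id (E z : PowerSeries ℚ) (hE : E * (1 - z) = 1) (p r : ℤ) (hp : p ≠ 0) (h1 : p ≠ r)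
    (h2 : p ≠ -r) :
    PowerSeries.C (if p + r < 0 ∧ p < r then (1 : ℚ) else 0) +
      PowerSeries.C (if -p + r < 0 ∧ -p < r then (1 : ℚ) else 0) =
    E ^ 2 * ((1 + z) * (z ^ (if r < p then 1 else 0) + z ^ (if r < -p then 1 else 0)) -
      2 * (z ^ ((if p < 0 then 1 else 0) + (if r < p then 1 else 0)) +
        z ^ ((if -p < 0 then 1 else 0) + (if r < -p then 1 else 0)))) := by
  have hE2 : E ^ 2 * (1 - z) ^ 2 = 1 := by rw [← mul_pow, hE, one_pow]
  split_ifs <;> first | (exfalso; omega) | (simp only [map_zero, map_one]; ring1) |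
    (simp only [map_zero, map_one]; linear_combination -hE2)

theorem midR_id (E z : PowerSeries ℚ) (hE : E * (1 - z) = 1) (p r : ℤ) (hp : p ≠ 0) (h1 : p ≠ r)
    (h2 : p ≠ -r) :
    PowerSeries.C (if 0 < r + p ∧ r < p then (1 : ℚ) else 0) +
      PowerSeries.C (if 0 < r + -p ∧ r < -p then (1 : ℚ) else 0) =
    E ^ 2 * ((1 + z) * (z ^ (if p < r then 1 else 0) + z ^ (if -p < r then 1 else 0)) -
      2 * (z ^ ((if 0 < p then 1 else 0) + (if p < r then 1 else 0)) +
        z ^ ((if 0 < -p then 1 else 0) + (if -p < r then 1 else 0)))) := by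
  have hE2 : E ^ 2 * (1 - z) ^ 2 = 1 := by rw [← mul_pow, hE, one_pow]
  split_ifs <;> first | (exfalso; omega) | (simp only [map_zero, map_one]; ring1) |
    (simp only [map_zero, map_one]; linear_combination -hE2)

noncomputable def BB (n a : ℕ) (ha : a ≠ 0) (j : ℕ) : PowerSeries ℚ :=
  PowerSeries.expand a ha (PowerSeries.mk fun b => ((2 * b + 2 - j : ℕ) : ℚ) ^ n)

theorem box' (N a : ℕ) (ha : a ≠ 0) (x y : Bool) (E : PowerSeries ℚ)
    (hE : E * (1 - PowerSeries.X ^ a) = 1) :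
    (∑ c : Config (N + 1), ((PowerSeries.X : PowerSeries ℚ) ^ a) ^ (x.toNat * bL c + ∑ k, dd c k + y.toNat * bR c))
      * E ^ (N + 2) = BB (N + 1) a ha (x.toNat + y.toNat) := by
  have h := congrArg (PowerSeries.expand a ha) (box N x y)
  have h1 : PowerSeries.expand a ha HH = E := by
    have h2 := congrArg (PowerSeries.expand a ha) (PowerSeries.mk_one_mul_one_sub_eq_one ℚ)
    rw [map_mul, map_sub, PowerSeries.expand_X, map_one] at h2
    rw [HH]
    linear_combination (-PowerSeries.expand a ha (PowerSeries.mk 1)) * hE + E * h2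
  rw [map_mul, map_sum, map_pow, h1] at h
  simp only [map_pow, PowerSeries.expand_X] at h
  rw [h, BB]
  simp only [Nat.sub_sub]

theorem assembly (t a : ℕ) (ha : a ≠ 0) (z ph PL PR : PowerSeries ℚ) (hz : z = PowerSeries.X ^ a)
    (hph : ph = ((phi a : ℚ[X]) : PowerSeries ℚ)) (hPL : PL = ((TP a : ℚ[X]) : PowerSeries ℚ))
    (hPR : PR = ((TP (a + 1) : ℚ[X]) : PowerSeries ℚ)) :
    ∑ c : Config (t + 3),
      (pairS (LL a c) * ((∏ k : Fin t, (PowerSeries.X ^ (1 + a * dd c k.castSucc.succ) * HH)) *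
        pairS (RR a c))) =
    PowerSeries.X ^ (t + 3) * ph ^ t *
      ((ph ^ 2 - PL * (1 + z)) * (ph ^ 2 - PR * (1 + z)) * BB (t + 3) a ha 0 +
       ((ph ^ 2 - PL * (1 + z)) * (2 * PR) + (2 * PL) * (ph ^ 2 - PR * (1 + z))) * BB (t + 3) a ha 1 +
       (2 * PL) * (2 * PR) * BB (t + 3) a ha 2) := by
  have := charZero_ps
  have hH : HH * (1 - PowerSeries.X) = 1 := PowerSeries.mk_one_mul_one_sub_eq_one ℚ
  obtain ⟨E, hE⟩ : ∃ E : PowerSeries ℚ, E * (1 - z) = 1 := by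
    refine ⟨PowerSeries.expand a ha HH, ?_⟩
    have h2 := congrArg (PowerSeries.expand a ha) hH
    rw [map_mul, map_sub, PowerSeries.expand_X, map_one] at h2
    rw [hz, h2]
  have hpm : (1 - PowerSeries.X) * ph = 1 - z := by
    have := congrArg (fun p : ℚ[X] => (p : PowerSeries ℚ)) (phi_mul a)
    simp only [Polynomial.coe_mul, Polynomial.coe_sub, Polynomial.coe_one, Polynomial.coe_X,
      Polynomial.coe_pow] at this
    rw [hph, hz, this]
  have hHE : HH = ph * E := by
    linear_combination (-HH) * hE + (-HH * E) * hpm + (ph * E) * hH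
  let K : Config (t + 3) → ℕ := fun c => ∑ k : Fin t, dd c k.castSucc.succ
  have hprod : ∀ c : Config (t + 3), (∏ k : Fin t, ((PowerSeries.X : PowerSeries ℚ) ^ (1 + a * dd c k.castSucc.succ) * HH))
      = PowerSeries.X ^ t * z ^ K c * (ph * E) ^ t := by
    intro c
    simp only [pow_add, pow_one, Finset.prod_mul_distrib, Finset.prod_const, Finset.card_univ,
      Fintype.card_fin, pow_mul, ← hz, Finset.prod_pow_eq_pow_sum, hHE, K, mul_pow]
  have hx : ∀ d : ℕ, (PowerSeries.X : PowerSeries ℚ) ^ (1 + a * d) = PowerSeries.X * z ^ d := by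
    intro d; rw [pow_add, pow_mul, pow_one, hz]
  have e1 : (Fin.succ 0 : Fin (t + 3)) = 1 := rfl
  have e0 : (Fin.castSucc 0 : Fin (t + 3)) = 0 := rfl
  have el : (Fin.last (t + 1)).succ = Fin.last (t + 2) := rfl
  -- left flip
  have ne10 : (1 : Fin (t + 3)) ≠ 0 := by simp
  have nel : (Fin.last (t + 1)).castSucc ≠ Fin.last (t + 2) := (Fin.castSucc_lt_last _).ne
  have step1 : ∑ c : Config (t + 3),
      (pairS (LL a c) * ((∏ k : Fin t, (PowerSeries.X ^ (1 + a * dd c k.castSucc.succ) * HH)) *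
        pairS (RR a c))) = ∑ c : Config (t + 3),
      (PowerSeries.X ^ 2 * E ^ 2 * ((ph ^ 2 - PL * (1 + z)) * z ^ dd c 0 + 2 * PL * z ^ (bL c + dd c 0))) *
      ((∏ k : Fin t, (PowerSeries.X ^ (1 + a * dd c k.castSucc.succ) * HH)) * pairS (RR a c)) := by
    refine flip_sum (flipC 0) (flipC_inv 0) _ _ _ ?_ ?_
    · intro c
      have h := midL_id E z hE (ww c 0) (ww c 1) (ww_ne_zero _ _) ((ww_inj c).ne ne10.symm)
        (ww_ne_neg c _ _ ne10.symm)
      have f0 := ww_flip_self 0 c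
      have f1 := ww_flip_ne 0 1 c ne10
      rw [pairS_LL, pairS_LL, ← hPL, hx, hx, hHE]
      simp only [mL, dd, bL, e0, e1, f0, f1]
      linear_combination (-PowerSeries.X ^ 2 * PL) * h
    · intro c
      have f : ∀ k : Fin (t + 2), ww (flipC 0 c) k.succ = ww c k.succ := fun k =>
        ww_flip_ne _ _ _ (Fin.succ_ne_zero k)
      have fl : ww (flipC 0 c) (Fin.last (t + 2)) = ww c (Fin.last (t + 2)) := f (Fin.last (t + 1))
      have fl' : ww (flipC 0 c) (Fin.last (t + 1)).castSucc = ww c (Fin.last (t + 1)).castSucc :=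
        f (Fin.last t).castSucc
      have fd : ∀ k : Fin (t + 1), dd (flipC 0 c) k.succ = dd c k.succ := by
        intro k
        simp only [dd, f, ← Fin.succ_castSucc]
      have fdl : dd (flipC 0 c) (Fin.last (t + 1)) = dd c (Fin.last (t + 1)) := fd (Fin.last t)
      simp only [pairS_RR, fd, fdl, mR, fl, fl']
  have step2 : ∑ c : Config (t + 3),
      (PowerSeries.X ^ 2 * E ^ 2 * ((ph ^ 2 - PL * (1 + z)) * z ^ dd c 0 + 2 * PL * z ^ (bL c + dd c 0))) *
      ((∏ k : Fin t, (PowerSeries.X ^ (1 + a * dd c k.castSucc.succ) * HH)) * pairS (RR a c)) =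
      ∑ c : Config (t + 3),
      (PowerSeries.X * E ^ 2 * ((ph ^ 2 - PR * (1 + z)) * z ^ dd c (Fin.last (t + 1)) +
        2 * PR * z ^ (bR c + dd c (Fin.last (t + 1))))) *
      ((PowerSeries.X ^ 2 * E ^ 2 * ((ph ^ 2 - PL * (1 + z)) * z ^ dd c 0 + 2 * PL * z ^ (bL c + dd c 0))) *
      (∏ k : Fin t, (PowerSeries.X ^ (1 + a * dd c k.castSucc.succ) * HH))) := by
    refine Eq.trans ?_ (flip_sum (flipC (Fin.last (t + 2))) (flipC_inv _)
      (fun c => pairS (RR a c)) _ _ ?_ ?_)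
    · refine Finset.sum_congr rfl fun c _ => ?_
      ring
    · intro c
      have h := midR_id E z hE (ww c (Fin.last (t + 2))) (ww c (Fin.last (t + 1)).castSucc)
        (ww_ne_zero _ _) ((ww_inj c).ne nel.symm) (ww_ne_neg c _ _ nel.symm)
      have f0 := ww_flip_self (Fin.last (t + 2)) c
      have f1 := ww_flip_ne (Fin.last (t + 2)) _ c nel
      simp only [pairS_RR, ← hPR, hx, hHE]
      simp only [mR, dd, bR, el, f0, f1]
      linear_combination (-PowerSeries.X * PR) * h
    · intro c
      have f : ∀ k : Fin (t + 2), ww (flipC (Fin.last (t + 2)) c) k.castSucc = ww c k.castSucc := fun k =>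
        ww_flip_ne _ _ _ (Fin.castSucc_lt_last k).ne
      have fd : ∀ k : Fin (t + 1), dd (flipC (Fin.last (t + 2)) c) k.castSucc = dd c k.castSucc := by
        intro k
        simp only [dd, f, Fin.succ_castSucc]
      have f0 : ww (flipC (Fin.last (t + 2)) c) 0 = ww c 0 := f 0
      have fd0 : dd (flipC (Fin.last (t + 2)) c) 0 = dd c 0 := fd 0
      simp only [fd0, bL, f0, Fin.succ_castSucc, fd]
  rw [step1, step2]
  have hsum : ∀ c : Config (t + 3), ∑ k, dd c k = dd c 0 + (K c + dd c (Fin.last (t + 1))) := by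
    intro c
    rw [Fin.sum_univ_succ, Fin.sum_univ_castSucc]; rfl
  have b00 := box' (t + 2) a ha false false E (by rw [← hz]; exact hE)
  have b01 := box' (t + 2) a ha false true E (by rw [← hz]; exact hE)
  have b10 := box' (t + 2) a ha true false E (by rw [← hz]; exact hE)
  have b11 := box' (t + 2) a ha true true E (by rw [← hz]; exact hE)
  simp only [Bool.toNat_false, Bool.toNat_true, zero_mul, one_mul, zero_add, add_zero, ← hz, hsum]
    at b00 b01 b10 b11
  rw [← b00, ← b11, show (2 * PL) * (2 * PR) = (2 * PL) * (2 * PR) from rfl]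
  rw [show ∀ u v w : PowerSeries ℚ, (u + v) * w = u * w + v * w from fun u v w => add_mul u v w]
  nth_rewrite 1 [← b01]
  rw [← b10]
  simp only [Finset.sum_mul, Finset.mul_sum, ← Finset.sum_add_distrib]
  refine Finset.sum_congr rfl fun c _ => ?_
  rw [hprod]
  simp only [pow_add]
  ring

theorem coeff_BB (n a : ℕ) (ha : a ≠ 0) (j : ℕ) (hj : j ≤ 2) (f : ℤ → ℚ)
    (hf : ∀ x : ℤ, f ((2 - j) * a + 2 * x) = (((2 - j) * a + 2 * x : ℤ) : ℚ) ^ n *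
      (if (a : ℤ) ∣ x then 1 else 0)) (G : ℚ[X]) (m : ℕ) (hm : G.natDegree ≤ m) :
    (a : ℚ) ^ n * PowerSeries.coeff m ((G : PowerSeries ℚ) * BB n a ha j) =
      act (X ^ (j * a) * expand ℚ 2 G) f (2 * ((m + a : ℕ) : ℤ)) := by
  rw [act_mul, act_X_pow, act_expand, PowerSeries.coeff_mul, Finset.Nat.sum_antidiagonal_eq_sum_range_succ_mk]
  have hsub : Finset.range (G.natDegree + 1) ⊆ Finset.range (m + 1) := by
    intro x hx; simp only [Finset.mem_range] at *; omega
  rw [Finset.mul_sum]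
  symm
  rw [Finset.sum_subset hsub]
  · refine Finset.sum_congr rfl fun k hk => ?_
    have hk : k ≤ m := by simp only [Finset.mem_range] at hk; omega
    have e : (2 * ((m + a : ℕ) : ℤ) - ((j * a : ℕ) : ℤ) - 2 * k) = (2 - j) * a + 2 * ((m - k : ℕ) : ℤ) := by
      push_cast [hk]; ring
    rw [e, hf, BB, PowerSeries.coeff_expand, Polynomial.coeff_coe]
    by_cases hd : a ∣ m - k
    · rw [if_pos hd, if_pos (by exact_mod_cast hd)]
      obtain ⟨b, hb⟩ := hd
      rw [hb, Nat.mul_div_cancel_left _ (Nat.pos_of_ne_zero ha), PowerSeries.coeff_mk,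
        Nat.cast_sub (by omega : j ≤ 2 * b + 2), mul_left_comm ((a : ℚ) ^ n), ← mul_pow, mul_one]
      push_cast
      congr 2
      ring
    · rw [if_neg hd, if_neg (by exact_mod_cast hd)]
      simp
  · intro k _ hk
    rw [Polynomial.coeff_eq_zero_of_natDegree_lt (by simpa using hk), zero_mul]

theorem main_comb (t a m : ℕ) (ha : a ≠ 0) (PL PR aL aR : ℚ[X]) (hPL : PL = TP a)
    (hPR : PR = TP (a + 1)) (haL : aL = alph a PL) (haR : aR = alph a PR) (ham : a ≤ m)
    (h0 : (X ^ (t + 3) * phi a ^ t * (aL * aR)).natDegree ≤ m)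
    (h1 : (X ^ (t + 3) * phi a ^ t * (aL * (2 * PR) + (2 * PL) * aR)).natDegree ≤ m)
    (h2 : (X ^ (t + 3) * phi a ^ t * ((2 * PL) * (2 * PR))).natDegree ≤ m) :
    (a : ℚ) ^ (t + 3 + 1) * (Mcount (t + 3) (2 * m + 1) a : ℚ) =
    (a : ℚ) * (act (expand ℚ 2 (X ^ (t + 3) * phi a ^ t * (aL * aR))) (ef0 (t + 3) a) (2 * ((m + a : ℕ) : ℤ)) +
       act (X ^ (2 * a) * expand ℚ 2 (X ^ (t + 3) * phi a ^ t * ((2 * PL) * (2 * PR)))) (ef0 (t + 3) a) (2 * ((m + a : ℕ) : ℤ)) +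
       act (X ^ a * expand ℚ 2 (X ^ (t + 3) * phi a ^ t * (aL * (2 * PR) + (2 * PL) * aR)))
         (ef1 (t + 3) a) (2 * ((m + a : ℕ) : ℤ))) := by
  have ha' : (a : ℤ) ≠ 0 := by exact_mod_cast ha
  have two : ∀ x : ℤ, (2 * a : ℤ) ∣ 2 * x ↔ (a : ℤ) ∣ x := fun x =>
    Int.mul_dvd_mul_iff_left two_ne_zero
  have c0 := coeff_BB (t + 3) a ha 0 (by omega) (ef0 (t + 3) a) (by
    intro x
    have : (2 * a : ℤ) ∣ (2 - ((0 : ℕ) : ℤ)) * a + 2 * x ↔ (a : ℤ) ∣ x := by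
      rw [← two]; push_cast; exact dvd_add_right (dvd_refl _)
    simp only [ef0, this]) _ m h0
  have c2 := coeff_BB (t + 3) a ha 2 (by omega) (ef0 (t + 3) a) (by
    intro x
    have : (2 * a : ℤ) ∣ (2 - ((2 : ℕ) : ℤ)) * a + 2 * x ↔ (a : ℤ) ∣ x := by
      rw [← two]; push_cast; rw [zero_mul, zero_add]
    simp only [ef0, this]) _ m h2
  have c1 := coeff_BB (t + 3) a ha 1 (by omega) (ef1 (t + 3) a) (by
    intro x
    have : (2 * a : ℤ) ∣ ((2 - ((1 : ℕ) : ℤ)) * a + 2 * x) - a ↔ (a : ℤ) ∣ x := by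
      rw [← two]; push_cast
      rw [show ((1 : ℤ) * a + 2 * x - a) = 2 * x by ring]
    simp only [ef1, this]) _ m h1
  rw [zero_mul, pow_zero, one_mul] at c0
  rw [one_mul] at c1
  rw [← c0, ← c1, ← c2, Mcount_coeff t m a ham, ← map_sum,
    assembly t a ha _ _ _ _ rfl rfl rfl rfl, pow_succ', mul_assoc, ← mul_add, ← mul_add,
    ← map_add, ← map_add]
  congr 3
  subst hPL hPR haL haR
  simp only [alph]
  push_cast
  have c2' : ((2 : ℚ[X]) : PowerSeries ℚ) = 2 := by
    rw [show (2 : ℚ[X]) = C 2 from rfl, Polynomial.coe_C]; rfl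
  simp only [c2']
  ring

theorem shift_final (n a m : ℕ) (ha : a ≠ 0) (hn : 1 ≤ n) (g : ℚ[X]) :
    act (X ^ (2 * n + 2 * a - 2) * g) (fun N : ℤ => (N : ℚ) ^ n) (2 * ((m + a : ℕ) : ℤ)) =
      polysum (X ^ (2 * n - 1) * g) (2 * m + 1) n := by
  rw [polysum_eq_act, act_mul, act_mul, act_X_pow, act_X_pow]
  congr 1
  omega

/-- Lemma 4.4. Formula for the number of points avoiding the
`D_n` deformation `x_i ± x_j = 0, 1, ..., a` together with the coordinate
hyperplanes, for all large odd `q`. -/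
theorem statement8 (n a : ℕ) (hn : 3 ≤ n) (ha : 1 ≤ a) :
    ∃ N : ℕ, ∀ q : ℕ, Odd q → N < q →
      (Even a →
        (a : ℚ) ^ (n + 1) * (Mcount n q a : ℚ) =
          4 * polysum (X ^ (2 * n - 1) * (phi2 a) ^ (n - 3) * (phi2 (a / 2)) ^ 4 *
            (1 + 3 * X ^ 2 - X ^ a + X ^ (a + 2))) q n) ∧
      (Odd a → ∀ h : ℚ[X], (1 + X) * h = 2 - X ^ (a - 1) + X ^ a →
        (a : ℚ) ^ (n + 1) * (Mcount n q a : ℚ) =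
          polysum (X ^ (2 * n - 1) * (phi2 a) ^ (n - 3) * (phi a) ^ 4 * h) q n) := by
  obtain ⟨t, rfl⟩ : ∃ t, n = t + 3 := ⟨n - 3, by omega⟩
  have ha0 : a ≠ 0 := by omega
  refine ⟨2 * (a +
    (X ^ (t + 3) * phi a ^ t * (alph a (TP a) * alph a (TP (a + 1)))).natDegree +
    (X ^ (t + 3) * phi a ^ t * (alph a (TP a) * (2 * TP (a + 1)) +
      (2 * TP a) * alph a (TP (a + 1)))).natDegree +
    (X ^ (t + 3) * phi a ^ t * ((2 * TP a) * (2 * TP (a + 1)))).natDegree) + 1, ?_⟩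
  rintro q ⟨m, rfl⟩ hq
  have key := main_comb t a m ha0 _ _ _ _ rfl rfl rfl rfl (by omega) (by omega) (by omega) (by omega)
  rw [key]
  refine ⟨fun hev => ?_, fun hod h hh => ?_⟩
  · obtain ⟨b, hb⟩ := hev
    obtain ⟨b', rfl⟩ : ∃ b', b = b' + 1 := ⟨b - 1, by omega⟩
    have hab : a = 2 * (b' + 1) := by omega
    rw [even_final t b' (m + a) (b' + 1) a (t + 3) rfl hab rfl _ _ _ _
      (by rw [hab]; exact TP_even b') (by rw [hab]; exact TP_odd (b' + 1)) rfl rfl,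
      shift_final _ _ _ ha0 (by omega), show a / 2 = b' + 1 by omega, Nat.add_sub_cancel]
    simp only [mul_assoc]
  · obtain ⟨b, hb⟩ := hod
    rw [odd_final t (m + a) b a (t + 3) hb rfl _ _ _ _
      (by rw [hb]; exact TP_odd b) (by rw [hb]; exact TP_even b) rfl rfl h hh,
      shift_final _ _ _ ha0 (by omega), Nat.add_sub_cancel]
    simp only [mul_assoc]
end

section
/- Let n \ge 3 and a \ge 1 be integers. There exists an integer N (depending on n and a) such that for every odd integer q > N the following holds. If a is even, writing g(y) := y^{2n-1} \cdot (1 + y^2) \cdot (1 + y^2 + ... + y^{2a-2})^{n-3} \cdot (1 + y^2 + ... + y^{a-2})^4 = \sum_k g_k y^k, then a^{n+1} \cdot N_D(n,q,0,a) = 8 \sum_k g_k (q-k)^n. If a is odd, writing g(y) := y^{2n-2} \cdot (1 + y^2 + ... + y^{2a-2})^{n-3} \cdot (1 + y + ... + y^{a-1})^4 = \sum_k g_k y^k, then a^{n+1} \cdot N_D(n,q,0,a) = \sum_k g_k (q-k)^n. -/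
open Polynomial

namespace DCount

variable {N : ℕ}

/-- Values of the simple affine functionals of type `D`. -/
def gap (p : Fin (N + 3) → ℤ) (K : ℤ) (i : Fin (N + 4)) : ℤ :=
  if i.val = 0 then p 0 + p 1
  else if h : i.val < N + 3 then p ⟨i.val, h⟩ - p ⟨i.val - 1, by omega⟩
  else K - p ⟨N + 2, by omega⟩ - p ⟨N + 1, by omega⟩

/-- Marks of the affine diagram. -/
def cc (i : Fin (N + 4)) : ℕ :=
  if i.val = 0 ∨ i.val = 1 ∨ i.val = N + 2 ∨ i.val = N + 3 then 1 else 2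

lemma gap_zero (p : Fin (N + 3) → ℤ) (K : ℤ) (h : 0 < N + 4) :
    gap p K ⟨0, h⟩ = p 0 + p 1 := by simp [gap]

lemma gap_mid (p : Fin (N + 3) → ℤ) (K : ℤ) (i : ℕ) (h : i + 1 < N + 3) :
    gap p K ⟨i + 1, by omega⟩ = p ⟨i + 1, h⟩ - p ⟨i, by omega⟩ := by
  simp [gap, h]

lemma gap_last (p : Fin (N + 3) → ℤ) (K : ℤ) (h : N + 3 < N + 4) :
    gap p K ⟨N + 3, h⟩ = K - p ⟨N + 2, by omega⟩ - p ⟨N + 1, by omega⟩ := by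
  simp [gap]

lemma gap_forall (p : Fin (N + 3) → ℤ) (K : ℤ) (R : Fin (N + 4) → ℤ → Prop) :
    (∀ i, R i (gap p K i)) ↔
      R ⟨0, by omega⟩ (p 0 + p 1) ∧
      (∀ (i : ℕ) (h : i + 1 < N + 3),
        R ⟨i + 1, by omega⟩ (p ⟨i + 1, h⟩ - p ⟨i, by omega⟩)) ∧
      R ⟨N + 3, by omega⟩ (K - p ⟨N + 2, by omega⟩ - p ⟨N + 1, by omega⟩) := by
  constructor
  · intro H
    refine ⟨?_, ?_, ?_⟩
    · have := H ⟨0, by omega⟩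
      rwa [gap_zero] at this
    · intro i h
      have := H ⟨i + 1, by omega⟩
      rwa [gap_mid p K i h] at this
    · have := H ⟨N + 3, by omega⟩
      rwa [gap_last] at this
  · rintro ⟨h0, h1, h2⟩ ⟨i, hi⟩
    rcases i with _ | i
    · rw [gap_zero]; exact h0
    · by_cases h : i + 1 < N + 3
      · rw [gap_mid p K i h]; exact h1 i h
      · obtain rfl : i = N + 2 := by omega
        rw [gap_last]; exact h2

lemma gap_lin (M K : ℤ) (p w : Fin (N + 3) → ℤ) (i : Fin (N + 4)) :
    gap (fun j => M * p j - w j) (M * K) i = M * gap p K i - gap w 0 i := by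
  unfold gap
  split_ifs <;> ring

lemma sum_split (f : ℕ → ℤ) :
    ∑ i : Fin (N + 4), f i.val =
      f 0 + f 1 + (∑ i ∈ Finset.range N, f (i + 2)) + f (N + 2) + f (N + 3) := by
  rw [Fin.sum_univ_eq_sum_range (fun i => f i), Finset.sum_range_succ, Finset.sum_range_succ,
    Finset.sum_range_succ', Finset.sum_range_succ']
  ring

lemma sum_cc_split (f : Fin (N + 4) → ℤ) :
    ∑ i : Fin (N + 4), (cc i : ℤ) * f i =
      f ⟨0, by omega⟩ + f ⟨1, by omega⟩ +
      2 * (∑ i : Fin N, f ⟨i.val + 2, by omega⟩) + f ⟨N + 2, by omega⟩ + f ⟨N + 3, by omega⟩ := by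
  have h := sum_split (N := N) (fun i => if h : i < N + 4 then (cc ⟨i, h⟩ : ℤ) * f ⟨i, h⟩ else 0)
  have e1 : ∑ i : Fin (N + 4), (fun i => if h : i < N + 4 then (cc ⟨i, h⟩ : ℤ) * f ⟨i, h⟩ else 0)
      i.val = ∑ i : Fin (N + 4), (cc i : ℤ) * f i := by
    apply Finset.sum_congr rfl
    intro i _
    simp
  rw [e1] at h
  rw [h, ← Fin.sum_univ_eq_sum_range
    (fun i => if h : i + 2 < N + 4 then (cc ⟨i + 2, h⟩ : ℤ) * f ⟨i + 2, h⟩ else 0)]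
  have e2 : ∀ i : Fin N, (if h : i.val + 2 < N + 4 then
      (cc ⟨i.val + 2, h⟩ : ℤ) * f ⟨i.val + 2, h⟩ else 0) = 2 * f ⟨i.val + 2, by omega⟩ := by
    intro i
    have hi := i.2
    rw [dif_pos (by omega)]
    simp only [cc]
    rw [if_neg (by omega)]
    norm_num
  rw [Finset.sum_congr rfl (fun i _ => e2 i), ← Finset.mul_sum]
  simp [cc]

lemma sum_gap (p : Fin (N + 3) → ℤ) (K : ℤ) :
    ∑ i : Fin (N + 4), (cc i : ℤ) * gap p K i = K := by
  rw [sum_cc_split, gap_zero, gap_mid p K 0 (by omega), gap_mid p K (N + 1) (by omega), gap_last]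
  have key : ∀ t : ℕ, (ht : t ≤ N) → ∑ i : Fin t, gap p K ⟨i.val + 2, by omega⟩ =
      p ⟨t + 1, by omega⟩ - p ⟨1, by omega⟩ := by
    intro t
    induction t with
    | zero => intro _; simp
    | succ t ih =>
      intro ht
      rw [Fin.sum_univ_castSucc]
      have h1 := ih (by omega)
      have h2 := gap_mid p K (t + 1) (by omega)
      simp only [Fin.val_castSucc, Fin.val_last]
      rw [h1]
      erw [h2]
      ring
  rw [key N le_rfl]
  have e0 : p ⟨0, by omega⟩ = p 0 := rfl
  have e1 : p ⟨0 + 1, by omega⟩ = p 1 := rfl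
  have e3 : p ⟨N + 1 + 1, by omega⟩ = p ⟨N + 2, by omega⟩ := rfl
  rw [e0, e1, e3]
  ring

lemma card_two {α : Type*} (A S : α → Prop) (g : α → α)
    (hA : ∀ a, A a → A (g a)) (hg : ∀ a, A a → g (g a) = a)
    (hS : ∀ a, A a → (S (g a) ↔ ¬ S a)) :
    Nat.card {a // A a} = 2 * Nat.card {a // A a ∧ S a} := by
  classical
  have e : {a // A a} ≃ Bool × {a // A a ∧ S a} :=
    { toFun := fun a => if h : S a.1 then (true, ⟨a.1, a.2, h⟩)
        else (false, ⟨g a.1, hA _ a.2, (hS _ a.2).2 h⟩)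
      invFun := fun b => if b.1 then ⟨b.2.1, b.2.2.1⟩ else ⟨g b.2.1, hA _ b.2.2.1⟩
      left_inv := by
        rintro ⟨a, ha⟩
        by_cases h : S a
        · simp [h]
        · simp [h, hg a ha]
      right_inv := by
        rintro ⟨b, a, ha, hs⟩
        cases b
        · have : ¬ S (g a) := by rw [hS a ha]; simpa using hs
          simp [this, hg a ha]
        · simp [hs] }
  rw [Nat.card_congr e, Nat.card_prod]
  simp

/-- label values -/
def vv (j : Fin (N + 3)) : ℤ := (N : ℤ) + 3 - j.val

lemma vv_pos (j : Fin (N + 3)) : 1 ≤ vv j := by have := j.2; unfold vv; omega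
lemma vv_le (j : Fin (N + 3)) : vv j ≤ N + 3 := by unfold vv; omega
lemma vv_inj {i j : Fin (N + 3)} (h : vv i = vv j) : i = j := by
  unfold vv at h; apply Fin.ext; omega

/-- the perturbed coordinate -/
def yy (s : ℤ) (x : Fin (N + 3) → ℤ) (j : Fin (N + 3)) : ℤ :=
  (2 * N + 7) * (2 * x j + s) - vv j

lemma dvd_small {M z : ℤ} (h : M ∣ z) (h1 : -M < z) (h2 : z < M) : z = 0 :=
  Int.eq_zero_of_abs_lt_dvd h (abs_lt.2 ⟨h1, h2⟩)

lemma yy_ne (s : ℤ) (x : Fin (N + 3) → ℤ) (j : Fin (N + 3)) (k : ℤ) :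
    yy s x j ≠ k * (2 * N + 7) := by
  intro h
  have : (2 * (N : ℤ) + 7) ∣ vv j := ⟨2 * x j + s - k, by unfold yy at h; linarith⟩
  have h1 := vv_pos j
  have h2 := vv_le j
  have := dvd_small this (by omega) (by omega)
  omega

lemma yy_abs_inj (s : ℤ) (x : Fin (N + 3) → ℤ) (i j : Fin (N + 3))
    (h : |yy s x i| = |yy s x j|) : i = j := by
  have hi := vv_pos i
  have hi' := vv_le i
  have hj := vv_pos j
  have hj' := vv_le j
  rcases abs_eq_abs.1 h with h | h
  · have : (2 * (N : ℤ) + 7) ∣ vv i - vv j :=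
      ⟨(2 * x i + s) - (2 * x j + s), by unfold yy at h; linarith⟩
    have := dvd_small this (by omega) (by omega)
    exact vv_inj (by omega)
  · have : (2 * (N : ℤ) + 7) ∣ vv i + vv j :=
      ⟨(2 * x i + s) + (2 * x j + s), by unfold yy at h; linarith⟩
    have := dvd_small this (by omega) (by omega)
    omega

/-- sorted signed perturbed positions -/
def pos (s : ℤ) (σ : Equiv.Perm (Fin (N + 3))) (ε : Fin (N + 3) → ℤˣ) (x : Fin (N + 3) → ℤ)
    (i : Fin (N + 3)) : ℤ := (ε (σ i) : ℤ) * yy s x (σ i)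

/-- alcove condition -/
def DD (k s : ℤ) (σ : Equiv.Perm (Fin (N + 3))) (ε : Fin (N + 3) → ℤˣ)
    (x : Fin (N + 3) → ℤ) : Prop :=
  ∀ i, 0 < gap (pos s σ ε x) ((2 * N + 7) * (2 * k)) i

lemma DD_iff (k s : ℤ) (σ : Equiv.Perm (Fin (N + 3))) (ε : Fin (N + 3) → ℤˣ)
    (x : Fin (N + 3) → ℤ) : DD k s σ ε x ↔
    0 < pos s σ ε x 0 + pos s σ ε x 1 ∧
    (∀ (i : ℕ) (h : i + 1 < N + 3),
      0 < pos s σ ε x ⟨i + 1, h⟩ - pos s σ ε x ⟨i, by omega⟩) ∧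
    0 < (2 * N + 7) * (2 * k) - pos s σ ε x ⟨N + 2, by omega⟩ - pos s σ ε x ⟨N + 1, by omega⟩ :=
  gap_forall _ _ (fun _ z => 0 < z)

lemma units_sq (e : ℤˣ) : (e : ℤ) * e = 1 := by
  rcases Int.units_eq_one_or e with h | h <;> simp [h]

lemma pos_ne (s : ℤ) (σ : Equiv.Perm (Fin (N + 3))) (ε : Fin (N + 3) → ℤˣ)
    (x : Fin (N + 3) → ℤ) (i : Fin (N + 3)) (k : ℤ) : pos s σ ε x i ≠ k * (2 * N + 7) := by
  unfold pos
  rcases Int.units_eq_one_or (ε (σ i)) with h | h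
  · rw [h]; simpa using yy_ne s x (σ i) k
  · rw [h]
    have := yy_ne s x (σ i) (-k)
    intro h2
    apply this
    push_cast at h2
    linarith

lemma pos_abs (s : ℤ) (σ : Equiv.Perm (Fin (N + 3))) (ε : Fin (N + 3) → ℤˣ)
    (x : Fin (N + 3) → ℤ) (i : Fin (N + 3)) : |pos s σ ε x i| = |yy s x (σ i)| := by
  unfold pos
  rcases Int.units_eq_one_or (ε (σ i)) with h | h <;> simp [h]

abbrev Trip (N : ℕ) := Equiv.Perm (Fin (N + 3)) × (Fin (N + 3) → ℤˣ) × (Fin (N + 3) → ℤ)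

def gLow (t : Trip N) : Trip N :=
  (t.1, Function.update t.2.1 (t.1 0) (-t.2.1 (t.1 0)), t.2.2)

def gHigh (k : ℤ) (t : Trip N) : Trip N :=
  (t.1, Function.update t.2.1 (t.1 (Fin.last _)) (-t.2.1 (t.1 (Fin.last _))),
    Function.update t.2.2 (t.1 (Fin.last _))
      (t.2.2 (t.1 (Fin.last _)) - k * t.2.1 (t.1 (Fin.last _))))

lemma gLow_gLow (t : Trip N) : gLow (gLow t) = t := by
  obtain ⟨σ, ε, x⟩ := t
  simp [gLow]

lemma gHigh_gHigh (k : ℤ) (t : Trip N) : gHigh k (gHigh k t) = t := by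
  obtain ⟨σ, ε, x⟩ := t
  simp [gHigh]

lemma pos_gLow (s : ℤ) (t : Trip N) :
    pos s (gLow t).1 (gLow t).2.1 (gLow t).2.2 =
      Function.update (pos s t.1 t.2.1 t.2.2) 0 (-pos s t.1 t.2.1 t.2.2 0) := by
  obtain ⟨σ, ε, x⟩ := t
  ext i
  by_cases h : i = 0
  · subst h; simp [gLow, pos]
  · have : σ i ≠ σ 0 := fun h' => h (σ.injective h')
    simp [gLow, pos, h]

lemma pos_gHigh (k s : ℤ) (t : Trip N) :
    pos s (gHigh k t).1 (gHigh k t).2.1 (gHigh k t).2.2 =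
      Function.update (pos s t.1 t.2.1 t.2.2) (Fin.last _)
        ((2 * N + 7) * (2 * k) - pos s t.1 t.2.1 t.2.2 (Fin.last _)) := by
  obtain ⟨σ, ε, x⟩ := t
  ext i
  by_cases h : i = Fin.last _
  · subst h
    have := units_sq (ε (σ (Fin.last _)))
    simp only [gHigh, pos, yy, Function.update_self, Units.val_neg]
    linear_combination (2 * (N : ℤ) + 7) * 2 * k * this
  · have : σ i ≠ σ (Fin.last _) := fun h' => h (σ.injective h')
    simp [gHigh, pos, yy, h]

lemma DD_gLow (k s : ℤ) (t : Trip N) (h : DD k s t.1 t.2.1 t.2.2) :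
    DD k s (gLow t).1 (gLow t).2.1 (gLow t).2.2 := by
  rw [DD_iff] at h ⊢
  rw [pos_gLow]
  generalize pos s t.1 t.2.1 t.2.2 = P at h
  obtain ⟨h0, h1, h2⟩ := h
  have h10 := h1 0 (by omega)
  have e0 : P ⟨0, by omega⟩ = P 0 := rfl
  have e1 : P ⟨0 + 1, by omega⟩ = P 1 := rfl
  rw [e0, e1] at h10
  refine ⟨?_, ?_, ?_⟩
  · simp; omega
  · intro i hi
    rcases i with _ | i
    · have : (⟨0 + 1, hi⟩ : Fin (N + 3)) = 1 := rfl
      rw [this]; simp; omega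
    · rw [Function.update_of_ne (by simp [Fin.ext_iff]), Function.update_of_ne (by simp [Fin.ext_iff])]
      exact h1 _ hi
  · rw [Function.update_of_ne (by simp [Fin.ext_iff]), Function.update_of_ne (by simp [Fin.ext_iff])]
    exact h2

lemma DD_gHigh (k s : ℤ) (t : Trip N) (h : DD k s t.1 t.2.1 t.2.2) :
    DD k s (gHigh k t).1 (gHigh k t).2.1 (gHigh k t).2.2 := by
  rw [DD_iff] at h ⊢
  rw [pos_gHigh]
  generalize pos s t.1 t.2.1 t.2.2 = P at h
  obtain ⟨h0, h1, h2⟩ := h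
  have h10 := h1 (N + 1) (by omega)
  have e0 : P ⟨N + 2, by omega⟩ = P (Fin.last _) := rfl
  have e1 : P ⟨N + 1 + 1, by omega⟩ = P (Fin.last _) := rfl
  rw [e1] at h10
  rw [e0] at h2
  refine ⟨?_, ?_, ?_⟩
  · rw [Function.update_of_ne (by simp [Fin.ext_iff]), Function.update_of_ne (by simp [Fin.ext_iff])]
    exact h0
  · intro i hi
    by_cases h : i = N + 1
    · subst h
      have : (⟨N + 1 + 1, hi⟩ : Fin (N + 3)) = Fin.last _ := rfl
      rw [this, Function.update_self, Function.update_of_ne (by simp [Fin.ext_iff])]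
      omega
    · rw [Function.update_of_ne (by simp [Fin.ext_iff]; omega),
        Function.update_of_ne (by simp [Fin.ext_iff]; omega)]
      exact h1 _ hi
  · have : (⟨N + 2, by omega⟩ : Fin (N + 3)) = Fin.last _ := rfl
    rw [this, Function.update_self, Function.update_of_ne (by simp [Fin.ext_iff])]
    omega


lemma rep_exists (k : ℕ) (hk : 1 ≤ k) (M s v : ℤ) (hM : 0 < M)
    (hne : ∀ x : ℤ, M * (2 * x + s) - v ≠ k * M) (z : ZMod k) :
    ∃ x : ℤ, (x : ZMod k) = z ∧ |M * (2 * x + s) - v| < k * M := by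
  have : NeZero k := ⟨by omega⟩
  obtain ⟨x0, rfl⟩ : ∃ x0 : ℤ, (x0 : ZMod k) = z := ⟨z.val, by simp⟩
  have hkM : 0 < 2 * (k : ℤ) * M := by positivity
  refine ⟨x0 - k * ((M * (2 * x0 + s) - v + k * M) / (2 * k * M)), by simp, ?_⟩
  have h1 := Int.emod_add_mul_ediv (M * (2 * x0 + s) - v + k * M) (2 * k * M)
  have h2 := Int.emod_nonneg (M * (2 * x0 + s) - v + k * M) hkM.ne'
  have h3 := Int.emod_lt_of_pos (M * (2 * x0 + s) - v + k * M) hkM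
  have h4 := hne (x0 - k * ((M * (2 * x0 + s) - v + k * M) / (2 * k * M)) + k)
  generalize (M * (2 * x0 + s) - v + k * M) / (2 * k * M) = d at *
  generalize (M * (2 * x0 + s) - v + k * M) % (2 * k * M) = r at *
  have h5 : M * (2 * (x0 - k * d) + s) - v = r - k * M := by linarith
  have h6 : r ≠ 0 := by
    rintro rfl
    apply h4
    linarith
  rw [h5, abs_lt]
  have : 0 < r := by omega
  constructor <;> linarith

lemma rep_unique (k : ℕ) (_hk : 1 ≤ k) (M s v : ℤ) (hM : 0 < M) (x y : ℤ)
    (hxy : (x : ZMod k) = (y : ZMod k)) (hx : |M * (2 * x + s) - v| < k * M)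
    (hy : |M * (2 * y + s) - v| < k * M) : x = y := by
  rw [ZMod.intCast_eq_intCast_iff_dvd_sub] at hxy
  rw [abs_lt] at hx hy
  have h1 : M * (y - x) < M * k := by linarith
  have h2 : M * (x - y) < M * k := by linarith
  have h3 := lt_of_mul_lt_mul_left h1 hM.le
  have h4 := lt_of_mul_lt_mul_left h2 hM.le
  have := dvd_small hxy (by linarith) (by linarith)
  linarith

/-- All alcove points, with sign and order data, satisfying `Q`. -/
def AllD (k : ℕ) (s : ℤ) (Q : (Fin (N + 3) → ZMod k) → Prop) (t : Trip N) : Prop :=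
  DD k s t.1 t.2.1 t.2.2 ∧ Q (fun j => (t.2.2 j : ZMod k))

def SLow (s : ℤ) (t : Trip N) : Prop := 0 < pos s t.1 t.2.1 t.2.2 0
def SHigh (k : ℕ) (s : ℤ) (t : Trip N) : Prop :=
  pos s t.1 t.2.1 t.2.2 (Fin.last _) < k * (2 * N + 7)

lemma sorted_facts (k : ℕ) (s : ℤ) (t : Trip N) (h : DD k s t.1 t.2.1 t.2.2)
    (hl : SLow s t) (hh : SHigh k s t) :
    StrictMono (pos s t.1 t.2.1 t.2.2) ∧ (∀ i, 0 < pos s t.1 t.2.1 t.2.2 i) ∧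
    ∀ i, pos s t.1 t.2.1 t.2.2 i < k * (2 * N + 7) := by
  rw [DD_iff] at h
  have hm : StrictMono (pos s t.1 t.2.1 t.2.2) := by
    rw [Fin.strictMono_iff_lt_succ]
    intro i
    have := h.2.1 i.val (by omega)
    have e1 : (⟨i.val + 1, by omega⟩ : Fin (N + 3)) = i.succ := rfl
    have e2 : (⟨i.val, by omega⟩ : Fin (N + 3)) = i.castSucc := rfl
    rw [e1, e2] at this
    omega
  refine ⟨hm, fun i => ?_, fun i => ?_⟩
  · exact lt_of_lt_of_le hl (hm.monotone (Fin.zero_le i))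
  · exact lt_of_le_of_lt (hm.monotone (Fin.le_last i)) hh

lemma DD_of_sorted (k : ℕ) (s : ℤ) (t : Trip N) (hm : StrictMono (pos s t.1 t.2.1 t.2.2))
    (h0 : ∀ i, 0 < pos s t.1 t.2.1 t.2.2 i)
    (h1 : ∀ i, pos s t.1 t.2.1 t.2.2 i < k * (2 * N + 7)) :
    DD k s t.1 t.2.1 t.2.2 := by
  rw [DD_iff]
  refine ⟨?_, ?_, ?_⟩
  · have := h0 0
    have := h0 1
    omega
  · intro i hi
    have := hm (show (⟨i, by omega⟩ : Fin (N + 3)) < ⟨i + 1, hi⟩ by simp [Fin.lt_def])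
    omega
  · have := h1 ⟨N + 2, by omega⟩
    have := h1 ⟨N + 1, by omega⟩
    linarith

lemma master (k : ℕ) (hk : 1 ≤ k) (s : ℤ) (Q : (Fin (N + 3) → ZMod k) → Prop) :
    4 * Nat.card {z // Q z} = Nat.card {t : Trip N // AllD k s Q t} := by
  have hM : (0 : ℤ) < 2 * N + 7 := by positivity
  rw [card_two (AllD k s Q) (SLow s) gLow ?_ (fun t _ => gLow_gLow t) ?_]
  rotate_left
  · rintro t ⟨h1, h2⟩
    exact ⟨DD_gLow _ _ _ h1, h2⟩
  · rintro t _
    unfold SLow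
    rw [pos_gLow, Function.update_self]
    have := pos_ne s t.1 t.2.1 t.2.2 0 0
    omega
  rw [card_two (fun t => AllD k s Q t ∧ SLow s t) (SHigh k s) (gHigh k) ?_
    (fun t _ => gHigh_gHigh _ t) ?_]
  rotate_left
  · rintro t ⟨⟨h1, h2⟩, h3⟩
    refine ⟨⟨DD_gHigh _ _ _ h1, ?_⟩, ?_⟩
    · convert h2 using 2 with j
      simp only [gHigh]
      by_cases hj : j = t.1 (Fin.last _)
      · subst hj; simp
      · rw [Function.update_of_ne hj]
    · unfold SLow at h3 ⊢
      rw [pos_gHigh, Function.update_of_ne (by simp [Fin.ext_iff])]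
      exact h3
  · rintro t _
    unfold SHigh
    rw [pos_gHigh, Function.update_self]
    have := pos_ne s t.1 t.2.1 t.2.2 (Fin.last _) k
    constructor
    · intro h1 h2; linarith
    · intro h1
      have : (k : ℤ) * (2 * N + 7) < pos s t.1 t.2.1 t.2.2 (Fin.last _) :=
        lt_of_le_of_ne (not_lt.1 h1) (Ne.symm this)
      linarith
  rw [← mul_assoc]
  congr 1
  symm
  have hT : ∀ t : Trip N, AllD k s Q t → SLow s t → SHigh k s t →
      ∀ j, |yy s t.2.2 j| < k * (2 * N + 7) := by
    intro t h1 h2 h3 j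
    obtain ⟨a1, a2, a3⟩ := sorted_facts k s t h1.1 h2 h3
    have := pos_abs s t.1 t.2.1 t.2.2 (t.1.symm j)
    rw [Equiv.apply_symm_apply] at this
    rw [← this, abs_of_pos (a2 _)]
    exact a3 _
  refine Nat.card_congr (Equiv.ofBijective
    (fun t => (⟨fun j => (t.1.2.2 j : ZMod k), t.2.1.1.2⟩ : {z // Q z})) ⟨?_, ?_⟩)
  · rintro ⟨⟨σ, ε, x⟩, ⟨h1, h2⟩, h3⟩ ⟨⟨σ', ε', x'⟩, ⟨h1', h2'⟩, h3'⟩ h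
    simp only [Subtype.mk.injEq] at h
    have hx : x = x' := by
      ext j
      exact rep_unique k hk (2 * N + 7) s (vv j) hM (x j) (x' j) (congrFun h j)
        (hT _ h1 h2 h3 j) (hT _ h1' h2' h3' j)
    subst hx
    obtain ⟨a1, a2, -⟩ := sorted_facts k s _ h1.1 h2 h3
    obtain ⟨a1', a2', -⟩ := sorted_facts k s _ h1'.1 h2' h3'
    simp only at a1 a2 a1' a2'
    have hε : ε = ε' := by
      ext j
      have b := a2 (σ.symm j)
      have b' := a2' (σ'.symm j)
      simp only [pos, Equiv.apply_symm_apply] at b b'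
      rcases Int.units_eq_one_or (ε j) with e | e <;> rcases Int.units_eq_one_or (ε' j) with e' | e' <;>
        rw [e] at b ⊢ <;> rw [e'] at b' ⊢ <;> push_cast at b b' ⊢ <;> omega
    subst hε
    have hσ : σ = σ' := by
      set f : Fin (N + 3) → ℤ := fun j => (ε j : ℤ) * yy s x j with hf
      have m1 : Monotone (f ∘ σ) := a1.monotone
      have m2 : Monotone (f ∘ σ') := a1'.monotone
      have := Tuple.unique_monotone m1 m2
      ext1 i
      apply yy_abs_inj s x
      have := congrFun this i
      have c1 := pos_abs s σ ε x i
      have c2 := pos_abs s σ' ε x i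
      rw [← c1, ← c2]
      exact congrArg abs this
    subst hσ
    rfl
  · rintro ⟨z, hz⟩
    have := fun j => rep_exists k hk (2 * N + 7) s (vv j) hM
      (fun x => yy_ne s (fun _ => x) j k) (z j)
    choose x hx1 hx2 using this
    set ε : Fin (N + 3) → ℤˣ := fun j => if 0 < yy s x j then 1 else -1 with hε
    have hεy : ∀ j, (ε j : ℤ) * yy s x j = |yy s x j| := by
      intro j
      simp only [hε]
      split_ifs with h
      · simp [abs_of_pos h]
      · simp [abs_of_nonpos (not_lt.1 h)]
    set f : Fin (N + 3) → ℤ := fun j => |yy s x j| with hf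
    have hfi : Function.Injective f := fun i j h => yy_abs_inj s x i j h
    have hp : pos s (Tuple.sort f) ε x = f ∘ (Tuple.sort f) := by
      ext i
      simp only [pos, hεy, Function.comp, hf]
    have hm : StrictMono (pos s (Tuple.sort f) ε x) := by
      rw [hp]
      exact (Tuple.monotone_sort f).strictMono_of_injective (hfi.comp (Equiv.injective _))
    have h0 : ∀ i, 0 < pos s (Tuple.sort f) ε x i := by
      intro i
      rw [hp]
      have := yy_ne s x (Tuple.sort f i) 0
      simp only [zero_mul] at this
      exact abs_pos.2 this
    have h1 : ∀ i, pos s (Tuple.sort f) ε x i < k * (2 * N + 7) := by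
      intro i
      rw [hp]
      exact hx2 _
    have hz' : (fun j => (x j : ZMod k)) = z := funext hx1
    refine ⟨⟨(Tuple.sort f, ε, x), ⟨⟨DD_of_sorted k s _ hm h0 h1, ?_⟩, h0 0⟩, h1 _⟩, ?_⟩
    · simpa [hz'] using hz
    · simpa using hz'


/-- signed positions (doubled) -/
def pp (s : ℤ) (σ : Equiv.Perm (Fin (N + 3))) (ε : Fin (N + 3) → ℤˣ) (x : Fin (N + 3) → ℤ)
    (i : Fin (N + 3)) : ℤ := (ε (σ i) : ℤ) * (2 * x (σ i) + s)

/-- the signed word -/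
def ww (σ : Equiv.Perm (Fin (N + 3))) (ε : Fin (N + 3) → ℤˣ) (i : Fin (N + 3)) : ℤ :=
  (ε (σ i) : ℤ) * vv (σ i)

/-- ascents of the signed word -/
def asc (σ : Equiv.Perm (Fin (N + 3))) (ε : Fin (N + 3) → ℤˣ) (i : Fin (N + 4)) : Prop :=
  0 < gap (ww σ ε) 0 i

lemma pos_eq (s : ℤ) (σ : Equiv.Perm (Fin (N + 3))) (ε : Fin (N + 3) → ℤˣ)
    (x : Fin (N + 3) → ℤ) :
    pos s σ ε x = fun i => (2 * N + 7) * pp s σ ε x i - ww σ ε i := by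
  ext i
  simp only [pos, pp, ww, yy]
  ring

lemma ww_bd (σ : Equiv.Perm (Fin (N + 3))) (ε : Fin (N + 3) → ℤˣ) (i : Fin (N + 3)) :
    -((N : ℤ) + 3) ≤ ww σ ε i ∧ ww σ ε i ≤ N + 3 := by
  unfold ww
  have h1 := vv_pos (σ i)
  have h2 := vv_le (σ i)
  rcases Int.units_eq_one_or (ε (σ i)) with h | h <;> rw [h] <;> push_cast <;> constructor <;>
    linarith

lemma gap_ww_bd (σ : Equiv.Perm (Fin (N + 3))) (ε : Fin (N + 3) → ℤˣ) (i : Fin (N + 4)) :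
    -(2 * (N : ℤ) + 7) < gap (ww σ ε) 0 i ∧ gap (ww σ ε) 0 i < 2 * N + 7 := by
  have h := ww_bd σ ε
  revert i
  apply (gap_forall (ww σ ε) 0 (fun _ z => -(2 * (N : ℤ) + 7) < z ∧ z < 2 * N + 7)).2
  refine ⟨?_, fun i hi => ?_, ?_⟩
  · have := h 0; have := h 1; omega
  · have := h ⟨i, by omega⟩; have := h ⟨i + 1, hi⟩; omega
  · have := h ⟨N + 1, by omega⟩; have := h ⟨N + 2, by omega⟩; omega

lemma ww_add_ne (σ : Equiv.Perm (Fin (N + 3))) (ε : Fin (N + 3) → ℤˣ) (b c : Fin (N + 3))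
    (hbc : b ≠ c) (e f : ℤˣ) : (e : ℤ) * ww σ ε b - f * ww σ ε c ≠ 0 := by
  intro h
  have h1 := vv_pos (σ b)
  have h2 := vv_pos (σ c)
  have h3 : vv (σ b) ≠ vv (σ c) := fun h => hbc (σ.injective (vv_inj h))
  unfold ww at h
  rcases Int.units_eq_one_or (ε (σ b)) with h4 | h4 <;>
  rcases Int.units_eq_one_or (ε (σ c)) with h5 | h5 <;>
  rcases Int.units_eq_one_or e with h6 | h6 <;>
  rcases Int.units_eq_one_or f with h7 | h7 <;>
  rw [h4, h5, h6, h7] at h <;> push_cast at h <;> omega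

open Classical in
lemma DD_iff_asc (k s : ℤ) (σ : Equiv.Perm (Fin (N + 3))) (ε : Fin (N + 3) → ℤˣ)
    (x : Fin (N + 3) → ℤ) (m : Fin (N + 4) → ℤ)
    (hm : ∀ i, gap (pp s σ ε x) (2 * k) i = 2 * m i) :
    DD k s σ ε x ↔ ∀ i, (if asc σ ε i then (1 : ℤ) else 0) ≤ m i := by
  unfold DD
  rw [pos_eq]
  apply forall_congr'
  intro i
  rw [gap_lin, hm]
  have hb := gap_ww_bd σ ε i
  have hM : (0 : ℤ) < 2 * N + 7 := by positivity
  have hne : gap (ww σ ε) 0 i ≠ 0 := by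
    have : ∀ i, gap (ww σ ε) 0 i ≠ 0 := by
      apply (gap_forall (ww σ ε) 0 (fun _ z => z ≠ 0)).2
      refine ⟨?_, fun i hi => ?_, ?_⟩
      · have := ww_add_ne σ ε 0 1 (by simp) 1 (-1)
        push_cast at this; intro h; apply this; linarith
      · have := ww_add_ne σ ε ⟨i + 1, hi⟩ ⟨i, by omega⟩ (by simp [Fin.ext_iff]) 1 1
        push_cast at this; intro h; apply this; linarith
      · have := ww_add_ne σ ε ⟨N + 2, by omega⟩ ⟨N + 1, by omega⟩ (by simp [Fin.ext_iff]) (-1) 1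
        push_cast at this; intro h; apply this; linarith
    exact this i
  unfold asc
  split_ifs with h
  · constructor
    · intro h2
      by_contra h3
      have : m i ≤ 0 := by omega
      nlinarith
    · intro h2
      nlinarith
  · have h' : gap (ww σ ε) 0 i < 0 := by omega
    constructor
    · intro h2
      by_contra h3
      have : m i ≤ -1 := by omega
      nlinarith
    · intro h2
      nlinarith

lemma units_two (e : ℤˣ) (z : ℤ) : (2 : ℤ) ∣ e * z - z := by
  rcases Int.units_eq_one_or e with h | h <;> rw [h] <;> push_cast
  · simp
  · exact ⟨-z, by ring⟩

lemma gap_pp_even (k s : ℤ) (σ : Equiv.Perm (Fin (N + 3))) (ε : Fin (N + 3) → ℤˣ)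
    (x : Fin (N + 3) → ℤ) (i : Fin (N + 4)) : (2 : ℤ) ∣ gap (pp s σ ε x) (2 * k) i := by
  have h : ∀ i, ∃ t, pp s σ ε x i = 2 * t + s := by
    intro i
    obtain ⟨t, ht⟩ := units_two (ε (σ i)) (2 * x (σ i) + s)
    exact ⟨t + x (σ i), by unfold pp; linarith⟩
  revert i
  apply (gap_forall (pp s σ ε x) (2 * k) (fun _ z => (2 : ℤ) ∣ z)).2
  refine ⟨?_, fun i hi => ?_, ?_⟩
  · obtain ⟨t, ht⟩ := h 0; obtain ⟨u, hu⟩ := h 1; omega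
  · obtain ⟨t, ht⟩ := h ⟨i, by omega⟩; obtain ⟨u, hu⟩ := h ⟨i + 1, hi⟩; omega
  · obtain ⟨t, ht⟩ := h ⟨N + 1, by omega⟩; obtain ⟨u, hu⟩ := h ⟨N + 2, by omega⟩; omega

/-- gap coordinates -/
def mm (k s : ℤ) (σ : Equiv.Perm (Fin (N + 3))) (ε : Fin (N + 3) → ℤˣ)
    (x : Fin (N + 3) → ℤ) (i : Fin (N + 4)) : ℤ := gap (pp s σ ε x) (2 * k) i / 2

lemma gap_eq_mm (k s : ℤ) (σ : Equiv.Perm (Fin (N + 3))) (ε : Fin (N + 3) → ℤˣ)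
    (x : Fin (N + 3) → ℤ) (i : Fin (N + 4)) :
    gap (pp s σ ε x) (2 * k) i = 2 * mm k s σ ε x i := by
  unfold mm
  have := gap_pp_even k s σ ε x i
  omega

/-- the lattice of gap vectors -/
def Lat (k s : ℤ) (m : Fin (N + 4) → ℤ) : Prop :=
  ∑ i, (cc i : ℤ) * m i = k ∧ (2 : ℤ) ∣ m 0 + m 1 - s

lemma mm_lat (k s : ℤ) (σ : Equiv.Perm (Fin (N + 3))) (ε : Fin (N + 3) → ℤˣ)
    (x : Fin (N + 3) → ℤ) : Lat k s (mm k s σ ε x) := by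
  constructor
  · have := sum_gap (pp s σ ε x) (2 * k)
    simp only [gap_eq_mm] at this
    have e : ∀ i : Fin (N + 4), (cc i : ℤ) * (2 * mm k s σ ε x i) =
      2 * ((cc i : ℤ) * mm k s σ ε x i) := fun i => by ring
    simp only [e, ← Finset.mul_sum] at this
    omega
  · have h0 := gap_eq_mm k s σ ε x ⟨0, by omega⟩
    have h1 := gap_eq_mm k s σ ε x ⟨0 + 1, by omega⟩
    rw [gap_zero] at h0
    rw [gap_mid _ _ 0 (by omega)] at h1
    have e1 : (⟨0 + 1, by omega⟩ : Fin (N + 3)) = 1 := rfl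
    have e2 : (⟨0, by omega⟩ : Fin (N + 3)) = 0 := rfl
    have e3 : (⟨0 + 1, by omega⟩ : Fin (N + 4)) = 1 := rfl
    have e4 : (⟨0, by omega⟩ : Fin (N + 4)) = 0 := rfl
    rw [e1, e2, e3] at h1
    rw [e4] at h0
    obtain ⟨t, ht⟩ := units_two (ε (σ 1)) (2 * x (σ 1) + s)
    have : pp s σ ε x 1 = 2 * t + (2 * x (σ 1) + s) := by unfold pp; linarith
    omega

lemma gap_inj (K : ℤ) (p p' : Fin (N + 3) → ℤ) (h : ∀ i, gap p K i = gap p' K i) : p = p' := by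
  have h0 := h ⟨0, by omega⟩
  have h1 := h ⟨0 + 1, by omega⟩
  rw [gap_zero, gap_zero] at h0
  rw [gap_mid _ _ 0 (by omega), gap_mid _ _ 0 (by omega)] at h1
  have e1 : (⟨0 + 1, by omega⟩ : Fin (N + 3)) = 1 := rfl
  have e2 : (⟨0, by omega⟩ : Fin (N + 3)) = 0 := rfl
  rw [e1, e2] at h1
  have key : ∀ i : ℕ, (hi : i < N + 3) → p ⟨i, hi⟩ = p' ⟨i, hi⟩ := by
    intro i
    induction i with
    | zero => intro hi; change p 0 = p' 0; omega
    | succ i ih =>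
      intro hi
      have := h ⟨i + 1, by omega⟩
      rw [gap_mid _ _ i hi, gap_mid _ _ i hi, ih (by omega)] at this
      omega
  ext i
  exact key i.1 i.2

lemma mm_inj (k s : ℤ) (σ : Equiv.Perm (Fin (N + 3))) (ε : Fin (N + 3) → ℤˣ) :
    Function.Injective (mm k s σ ε) := by
  intro x x' h
  have h1 : pp s σ ε x = pp s σ ε x' := by
    apply gap_inj (2 * k)
    intro i
    rw [gap_eq_mm, gap_eq_mm, h]
  ext j
  have := congrFun h1 (σ.symm j)
  simp only [pp, Equiv.apply_symm_apply] at this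
  rcases Int.units_eq_one_or (ε j) with h | h <;> rw [h] at this <;> push_cast at this <;> omega

lemma mm_surj (k s : ℤ) (σ : Equiv.Perm (Fin (N + 3))) (ε : Fin (N + 3) → ℤˣ)
    (m : Fin (N + 4) → ℤ) (hm : Lat k s m) : ∃ x, mm k s σ ε x = m := by
  obtain ⟨hsum, hpar⟩ := hm
  let e : ℕ → ℤ := fun i => if h : i < N + 4 then m ⟨i, h⟩ else 0
  let P : Fin (N + 3) → ℤ := fun i => m 0 - m 1 + 2 * ∑ t ∈ Finset.range i.val, e (t + 1)
  have hP : ∀ i, (2 : ℤ) ∣ P i - s := by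
    intro i
    have : P i - s = m 0 + m 1 - s + 2 * (∑ t ∈ Finset.range i.val, e (t + 1) - m 1) := by
      simp only [P]; ring
    rw [this]
    exact dvd_add hpar (dvd_mul_right _ _)
  let x : Fin (N + 3) → ℤ := fun j => ((ε j : ℤ) * P (σ.symm j) - s) / 2
  have hx : pp s σ ε x = P := by
    ext i
    have h1 := units_two (ε (σ i)) (P i)
    have h2 := hP i
    have h3 : 2 * x (σ i) + s = (ε (σ i) : ℤ) * P i := by
      simp only [x, Equiv.symm_apply_apply]
      omega
    unfold pp
    rw [h3, ← mul_assoc, units_sq, one_mul]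
  have hg0 : gap P (2 * k) ⟨0, by omega⟩ = 2 * m ⟨0, by omega⟩ := by
    rw [gap_zero]
    simp only [P]
    have : (⟨0, by omega⟩ : Fin (N + 4)) = 0 := rfl
    rw [this]
    have : e (0 + 1) = m 1 := by simp [e]
    simp [this]
    ring
  have hg1 : ∀ (i : ℕ) (h : i + 1 < N + 3),
      gap P (2 * k) ⟨i + 1, by omega⟩ = 2 * m ⟨i + 1, by omega⟩ := by
    intro i h
    rw [gap_mid P _ i h]
    simp only [P]
    rw [Finset.sum_range_succ]
    have : e (i + 1) = m ⟨i + 1, by omega⟩ := by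
      simp only [e]; rw [dif_pos]
    rw [this]
    ring
  refine ⟨x, ?_⟩
  have hlat := (mm_lat k s σ ε x).1
  have hall : ∀ i : Fin (N + 4), i.val < N + 3 → mm k s σ ε x i = m i := by
    rintro ⟨i, hi⟩ h
    simp only at h
    have h1 := gap_eq_mm k s σ ε x ⟨i, hi⟩
    rw [hx] at h1
    rcases i with _ | i
    · rw [hg0] at h1; omega
    · rw [hg1 i h] at h1; omega
  ext i
  by_cases hi : i.val < N + 3
  · exact hall i hi
  · have hi' : i = Fin.last _ := by apply Fin.ext; simp; omega
    subst hi'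
    rw [Fin.sum_univ_castSucc] at hlat hsum
    have : ∀ i : Fin (N + 3), mm k s σ ε x i.castSucc = m i.castSucc := fun i => hall _ i.2
    simp only [this] at hlat
    have hc : cc (Fin.last (N + 3)) = 1 := by simp [cc]
    rw [hc] at hlat hsum
    push_cast at hlat hsum
    linarith

lemma card_fiber (k s : ℤ) (σ : Equiv.Perm (Fin (N + 3))) (ε : Fin (N + 3) → ℤˣ)
    (A : (Fin (N + 3) → ℤ) → Prop) (B : (Fin (N + 4) → ℤ) → Prop)
    (h : ∀ x, A x ↔ B (mm k s σ ε x)) :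
    Nat.card {x // A x} = Nat.card {m : Fin (N + 4) → ℤ // Lat k s m ∧ B m} := by
  refine Nat.card_congr (Equiv.ofBijective
    (fun x => (⟨mm k s σ ε x.1, mm_lat _ _ _ _ _, (h _).1 x.2⟩ :
      {m : Fin (N + 4) → ℤ // Lat k s m ∧ B m})) ⟨?_, ?_⟩)
  · rintro ⟨x, hx⟩ ⟨y, hy⟩ hxy
    simp only [Subtype.mk.injEq] at hxy ⊢
    exact mm_inj k s σ ε hxy
  · rintro ⟨m, hm, hB⟩
    obtain ⟨x, rfl⟩ := mm_surj k s σ ε m hm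
    exact ⟨⟨x, (h x).2 hB⟩, rfl⟩


/-- the type `D` avoidance predicate -/
def AvD (q : ℕ) (a : ℤ) (z : Fin (N + 3) → ZMod q) : Prop :=
  ∀ i j : Fin (N + 3), i < j → Avoids (z i - z j) 0 a ∧ Avoids (z i + z j) 0 a

lemma avoids_int (q : ℕ) (a y : ℤ) (z : ZMod q) (hz : z = (y : ZMod q)) :
    Avoids z 0 a ↔ ∀ κ : ℤ, 0 ≤ κ → κ ≤ a → ¬ (q : ℤ) ∣ y - κ := by
  subst hz
  unfold Avoids
  apply forall_congr'; intro κ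
  apply imp_congr_right; intro _
  apply imp_congr_right; intro _
  rw [ne_eq, eq_comm, ZMod.intCast_eq_intCast_iff_dvd_sub]

/-- signed positions -/
def qq (σ : Equiv.Perm (Fin (N + 3))) (ε : Fin (N + 3) → ℤˣ) (x : Fin (N + 3) → ℤ)
    (i : Fin (N + 3)) : ℤ := (ε (σ i) : ℤ) * x (σ i)

/-- avoidance in terms of signed words -/
def AVp (q : ℕ) (a : ℤ) (p w : Fin (N + 3) → ℤ) : Prop :=
  ∀ b c : Fin (N + 3), b ≠ c → ∀ e f : ℤˣ, 0 < (e : ℤ) * w b - f * w c →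
    ∀ κ : ℤ, 0 ≤ κ → κ ≤ a → ¬ (q : ℤ) ∣ e * p b - f * p c - κ

lemma AvD_iff_vv (q : ℕ) (a : ℤ) (x : Fin (N + 3) → ℤ) :
    AvD q a (fun j => (x j : ZMod q)) ↔ AVp q a x vv := by
  constructor
  · intro h b c hbc e f hu κ h0 h1
    have v1 := vv_pos b
    have v2 := vv_pos c
    rcases lt_or_gt_of_ne hbc with hlt | hlt
    · obtain ⟨g1, g2⟩ := h b c hlt
      rw [avoids_int q a (x b - x c) _ (by push_cast; rfl)] at g1
      rw [avoids_int q a (x b + x c) _ (by push_cast; rfl)] at g2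
      have g1 := g1 κ h0 h1
      have g2 := g2 κ h0 h1
      have v3 : vv c < vv b := by have := Fin.lt_def.1 hlt; unfold vv; omega
      rcases Int.units_eq_one_or e with rfl | rfl <;> rcases Int.units_eq_one_or f with rfl | rfl <;>
        push_cast at hu ⊢
      · simpa using g1
      · simpa using g2
      · omega
      · omega
    · obtain ⟨g1, g2⟩ := h c b hlt
      rw [avoids_int q a (x c - x b) _ (by push_cast; rfl)] at g1
      rw [avoids_int q a (x c + x b) _ (by push_cast; rfl)] at g2
      have g1 := g1 κ h0 h1
      have g2 := g2 κ h0 h1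
      have v3 : vv b < vv c := by have := Fin.lt_def.1 hlt; unfold vv; omega
      rcases Int.units_eq_one_or e with rfl | rfl <;> rcases Int.units_eq_one_or f with rfl | rfl <;>
        push_cast at hu ⊢
      · omega
      · convert g2 using 2; ring
      · omega
      · convert g1 using 2; ring
  · intro h i j hij
    have v1 := vv_pos i
    have v2 := vv_pos j
    have v3 : vv j < vv i := by have := Fin.lt_def.1 hij; unfold vv; omega
    constructor
    · rw [avoids_int q a (x i - x j) _ (by push_cast; rfl)]
      intro κ h0 h1
      have := h i j hij.ne 1 1 (by push_cast; omega) κ h0 h1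
      simpa using this
    · rw [avoids_int q a (x i + x j) _ (by push_cast; rfl)]
      intro κ h0 h1
      have := h i j hij.ne 1 (-1) (by push_cast; omega) κ h0 h1
      simpa using this

lemma AvD_iff_AVp (q : ℕ) (a : ℤ) (σ : Equiv.Perm (Fin (N + 3))) (ε : Fin (N + 3) → ℤˣ)
    (x : Fin (N + 3) → ℤ) :
    AvD q a (fun j => (x j : ZMod q)) ↔ AVp q a (qq σ ε x) (ww σ ε) := by
  rw [AvD_iff_vv]
  constructor
  · intro h b c hbc e f hu κ h0 h1
    have := h (σ b) (σ c) (fun h => hbc (σ.injective h)) (e * ε (σ b)) (f * ε (σ c))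
      (by unfold ww at hu; push_cast; linarith) κ h0 h1
    unfold qq
    convert this using 2
    push_cast; ring
  · intro h j l hjl e f hu κ h0 h1
    have s1 := units_sq (ε j)
    have s2 := units_sq (ε l)
    have key : ∀ u v : ℤ, ((e * ε j : ℤˣ) : ℤ) * (ε j * u) - ((f * ε l : ℤˣ) : ℤ) * (ε l * v) =
        e * u - f * v := by
      intro u v
      push_cast
      linear_combination (e : ℤ) * u * s1 - (f : ℤ) * v * s2
    have := h (σ.symm j) (σ.symm l) (fun h => hjl (σ.symm.injective h)) (e * ε j) (f * ε l)
      (by unfold ww; simp only [Equiv.apply_symm_apply]; rw [key]; exact hu) κ h0 h1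
    unfold qq at this
    simp only [Equiv.apply_symm_apply] at this
    rwa [key] at this

/-- positivity with a margin at ascents -/
def Good (a t u : ℤ) : Prop := 1 ≤ t ∧ (0 < u → a + 1 ≤ t)

def GoodZ (a t u : ℤ) : Prop := (t = 0 ∧ u = 0) ∨ Good a t u

lemma Good.add {a t u t' u' : ℤ} (h : Good a t u) (h' : Good a t' u') :
    Good a (t + t') (u + u') := by
  unfold Good at *
  omega

lemma Good.addZ {a t u t' u' : ℤ} (h : Good a t u) (h' : GoodZ a t' u') :
    Good a (t + t') (u + u') := by
  unfold GoodZ Good at *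
  omega

lemma Good.cast {a t u t' u' : ℤ} (h : Good a t u) (ht : t = t') (hu : u = u') :
    Good a t' u' := by subst ht hu; exact h

section roots
variable {a q : ℤ} {p w : Fin (N + 3) → ℤ}

lemma root1 (h : ∀ i, Good a (gap p q i) (gap w 0 i)) (i j : ℕ) (hij : i ≤ j) (hj : j < N + 3) :
    GoodZ a (p ⟨j, hj⟩ - p ⟨i, by omega⟩) (w ⟨j, hj⟩ - w ⟨i, by omega⟩) := by
  induction j, hij using Nat.le_induction with
  | base => left; constructor <;> ring
  | succ j hij ih =>
    right
    have h1 := h ⟨j + 1, by omega⟩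
    rw [gap_mid p _ j hj, gap_mid w _ j hj] at h1
    exact (h1.addZ (ih (by omega))).cast (by ring) (by ring)

lemma root1' (h : ∀ i, Good a (gap p q i) (gap w 0 i)) (i j : ℕ) (hij : i < j) (hj : j < N + 3) :
    Good a (p ⟨j, hj⟩ - p ⟨i, by omega⟩) (w ⟨j, hj⟩ - w ⟨i, by omega⟩) := by
  have h1 := h ⟨i + 1, by omega⟩
  rw [gap_mid p _ i (by omega), gap_mid w _ i (by omega)] at h1
  exact (h1.addZ (root1 h (i + 1) j hij hj)).cast (by ring) (by ring)

lemma root2 (h : ∀ i, Good a (gap p q i) (gap w 0 i)) (i j : ℕ) (hij : i < j) (hj : j < N + 3) :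
    Good a (p ⟨j, hj⟩ + p ⟨i, by omega⟩) (w ⟨j, hj⟩ + w ⟨i, by omega⟩) := by
  have h0 := h ⟨0, by omega⟩
  rw [gap_zero, gap_zero] at h0
  have e0 : ∀ r : Fin (N + 3) → ℤ, r ⟨0, by omega⟩ = r 0 := fun _ => rfl
  have e1 : ∀ r : Fin (N + 3) → ℤ, r ⟨1, by omega⟩ = r 1 := fun _ => rfl
  rcases Nat.eq_zero_or_pos i with rfl | hi
  · have h1 := root1 h 1 j hij hj
    rw [e1 p, e1 w] at h1
    rw [e0 p, e0 w]
    exact (h0.addZ h1).cast (by ring) (by ring)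
  · have h1 := root1 h 1 i hi (by omega)
    have h2 := root1' h 0 j (by omega) hj
    rw [e1 p, e1 w] at h1
    rw [e0 p, e0 w] at h2
    exact ((h0.addZ h1).add h2).cast (by ring) (by ring)

lemma root3 (h : ∀ i, Good a (gap p q i) (gap w 0 i)) (i j : ℕ) (hij : i < j) (hj : j < N + 3) :
    Good a (q - (p ⟨j, hj⟩ + p ⟨i, by omega⟩)) (-(w ⟨j, hj⟩ + w ⟨i, by omega⟩)) := by
  have h0 := h ⟨N + 3, by omega⟩
  rw [gap_last, gap_last] at h0
  by_cases hj' : j = N + 2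
  · subst hj'
    have h1 := root1 h i (N + 1) (by omega) (by omega)
    exact (h0.addZ h1).cast (by ring) (by ring)
  · have h1 := root1 h j (N + 1) (by omega) (by omega)
    have h2 := root1' h i (N + 2) (by omega) (by omega)
    exact ((h0.addZ h1).add h2).cast (by ring) (by ring)

lemma root4 (h : ∀ i, Good a (gap p q i) (gap w 0 i)) (i j : ℕ) (hij : i < j) (hj : j < N + 3) :
    Good a (q - (p ⟨j, hj⟩ - p ⟨i, by omega⟩)) (-(w ⟨j, hj⟩ - w ⟨i, by omega⟩)) := by
  have h0 := h ⟨N + 3, by omega⟩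
  rw [gap_last, gap_last] at h0
  by_cases hj' : j = N + 2
  · subst hj'
    by_cases hi : i = N + 1
    · subst hi
      have h1 := root2 h 0 (N + 1) (by omega) (by omega)
      have h2 := root1' h 0 (N + 1) (by omega) (by omega)
      exact ((h0.add h1).add h2).cast (by ring) (by ring)
    · have h1 := root2 h i (N + 1) (by omega) (by omega)
      exact (h0.add h1).cast (by ring) (by ring)
  · have h1 := root2 h i (N + 1) (by omega) (by omega)
    have h2 := root1' h j (N + 2) (by omega) (by omega)
    exact ((h0.add h1).add h2).cast (by ring) (by ring)

end roots

lemma good_avoid (q : ℕ) {a t u : ℤ} (h : Good a t u) (h' : Good a (q - t) (-u)) (hu : 0 < u)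
    (κ : ℤ) (h0 : 0 ≤ κ) (h1 : κ ≤ a) : ¬ (q : ℤ) ∣ t - κ := by
  intro hd
  unfold Good at h h'
  have := dvd_small hd (by omega) (by omega)
  omega

lemma good_avoid' (q : ℕ) {a t u : ℤ} (h : Good a t u) (h' : Good a (q - t) (-u)) (hu : 0 < -u)
    (κ : ℤ) (h0 : 0 ≤ κ) (h1 : κ ≤ a) : ¬ (q : ℤ) ∣ -t - κ := by
  intro hd
  have : (q : ℤ) ∣ (q - t) - κ := by
    have h3 := dvd_add (dvd_refl (q : ℤ)) hd
    have h4 : (q : ℤ) + (-t - κ) = (q - t) - κ := by ring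
    rwa [h4] at h3
  exact good_avoid q h' (h.cast (by ring) (by ring)) hu κ h0 h1 this

lemma AVp_of_good (q : ℕ) (a : ℤ) (p w : Fin (N + 3) → ℤ)
    (h : ∀ i, Good a (gap p q i) (gap w 0 i)) : AVp q a p w := by
  rintro ⟨b, hb⟩ ⟨c, hc⟩ hbc e f hu κ h0 h1
  have hbc' : b ≠ c := fun h => hbc (by simp [h])
  rcases lt_or_gt_of_ne hbc' with hlt | hlt
  · have r1 := root1' h b c hlt hc
    have r2 := root2 h b c hlt hc
    have r3 := root3 h b c hlt hc
    have r4 := root4 h b c hlt hc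
    rcases Int.units_eq_one_or e with rfl | rfl <;> rcases Int.units_eq_one_or f with rfl | rfl <;>
      push_cast at hu ⊢
    · convert good_avoid' q r1 r4 (by linarith) κ h0 h1 using 2; ring
    · convert good_avoid q r2 r3 (by linarith) κ h0 h1 using 2; ring
    · convert good_avoid' q r2 r3 (by linarith) κ h0 h1 using 2; ring
    · convert good_avoid q r1 r4 (by linarith) κ h0 h1 using 2; ring
  · have r1 := root1' h c b hlt hb
    have r2 := root2 h c b hlt hb
    have r3 := root3 h c b hlt hb
    have r4 := root4 h c b hlt hb
    rcases Int.units_eq_one_or e with rfl | rfl <;> rcases Int.units_eq_one_or f with rfl | rfl <;>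
      push_cast at hu ⊢
    · convert good_avoid q r1 r4 (by linarith) κ h0 h1 using 2; ring
    · convert good_avoid q r2 r3 (by linarith) κ h0 h1 using 2; ring
    · convert good_avoid' q r2 r3 (by linarith) κ h0 h1 using 2; ring
    · convert good_avoid' q r1 r4 (by linarith) κ h0 h1 using 2; ring

lemma good_of_AV (q : ℕ) {a t u : ℤ} (ha : 0 ≤ a) (ht : 0 ≤ t) (hu : u ≠ 0)
    (h1 : 0 < u → ∀ κ : ℤ, 0 ≤ κ → κ ≤ a → ¬ (q : ℤ) ∣ t - κ)
    (h2 : 0 < -u → ∀ κ : ℤ, 0 ≤ κ → κ ≤ a → ¬ (q : ℤ) ∣ -t - κ) : Good a t u := by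
  rcases lt_or_gt_of_ne hu with h | h
  · have := h2 (by omega) 0 le_rfl ha
    refine ⟨?_, fun h' => by omega⟩
    by_contra hc
    have : t = 0 := by omega
    subst this
    simp at this
  · have h3 : a + 1 ≤ t := by
      by_contra hc
      have := h1 h t ht (by omega)
      simp at this
    exact ⟨by omega, fun _ => h3⟩

lemma good_of_AVp (q : ℕ) (a : ℤ) (ha : 0 ≤ a) (p : Fin (N + 3) → ℤ)
    (σ : Equiv.Perm (Fin (N + 3))) (ε : Fin (N + 3) → ℤˣ)
    (h : AVp q a p (ww σ ε)) (h0 : ∀ i, 0 ≤ gap p q i) (i : Fin (N + 4)) :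
    Good a (gap p q i) (gap (ww σ ε) 0 i) := by
  have hw := ww_add_ne σ ε
  obtain ⟨i, hi⟩ := i
  have h0 := h0 ⟨i, hi⟩
  rcases i with _ | i
  · have n1 : (0 : Fin (N + 3)) ≠ 1 := by simp
    rw [gap_zero] at h0 ⊢
    rw [gap_zero]
    refine good_of_AV q ha h0 ?_ ?_ ?_
    · have := hw 0 1 n1 1 (-1)
      push_cast at this; intro h; apply this; linarith
    · intro hu κ k0 k1
      have := h 0 1 n1 1 (-1) (by push_cast; linarith) κ k0 k1
      convert this using 2; push_cast; ring
    · intro hu κ k0 k1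
      have := h 0 1 n1 (-1) 1 (by push_cast; linarith) κ k0 k1
      convert this using 2; push_cast; ring
  · by_cases hi' : i + 1 < N + 3
    · have n1 : (⟨i + 1, hi'⟩ : Fin (N + 3)) ≠ ⟨i, by omega⟩ := by simp
      rw [gap_mid p _ i hi'] at h0 ⊢
      rw [gap_mid _ _ i hi']
      refine good_of_AV q ha h0 ?_ ?_ ?_
      · have := hw _ _ n1 1 1
        push_cast at this; intro h; apply this; linarith
      · intro hu κ k0 k1
        have := h _ _ n1 1 1 (by push_cast; linarith) κ k0 k1
        convert this using 2; push_cast; ring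
      · intro hu κ k0 k1
        have := h _ _ n1 (-1) (-1) (by push_cast; linarith) κ k0 k1
        convert this using 2; push_cast; ring
    · obtain rfl : i = N + 2 := by omega
      have n1 : (⟨N + 2, by omega⟩ : Fin (N + 3)) ≠ ⟨N + 1, by omega⟩ := by simp
      rw [gap_last] at h0 ⊢
      rw [gap_last]
      refine good_of_AV q ha h0 ?_ ?_ ?_
      · have := hw _ _ n1 (-1) 1
        push_cast at this; intro h; apply this; linarith
      · intro hu κ k0 k1 hd
        have := h _ _ n1 (-1) 1 (by push_cast; linarith) κ k0 k1
        apply this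
        obtain ⟨d, hd⟩ := hd
        exact ⟨d - 1, by push_cast; linarith⟩
      · intro hu κ k0 k1 hd
        have := h _ _ n1 1 (-1) (by push_cast; linarith) κ k0 k1
        apply this
        obtain ⟨d, hd⟩ := hd
        exact ⟨d + 1, by push_cast; linarith⟩

open Classical in
lemma avoid_iff (q : ℕ) (a : ℤ) (ha : 0 ≤ a) (σ : Equiv.Perm (Fin (N + 3)))
    (ε : Fin (N + 3) → ℤˣ) (x : Fin (N + 3) → ℤ) :
    (DD q 0 σ ε x ∧ AvD q a (fun j => (x j : ZMod q))) ↔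
      ∀ i, 1 + (if asc σ ε i then a else 0) ≤ mm q 0 σ ε x i := by
  have hmm : ∀ i, mm q 0 σ ε x i = gap (qq σ ε x) q i := by
    intro i
    have h1 := gap_eq_mm q 0 σ ε x i
    have h2 := gap_lin 2 q (qq σ ε x) 0 i
    have h3 : (fun j => 2 * qq σ ε x j - (0 : Fin (N + 3) → ℤ) j) = pp 0 σ ε x := by
      ext j; simp [qq, pp]; ring
    have h4 : gap (0 : Fin (N + 3) → ℤ) 0 i = 0 := by simp [gap]
    rw [h3, h4] at h2
    omega
  rw [DD_iff_asc _ _ _ _ _ _ (gap_eq_mm q 0 σ ε x), AvD_iff_AVp q a σ ε]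
  have hG : (∀ i, 1 + (if asc σ ε i then a else 0) ≤ mm q 0 σ ε x i) ↔
      ∀ i, Good a (gap (qq σ ε x) q i) (gap (ww σ ε) 0 i) := by
    apply forall_congr'
    intro i
    rw [hmm]
    unfold Good asc
    split_ifs with h <;> omega
  rw [hG]
  constructor
  · rintro ⟨h1, h2⟩
    apply good_of_AVp q a ha _ σ ε h2
    intro i
    have := h1 i
    rw [hmm] at this
    split_ifs at this <;> omega
  · intro h
    refine ⟨?_, AVp_of_good q a _ _ h⟩
    intro i
    rw [hmm]
    have := h i
    unfold Good at this
    split_ifs <;> omega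


lemma cc_pos (i : Fin (N + 4)) : 1 ≤ cc i := by unfold cc; split_ifs <;> omega

lemma finite_sum (k : ℤ) (B : (Fin (N + 4) → ℤ) → Prop)
    (hB : ∀ m, B m → ∑ i, (cc i : ℤ) * m i = k ∧ ∀ i, 0 ≤ m i) :
    Finite {m : Fin (N + 4) → ℤ // B m} := by
  apply Set.Finite.subset (Set.finite_Icc (fun _ => 0) (fun _ => k))
  intro m hm
  obtain ⟨h1, h2⟩ := hB m hm
  refine ⟨fun i => h2 i, fun i => ?_⟩
  rw [← h1]
  have hc : ∀ j : Fin (N + 4), (1 : ℤ) ≤ cc j := fun j => by exact_mod_cast cc_pos j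
  calc m i ≤ (cc i : ℤ) * m i := by nlinarith [hc i, h2 i]
    _ ≤ ∑ j, (cc j : ℤ) * m j :=
      Finset.single_le_sum (f := fun j => (cc j : ℤ) * m j)
        (fun j _ => mul_nonneg (by positivity) (h2 j)) (Finset.mem_univ i)

abbrev Wd (N : ℕ) := Equiv.Perm (Fin (N + 3)) × (Fin (N + 3) → ℤˣ)

open Classical in
/-- the lower bounds at the ascents -/
def Lo (w : Wd N) (m : Fin (N + 4) → ℤ) : Prop :=
  ∀ i, (if asc w.1 w.2 i then (1 : ℤ) else 0) ≤ m i

lemma Lo.nonneg {w : Wd N} {m : Fin (N + 4) → ℤ} (h : Lo w m) (i : Fin (N + 4)) : 0 ≤ m i := by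
  have := h i
  split_ifs at this <;> omega

lemma finite_DD (k s : ℤ) (w : Wd N) (Q : (Fin (N + 3) → ℤ) → Prop) :
    Finite {x // DD k s w.1 w.2 x ∧ Q x} := by
  have hf : Finite {m : Fin (N + 4) → ℤ // Lat k s m ∧ Lo w m} :=
    finite_sum k _ (fun m hm => ⟨hm.1.1, hm.2.nonneg⟩)
  refine Finite.of_injective (β := {m : Fin (N + 4) → ℤ // Lat k s m ∧ Lo w m})
    (fun x => ⟨mm k s w.1 w.2 x.1, mm_lat _ _ _ _ _,
      (DD_iff_asc k s w.1 w.2 x.1 _ (gap_eq_mm _ _ _ _ _)).1 x.2.1⟩) ?_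
  rintro ⟨x, hx⟩ ⟨y, hy⟩ hxy
  simp only [Subtype.mk.injEq] at hxy ⊢
  exact mm_inj k s w.1 w.2 hxy

lemma card_AllD (k : ℕ) (s : ℤ) (Q : (Fin (N + 3) → ZMod k) → Prop) :
    Nat.card {t : Trip N // AllD k s Q t} =
      ∑ w : Wd N, Nat.card {x // DD k s w.1 w.2 x ∧ Q (fun j => (x j : ZMod k))} := by
  have hfin : ∀ w : Wd N, Finite {x // DD k s w.1 w.2 x ∧ Q (fun j => (x j : ZMod k))} :=
    fun w => finite_DD k s w _
  rw [← Nat.card_sigma]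
  refine Nat.card_congr
    { toFun := fun t => ⟨(t.1.1, t.1.2.1), ⟨t.1.2.2, t.2⟩⟩
      invFun := fun u => ⟨(u.1.1, u.1.2, u.2.1), u.2.2⟩
      left_inv := fun _ => rfl
      right_inv := fun _ => rfl }

lemma worp (k : ℕ) (hk : 1 ≤ k) (s : ℤ) :
    ∑ w : Wd N, Nat.card {m : Fin (N + 4) → ℤ // Lat k s m ∧ Lo w m} = 4 * k ^ (N + 3) := by
  have h := master (N := N) k hk s (fun _ => True)
  rw [card_AllD] at h
  have : NeZero k := ⟨by omega⟩
  have h2 : Nat.card {z : Fin (N + 3) → ZMod k // True} = k ^ (N + 3) := by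
    rw [Nat.card_congr (Equiv.subtypeUnivEquiv (fun _ => trivial)), Nat.card_eq_fintype_card]
    simp [ZMod.card]
  rw [h2] at h
  rw [h]
  apply Finset.sum_congr rfl
  intro w _
  symm
  apply card_fiber k s w.1 w.2
  intro x
  rw [and_true]
  exact DD_iff_asc k s w.1 w.2 x _ (gap_eq_mm _ _ _ _ _)

open Classical in
lemma ND_eq (q : ℕ) (hq : 1 ≤ q) (a : ℕ) :
    4 * N_D (N + 3) q 0 a = ∑ w : Wd N, Nat.card {m : Fin (N + 4) → ℤ // Lat q 0 m ∧
      ∀ i, 1 + (if asc w.1 w.2 i then (a : ℤ) else 0) ≤ m i} := by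
  have h := master (N := N) q hq 0 (AvD q a)
  rw [card_AllD] at h
  have h2 : N_D (N + 3) q 0 a = Nat.card {z : Fin (N + 3) → ZMod q // AvD q a z} := by
    unfold N_D AvD
    rw [← Nat.card_coe_set_eq]
    rfl
  rw [h2, h]
  apply Finset.sum_congr rfl
  intro w _
  apply card_fiber q 0 w.1 w.2
  intro x
  exact avoid_iff q a (by positivity) w.1 w.2 x

/-- the shifted weight of a residue vector -/
def JJ {a : ℕ} (r : Fin (N + 4) → Fin a) : ℕ := ∑ i, cc i * (1 + (r i).val)

open Classical in
lemma division (q a : ℕ) (ha : 1 ≤ a) (w : Wd N) :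
    Nat.card {m : Fin (N + 4) → ℤ // Lat q 0 m ∧
      ∀ i, 1 + (if asc w.1 w.2 i then (a : ℤ) else 0) ≤ m i} =
    ∑ r : Fin (N + 4) → Fin a, Nat.card {m : Fin (N + 4) → ℤ //
      ((a : ℤ) * ∑ i, (cc i : ℤ) * m i = (q : ℤ) - JJ r ∧
        (2 : ℤ) ∣ a * (m 0 + m 1) + ((r 0).val + (r 1).val)) ∧ Lo w m} := by
  have hfin : ∀ r : Fin (N + 4) → Fin a, Finite {m : Fin (N + 4) → ℤ //
      ((a : ℤ) * ∑ i, (cc i : ℤ) * m i = (q : ℤ) - JJ r ∧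
        (2 : ℤ) ∣ a * (m 0 + m 1) + ((r 0).val + (r 1).val)) ∧ Lo w m} := by
    intro r
    apply finite_sum (((q : ℤ) - JJ r) / a)
    rintro m ⟨⟨h1, -⟩, h2⟩
    refine ⟨?_, h2.nonneg⟩
    rw [← h1, Int.mul_ediv_cancel_left]
    omega
  rw [← Nat.card_sigma]
  symm
  have ha' : (0 : ℤ) < a := by omega
  refine Nat.card_congr (Equiv.ofBijective (fun u => ⟨fun i => 1 + (u.1 i).val + a * u.2.1 i,
    ⟨?_, ?_⟩, ?_⟩) ⟨?_, ?_⟩)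
  · obtain ⟨r, m, ⟨h1, h2⟩, h3⟩ := u
    simp only
    have e : ∀ i : Fin (N + 4), (cc i : ℤ) * (1 + ((r i).val : ℤ) + a * m i) =
      ((cc i * (1 + (r i).val) : ℕ) : ℤ) + a * ((cc i : ℤ) * m i) := by
      intro i; push_cast; ring
    rw [Finset.sum_congr rfl (fun i _ => e i), Finset.sum_add_distrib, ← Finset.mul_sum, h1,
      ← Nat.cast_sum]
    unfold JJ
    ring
  · obtain ⟨r, m, ⟨h1, h2⟩, h3⟩ := u
    simp only
    obtain ⟨d, hd⟩ := h2
    exact ⟨d + 1, by linarith⟩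
  · obtain ⟨r, m, ⟨h1, h2⟩, h3⟩ := u
    intro i
    simp only
    have := h3 i
    split_ifs at this ⊢ with h
    · nlinarith
    · nlinarith
  · rintro ⟨r, m, h⟩ ⟨r', m', h'⟩ e
    simp only [Subtype.mk.injEq] at e
    have e1 : ∀ i, ((r i).val : ℤ) + a * m i = (r' i).val + a * m' i := by
      intro i; have := congrFun e i; linarith
    have hr : r = r' := by
      ext i
      have := congrArg (· % (a : ℤ)) (e1 i)
      simp only [Int.add_mul_emod_self_left] at this
      have b1 := (r i).2
      have b2 := (r' i).2
      rw [Int.emod_eq_of_lt (by omega) (by omega), Int.emod_eq_of_lt (by omega) (by omega)] at this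
      omega
    subst hr
    have hm : m = m' := by
      ext i
      have := e1 i
      have : (a : ℤ) * m i = a * m' i := by linarith
      exact mul_left_cancel₀ ha'.ne' this
    subst hm
    rfl
  · rintro ⟨m, ⟨h1, h2⟩, h3⟩
    have hr : ∀ i, ((m i - 1) % a).toNat < a := by
      intro i
      have b1 := Int.emod_nonneg (m i - 1) ha'.ne'
      have b2 := Int.emod_lt_of_pos (m i - 1) ha'
      omega
    let r : Fin (N + 4) → Fin a := fun i => ⟨((m i - 1) % a).toNat, hr i⟩
    let m' : Fin (N + 4) → ℤ := fun i => (m i - 1) / a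
    have key : ∀ i, 1 + ((r i).val : ℤ) + a * m' i = m i := by
      intro i
      have b1 := Int.emod_nonneg (m i - 1) ha'.ne'
      have b2 := Int.emod_add_mul_ediv (m i - 1) a
      simp only [r, m']
      rw [Int.toNat_of_nonneg b1]
      linarith
    refine ⟨⟨r, m', ⟨?_, ?_⟩, ?_⟩, ?_⟩
    · have e : ∀ i : Fin (N + 4), (cc i : ℤ) * m i =
        ((cc i * (1 + (r i).val) : ℕ) : ℤ) + a * ((cc i : ℤ) * m' i) := by
        intro i; rw [← key i]; push_cast; ring
      rw [Finset.sum_congr rfl (fun i _ => e i), Finset.sum_add_distrib, ← Finset.mul_sum,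
        ← Nat.cast_sum] at h1
      unfold JJ
      linarith
    · rw [← key 0, ← key 1] at h2
      obtain ⟨d, hd⟩ := h2
      exact ⟨d - 1, by linarith⟩
    · intro i
      have h4 := h3 i
      simp only [m']
      split_ifs at h4 ⊢ with h
      · rw [Int.le_ediv_iff_mul_le ha']; linarith
      · apply Int.ediv_nonneg <;> linarith
    · simp only [Subtype.mk.injEq]
      ext i
      exact key i

lemma count_zero (q a : ℕ) (r : Fin (N + 4) → Fin a) (w : Wd N)
    (h : ¬ (a : ℤ) ∣ (q : ℤ) - JJ r) :
    Nat.card {m : Fin (N + 4) → ℤ //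
      ((a : ℤ) * ∑ i, (cc i : ℤ) * m i = (q : ℤ) - JJ r ∧
        (2 : ℤ) ∣ a * (m 0 + m 1) + ((r 0).val + (r 1).val)) ∧ Lo w m} = 0 := by
  have : IsEmpty {m : Fin (N + 4) → ℤ //
      ((a : ℤ) * ∑ i, (cc i : ℤ) * m i = (q : ℤ) - JJ r ∧
        (2 : ℤ) ∣ a * (m 0 + m 1) + ((r 0).val + (r 1).val)) ∧ Lo w m} :=
    ⟨fun ⟨m, ⟨h1, _⟩, _⟩ => h ⟨_, h1.symm⟩⟩
  exact Nat.card_of_isEmpty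

lemma JJ_le {a : ℕ} (r : Fin (N + 4) → Fin a) : JJ r ≤ (N + 4) * (2 * a) := by
  unfold JJ
  calc ∑ i, cc i * (1 + (r i).val) ≤ ∑ i : Fin (N + 4), 2 * a := by
        apply Finset.sum_le_sum
        intro i _
        have := (r i).2
        apply Nat.mul_le_mul
        · unfold cc; split_ifs <;> omega
        · omega
    _ = _ := by simp

/-- the Worpitzky weight -/
noncomputable def FF (n q a : ℕ) (j : ℕ) : ℚ :=
  open Classical in if (a : ℤ) ∣ (q : ℤ) - j then (((q : ℚ) - j) / a) ^ n else 0

lemma exists_k (q a : ℕ) (ha : 1 ≤ a) (hq : (N + 4) * (2 * a) < q) (r : Fin (N + 4) → Fin a)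
    (h : (a : ℤ) ∣ (q : ℤ) - JJ r) : ∃ k : ℕ, 1 ≤ k ∧ (q : ℤ) - JJ r = a * k := by
  obtain ⟨k, hk⟩ := h
  have h1 := JJ_le r
  have h2 : 0 < (a : ℤ) * k := by rw [← hk]; omega
  have h3 : 0 < k := pos_of_mul_pos_right h2 (by positivity)
  refine ⟨k.toNat, by omega, ?_⟩
  rw [hk, Int.toNat_of_nonneg h3.le]

lemma FF_eq (n q a : ℕ) (ha : 1 ≤ a) (j k : ℕ) (h : (q : ℤ) - j = a * k) :
    FF n q a j = (k : ℚ) ^ n := by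
  unfold FF
  rw [if_pos ⟨_, h⟩]
  have h2 : (q : ℚ) - j = a * k := by exact_mod_cast h
  rw [h2, mul_div_cancel_left₀]
  exact_mod_cast (show a ≠ 0 by omega)

lemma count_odd (q a : ℕ) (ha : 1 ≤ a) (hodd : Odd a) (hq : (N + 4) * (2 * a) < q) :
    (N_D (N + 3) q 0 a : ℚ) = ∑ r : Fin (N + 4) → Fin a, FF (N + 3) q a (JJ r) := by
  have h := ND_eq (N := N) q (by omega) a
  rw [Finset.sum_congr rfl (fun w _ => division q a ha w), Finset.sum_comm] at h
  have h4 : (4 : ℚ) * N_D (N + 3) q 0 a = 4 * ∑ r : Fin (N + 4) → Fin a, FF (N + 3) q a (JJ r) := by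
    have h' := congrArg (Nat.cast : ℕ → ℚ) h
    push_cast at h'
    rw [h', Finset.mul_sum]
    apply Finset.sum_congr rfl
    intro r _
    by_cases hd : (a : ℤ) ∣ (q : ℤ) - JJ r
    · obtain ⟨k, hk1, hk⟩ := exists_k q a ha hq r hd
      rw [FF_eq _ _ _ ha _ k hk]
      have hw := worp (N := N) k hk1 ((r 0).val + (r 1).val)
      have hw' := congrArg (Nat.cast : ℕ → ℚ) hw
      push_cast at hw'
      rw [← hw']
      apply Finset.sum_congr rfl
      intro w _
      congr 1
      apply Nat.card_congr
      apply Equiv.subtypeEquivRight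
      intro m
      apply and_congr_left
      intro _
      rw [hk]
      unfold Lat
      apply and_congr
      · rw [mul_right_inj' (by exact_mod_cast (show a ≠ 0 by omega))]
      · obtain ⟨b, rfl⟩ := hodd
        push_cast
        have e : (2 * (b : ℤ) + 1) * (m 0 + m 1) + ((r 0).val + (r 1).val) =
          (m 0 + m 1 - ((r 0).val + (r 1).val)) + 2 * (b * (m 0 + m 1) + ((r 0).val + (r 1).val)) := by
          ring
        rw [e, dvd_add_left (dvd_mul_right _ _)]
    · unfold FF
      rw [if_neg hd, mul_zero]
      apply Finset.sum_eq_zero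
      intro w _
      rw [count_zero q a r w hd]
      simp
  linarith

lemma card_split (k : ℕ) (w : Wd N) :
    Nat.card {m : Fin (N + 4) → ℤ // ∑ i, (cc i : ℤ) * m i = k ∧ Lo w m} =
    Nat.card {m : Fin (N + 4) → ℤ // Lat k 0 m ∧ Lo w m} +
    Nat.card {m : Fin (N + 4) → ℤ // Lat k 1 m ∧ Lo w m} := by
  classical
  have hf : ∀ s, Finite {m : Fin (N + 4) → ℤ // Lat k s m ∧ Lo w m} := fun s =>
    finite_sum k _ (fun m hm => ⟨hm.1.1, hm.2.nonneg⟩)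
  have := hf 0
  have := hf 1
  rw [← Nat.card_sum]
  have e := subtypeOrEquiv (fun m : Fin (N + 4) → ℤ => Lat k 0 m ∧ Lo w m)
    (fun m => Lat k 1 m ∧ Lo w m) (by
      rw [Pi.disjoint_iff]
      intro m
      rw [Prop.disjoint_iff, not_and]
      rintro ⟨⟨-, h1⟩, -⟩ ⟨⟨-, h2⟩, -⟩
      omega)
  rw [← Nat.card_congr e]
  apply Nat.card_congr
  apply Equiv.subtypeEquivRight
  intro m
  unfold Lat
  have : (2 : ℤ) ∣ m 0 + m 1 - 0 ∨ (2 : ℤ) ∣ m 0 + m 1 - 1 := by omega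
  tauto

lemma count_even (q a : ℕ) (ha : 1 ≤ a) (heven : Even a) (hq : (N + 4) * (2 * a) < q) :
    (N_D (N + 3) q 0 a : ℚ) = ∑ r : Fin (N + 4) → Fin a,
      if 2 ∣ (r 0).val + (r 1).val then 2 * FF (N + 3) q a (JJ r) else 0 := by
  have h := ND_eq (N := N) q (by omega) a
  rw [Finset.sum_congr rfl (fun w _ => division q a ha w), Finset.sum_comm] at h
  have hpar : ∀ (r : Fin (N + 4) → Fin a) (m : Fin (N + 4) → ℤ),
      (2 : ℤ) ∣ a * (m 0 + m 1) + ((r 0).val + (r 1).val) ↔ 2 ∣ (r 0).val + (r 1).val := by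
    intro r m
    obtain ⟨b, rfl⟩ := heven
    have e : ((b + b : ℕ) : ℤ) * (m 0 + m 1) = 2 * (b * (m 0 + m 1)) := by push_cast; ring
    rw [e, dvd_add_right (dvd_mul_right _ _)]
    omega
  have h4 : (4 : ℚ) * N_D (N + 3) q 0 a = 4 * ∑ r : Fin (N + 4) → Fin a,
      if 2 ∣ (r 0).val + (r 1).val then 2 * FF (N + 3) q a (JJ r) else 0 := by
    have h' := congrArg (Nat.cast : ℕ → ℚ) h
    push_cast at h'
    rw [h', Finset.mul_sum]
    apply Finset.sum_congr rfl
    intro r _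
    by_cases hd : (a : ℤ) ∣ (q : ℤ) - JJ r
    · obtain ⟨k, hk1, hk⟩ := exists_k q a ha hq r hd
      rw [FF_eq _ _ _ ha _ k hk]
      simp only [hpar]
      split_ifs with hp
      · have hw0 := congrArg (Nat.cast : ℕ → ℚ) (worp (N := N) k hk1 0)
        have hw1 := congrArg (Nat.cast : ℕ → ℚ) (worp (N := N) k hk1 1)
        push_cast at hw0 hw1
        have e8 : (4 : ℚ) * (2 * (k : ℚ) ^ (N + 3)) = 4 * (k : ℚ) ^ (N + 3) + 4 * (k : ℚ) ^ (N + 3) := by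
          ring
        rw [e8]
        nth_rewrite 1 [← hw0]
        rw [← hw1, ← Finset.sum_add_distrib]
        apply Finset.sum_congr rfl
        intro w _
        rw [← Nat.cast_add, ← card_split]
        congr 1
        apply Nat.card_congr
        apply Equiv.subtypeEquivRight
        intro m
        apply and_congr_left
        intro _
        rw [hk, and_iff_left hp]
        rw [mul_right_inj' (by exact_mod_cast (show a ≠ 0 by omega))]
      · rw [mul_zero]
        apply Finset.sum_eq_zero
        intro w _
        simp [hp]
    · unfold FF
      rw [if_neg hd, mul_zero, ite_self, mul_zero]
      apply Finset.sum_eq_zero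
      intro w _
      rw [count_zero q a r w hd]
      simp
  linarith

/-- The linear functional sending `X ^ j` to `F j`. -/
noncomputable def Lam (F : ℕ → ℚ) : ℚ[X] →ₗ[ℚ] ℚ :=
  Polynomial.lsum (fun j => F j • LinearMap.id)

lemma Lam_apply (F : ℕ → ℚ) (g : ℚ[X]) : Lam F g = ∑ k ∈ g.support, F k * g.coeff k := by
  simp [Lam, Polynomial.lsum_apply, Polynomial.sum_def]

lemma Lam_monomial (F : ℕ → ℚ) (k : ℕ) (c : ℚ) : Lam F (monomial k c) = F k * c := by
  simp [Lam, Polynomial.lsum_apply, Polynomial.sum_monomial_index]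

lemma Lam_X_mul (F : ℕ → ℚ) (i : ℕ) (g : ℚ[X]) :
    Lam F (X ^ i * g) = Lam (fun j => F (j + i)) g := by
  induction g using Polynomial.induction_on' with
  | add p q hp hq => rw [mul_add, map_add, map_add, hp, hq]
  | monomial k c => rw [X_pow_mul_monomial, Lam_monomial, Lam_monomial]

lemma Lam_sum {ι : Type*} (s : Finset ι) (F : ι → ℕ → ℚ) (g : ℚ[X]) :
    Lam (fun j => ∑ i ∈ s, F i j) g = ∑ i ∈ s, Lam (F i) g := by
  simp only [Lam_apply, Finset.sum_mul]
  rw [Finset.sum_comm]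

lemma Lam_smul (c : ℚ) (F : ℕ → ℚ) (g : ℚ[X]) :
    Lam (fun j => c * F j) g = c * Lam F g := by
  simp only [Lam_apply, Finset.mul_sum, mul_assoc]

lemma Lam_sub (F G : ℕ → ℚ) (g : ℚ[X]) :
    Lam (fun j => F j - G j) g = Lam F g - Lam G g := by
  simp only [Lam_apply, sub_mul, Finset.sum_sub_distrib]

lemma Lam_expand (F : ℕ → ℚ) (g : ℚ[X]) :
    Lam F (expand ℚ 2 g) = Lam (fun j => F (j * 2)) g := by
  induction g using Polynomial.induction_on' with
  | add p q hp hq => rw [map_add, map_add, map_add, hp, hq]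
  | monomial k c => rw [expand_monomial, Lam_monomial, Lam_monomial]

lemma Lam_zero (g : ℚ[X]) : Lam (fun _ => 0) g = 0 := by
  simp [Lam_apply]

lemma polysum_eq (g : ℚ[X]) (q n : ℕ) :
    polysum g q n = Lam (fun j => ((q : ℚ) - j) ^ n) g := by
  rw [Lam_apply, polysum]
  symm
  rw [Finset.sum_subset (s₂ := Finset.range (g.natDegree + 1))]
  · exact Finset.sum_congr rfl (fun k _ => mul_comm _ _)
  · exact Polynomial.supp_subset_range_natDegree_succ
  · intro k _ hk
    rw [Polynomial.notMem_support_iff.mp hk, mul_zero]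

lemma key_vanish (c A : ℕ) (q : ℚ) : ∀ (d : ℕ) (u : ℕ → ℚ)
    (_ : ∀ j, ∑ i ∈ Finset.range A, u (j + c * i) = 0) (g : ℚ[X]),
    Lam (fun j => u j * (q - j) ^ d)
      ((∑ i ∈ Finset.range A, (X : ℚ[X]) ^ (c * i)) ^ (d + 1) * g) = 0 := by
  intro d
  induction d using Nat.strong_induction_on with
  | _ d ih =>
  intro u hu g
  rw [pow_succ', mul_assoc, Finset.sum_mul, map_sum]
  simp only [Lam_X_mul]
  rw [← Lam_sum]
  have hF : (fun j : ℕ => ∑ i ∈ Finset.range A, u (j + c * i) * (q - ((j + c * i : ℕ) : ℚ)) ^ d) =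
      fun j : ℕ => ∑ e ∈ Finset.range d, (∑ i ∈ Finset.range A,
        ((-(c * i : ℚ)) ^ (d - e) * (d.choose e : ℚ)) * u (j + c * i)) * (q - j) ^ e := by
    funext j
    have h1 : ∀ i ∈ Finset.range A, u (j + c * i) * (q - ((j + c * i : ℕ) : ℚ)) ^ d =
        ∑ e ∈ Finset.range (d + 1), ((-(c * i : ℚ)) ^ (d - e) * (d.choose e : ℚ)) * u (j + c * i) *
          (q - j) ^ e := by
      intro i _
      have : q - ((j + c * i : ℕ) : ℚ) = (q - j) + (-(c * i : ℚ)) := by push_cast; ring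
      rw [this, add_pow, Finset.mul_sum]
      apply Finset.sum_congr rfl
      intro e _
      ring
    rw [Finset.sum_congr rfl h1, Finset.sum_comm, Finset.sum_range_succ]
    simp only [Nat.sub_self, pow_zero, Nat.choose_self, Nat.cast_one, one_mul]
    rw [← Finset.sum_mul (Finset.range A), hu, zero_mul, add_zero]
    apply Finset.sum_congr rfl
    intro e _
    rw [Finset.sum_mul]
  rw [hF, Lam_sum]
  apply Finset.sum_eq_zero
  intro e he
  rw [Finset.mem_range] at he
  have hd : d = (e + 1) + (d - e - 1) := by omega
  have := ih e he (fun j => ∑ i ∈ Finset.range A,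
        ((-(c * i : ℚ)) ^ (d - e) * (d.choose e : ℚ)) * u (j + c * i)) ?_
        ((∑ i ∈ Finset.range A, (X : ℚ[X]) ^ (c * i)) ^ (d - e - 1) * g)
  · rw [← mul_assoc, ← pow_add, ← hd] at this
    exact this
  · intro j
    rw [Finset.sum_comm]
    apply Finset.sum_eq_zero
    intro i _
    rw [← Finset.mul_sum]
    have h2 := hu (j + c * i)
    rw [Finset.sum_congr rfl (fun k _ => by rw [add_right_comm])] at h2
    rw [h2, mul_zero]

lemma gen_fun {a : ℕ} (F : ℕ → ℚ) (w : Fin (N + 4) → ℕ → ℚ) :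
    ∑ r : Fin (N + 4) → Fin a, (∏ i, w i (r i).val) * F (JJ r) =
      Lam F (∏ i : Fin (N + 4), ∑ t ∈ Finset.range a, C (w i t) * X ^ (cc i * (1 + t))) := by
  simp only [← Fin.sum_univ_eq_sum_range (fun t => C (w _ t) * X ^ (cc _ * (1 + t)))]
  rw [Finset.prod_univ_sum, map_sum, Fintype.piFinset_univ]
  apply Finset.sum_congr rfl
  intro r _
  rw [Finset.prod_mul_distrib, Finset.prod_pow_eq_pow_sum, ← map_prod, C_mul_X_pow_eq_monomial,
    Lam_monomial, mul_comm]
  rfl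

lemma prod_split' (f : Fin (N + 4) → ℚ[X]) (P M : ℚ[X]) (Q : ℚ[X])
    (h : ∀ i : Fin (N + 4), f i = if i.val = 0 ∨ i.val = 1 then P else
      if i.val = N + 2 ∨ i.val = N + 3 then Q else M) :
    ∏ i, f i = P ^ 2 * M ^ N * Q ^ 2 := by
  rw [Fin.prod_univ_succ, Fin.prod_univ_succ, Fin.prod_univ_castSucc, Fin.prod_univ_castSucc]
  have hm : ∀ i : Fin N, f (i.castSucc.castSucc.succ.succ) = M := by
    intro i
    rw [h]
    have := i.2
    simp
    omega
  rw [Finset.prod_congr rfl (fun i _ => hm i)]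
  simp [h]
  ring

lemma end_sum (a : ℕ) : ∑ t ∈ Finset.range a, (X : ℚ[X]) ^ (1 + t) = X * phi a := by
  simp [phi, Finset.mul_sum, pow_add]

lemma mid_sum (a : ℕ) : ∑ t ∈ Finset.range a, (X : ℚ[X]) ^ (2 * (1 + t)) = X ^ 2 * phi2 a := by
  simp [phi2, Finset.mul_sum, mul_add, pow_add]

lemma gen_odd {a : ℕ} (F : ℕ → ℚ) :
    ∑ r : Fin (N + 4) → Fin a, F (JJ r) =
      Lam F (X ^ (2 * N + 4) * phi2 a ^ N * phi a ^ 4) := by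
  have h := gen_fun (N := N) (a := a) F (fun _ _ => 1)
  simp only [Finset.prod_const_one, one_mul, map_one] at h
  rw [h, prod_split' _ (X * phi a) (X ^ 2 * phi2 a) (X * phi a)]
  · congr 1
    ring
  · intro i
    rw [← end_sum, ← mid_sum]
    unfold cc
    split_ifs <;> first | (exfalso; omega) | simp

lemma phi_two_mul (A : ℕ) : phi (A + A) = (1 + X) * phi2 A := by
  induction A with
  | zero => simp [phi, phi2]
  | succ A ih =>
    have e : A + 1 + (A + 1) = A + A + 1 + 1 := by ring
    unfold phi phi2 at *
    rw [e, Finset.sum_range_succ, Finset.sum_range_succ, ih, Finset.sum_range_succ]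
    ring

lemma sphi_two_mul (A : ℕ) : ∑ t ∈ Finset.range (A + A), C ((-1 : ℚ) ^ t) * X ^ (1 + t) =
    X * (1 - X) * phi2 A := by
  induction A with
  | zero => simp [phi2]
  | succ A ih =>
    have e : A + 1 + (A + 1) = A + A + 1 + 1 := by ring
    have e1 : (-1 : ℚ) ^ (A + A) = 1 := Even.neg_one_pow ⟨A, rfl⟩
    have e2 : (-1 : ℚ) ^ (A + A + 1) = -1 := by rw [pow_succ, e1]; ring
    unfold phi2 at *
    rw [e, Finset.sum_range_succ, Finset.sum_range_succ, ih, Finset.sum_range_succ, e1, e2]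
    simp only [map_neg, map_one]
    ring

lemma phi2_two_mul (A : ℕ) : phi2 (A + A) = phi2 A * (1 + X ^ (2 * A)) := by
  unfold phi2
  rw [Finset.sum_range_add, mul_add, mul_one, Finset.sum_mul]
  congr 1
  apply Finset.sum_congr rfl
  intro i _
  ring

lemma phi2_expand (A : ℕ) : phi2 A = expand ℚ 2 (phi A) := by
  simp [phi, phi2, ← pow_mul]

lemma phi2_odd (a : ℕ) (h : Odd a) : ∃ ψ : ℚ[X], phi2 a = phi a * ψ := by
  obtain ⟨b, rfl⟩ := h
  induction b with
  | zero => exact ⟨1, by simp [phi, phi2]⟩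
  | succ b _ =>
    refine ⟨(phi (2 * (b + 1) + 1)).comp (-X), ?_⟩
    have h1 : phi (2 * (b + 1) + 1) * (X - 1) = X ^ (2 * (b + 1) + 1) - 1 := geom_sum_mul _ _
    have h2 : phi2 (2 * (b + 1) + 1) * (X ^ 2 - 1) = (X ^ 2) ^ (2 * (b + 1) + 1) - 1 := by
      rw [← geom_sum_mul (X ^ 2 : ℚ[X])]
      simp only [phi2, pow_mul]
    have h3 := congrArg (fun p => Polynomial.comp p (-X)) h1
    simp only [mul_comp, sub_comp, X_comp, one_comp, pow_comp] at h3
    rw [Odd.neg_pow ⟨b + 1, rfl⟩] at h3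
    have hne : (X ^ 2 - 1 : ℚ[X]) ≠ 0 := X_pow_sub_C_ne_zero (by norm_num) 1
    apply mul_right_cancel₀ hne
    rw [h2]
    set Y := (X : ℚ[X]) ^ (2 * (b + 1) + 1)
    rw [← pow_mul, mul_comm 2, pow_mul]
    linear_combination (-X - 1) * (phi (2 * (b + 1) + 1)).comp (-X) * h1 + (Y - 1) * h3

lemma gen_even {A : ℕ} (F : ℕ → ℚ) (hF : ∀ j, F (j * 2) = 0) :
    (∑ r : Fin (N + 4) → Fin (A + A), if 2 ∣ (r 0).val + (r 1).val then 2 * F (JJ r) else 0) =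
      4 * Lam F (X ^ (2 * N + 5) * (1 + X ^ 2) * phi2 (A + A) ^ N * phi2 A ^ 4) := by
  have h1 := gen_odd (N := N) (a := A + A) F
  have h2 := gen_fun (N := N) (a := A + A) F
    (fun i t => if i.val = 0 ∨ i.val = 1 then (-1) ^ t else 1)
  rw [prod_split' _ (X * (1 - X) * phi2 A) (X ^ 2 * phi2 (A + A)) (X * phi (A + A))] at h2
  · have h3 : ∀ r : Fin (N + 4) → Fin (A + A),
        (if 2 ∣ (r 0).val + (r 1).val then 2 * F (JJ r) else 0) = F (JJ r) +
        (∏ i : Fin (N + 4), if i.val = 0 ∨ i.val = 1 then (-1 : ℚ) ^ (r i).val else 1) *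
          F (JJ r) := by
      intro r
      have : (∏ i : Fin (N + 4), if i.val = 0 ∨ i.val = 1 then (-1 : ℚ) ^ (r i).val else 1) =
          (-1) ^ ((r 0).val + (r 1).val) := by
        rw [Fin.prod_univ_succ, Fin.prod_univ_succ]
        simp [pow_add]
      rw [this]
      split_ifs with hd
      · rw [Even.neg_one_pow (even_iff_two_dvd.mpr hd)]; ring
      · rw [Odd.neg_one_pow (by rw [← Nat.not_even_iff_odd, even_iff_two_dvd]; exact hd)]; ring
    rw [Finset.sum_congr rfl (fun r _ => h3 r), Finset.sum_add_distrib, h1, h2, ← map_add]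
    have h4 : X ^ (2 * N + 4) * phi2 (A + A) ^ N * phi (A + A) ^ 4 +
        (X * (1 - X) * phi2 A) ^ 2 * (X ^ 2 * phi2 (A + A)) ^ N * (X * phi (A + A)) ^ 2 =
        (4 : ℚ) • (X ^ (2 * N + 5) * (1 + X ^ 2) * phi2 (A + A) ^ N * phi2 A ^ 4) +
        expand ℚ 2 (2 * X ^ (N + 2) * (1 + X) ^ 2 * phi (A + A) ^ N * phi A ^ 4) := by
      simp only [map_mul, map_pow, map_add, map_one, expand_X, ← phi2_expand, map_ofNat]
      rw [phi_two_mul, Polynomial.smul_eq_C_mul]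
      simp only [map_ofNat]
      ring
    rw [h4, map_add, Lam_expand]
    simp only [hF, Lam_zero, add_zero, map_smul, smul_eq_mul]
  · intro i
    rw [← end_sum, ← mid_sum, ← sphi_two_mul]
    unfold cc
    split_ifs <;> first | (exfalso; omega) | simp

open Classical in
lemma one_hit (A : ℕ) (hA : 1 ≤ A) (z : ℤ) :
    ∑ i ∈ Finset.range A, (if (A : ℤ) ∣ z - i then (1 : ℚ) else 0) = 1 := by
  have hA' : (0 : ℤ) < A := by exact_mod_cast hA
  have hnn := Int.emod_nonneg z hA'.ne'
  have hlt := Int.emod_lt_of_pos z hA'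
  rw [Finset.sum_eq_single (z % A).toNat]
  · rw [if_pos]
    rw [Int.toNat_of_nonneg hnn]
    exact Int.dvd_self_sub_emod
  · intro b hb hne
    rw [Finset.mem_range] at hb
    rw [if_neg]
    intro hd
    apply hne
    have h1 : (A : ℤ) ∣ z - z % A := Int.dvd_self_sub_emod
    have h2 : (A : ℤ) ∣ z % A - b := by
      have := dvd_sub hd h1
      simpa using this
    have h3 : z % A - b = 0 := Int.eq_zero_of_abs_lt_dvd h2 (by rw [abs_lt]; constructor <;> omega)
    omega
  · intro h
    exact absurd (Finset.mem_range.mpr (by omega)) h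

lemma final_odd (q a : ℕ) (ha : 1 ≤ a) (hodd : Odd a) (hq : (N + 4) * (2 * a) < q) :
    (a : ℚ) ^ (N + 4) * (N_D (N + 3) q 0 a : ℚ) =
      polysum (X ^ (2 * N + 4) * phi2 a ^ N * phi a ^ 4) q (N + 3) := by
  classical
  rw [count_odd q a ha hodd hq, gen_odd, polysum_eq]
  obtain ⟨ψ, hψ⟩ := phi2_odd a hodd
  have ha0 : (a : ℚ) ≠ 0 := by exact_mod_cast (show a ≠ 0 by omega)
  have key := key_vanish 1 a (q : ℚ) (N + 3)
    (fun j => a * (if (a : ℤ) ∣ (q : ℤ) - j then 1 else 0) - 1) ?_ (X ^ (2 * N + 4) * ψ ^ N)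
  · have e1 : (∑ i ∈ Finset.range a, (X : ℚ[X]) ^ (1 * i)) ^ (N + 3 + 1) *
        (X ^ (2 * N + 4) * ψ ^ N) = X ^ (2 * N + 4) * phi2 a ^ N * phi a ^ 4 := by
      rw [hψ]
      simp only [one_mul]
      unfold phi
      ring
    rw [e1] at key
    have e2 : (fun j : ℕ => ((a : ℚ) * (if (a : ℤ) ∣ (q : ℤ) - j then 1 else 0) - 1) *
        ((q : ℚ) - j) ^ (N + 3)) =
        fun j => (a : ℚ) ^ (N + 4) * FF (N + 3) q a j - ((q : ℚ) - j) ^ (N + 3) := by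
      funext j
      unfold FF
      split_ifs
      · rw [div_pow]
        field_simp
        ring
      · ring
    rw [e2, Lam_sub, Lam_smul] at key
    linarith
  · intro j
    have h := one_hit a ha ((q : ℤ) - j)
    rw [Finset.sum_sub_distrib, ← Finset.mul_sum]
    have h' : ∑ i ∈ Finset.range a, (if (a : ℤ) ∣ (q : ℤ) - ((j + 1 * i : ℕ) : ℤ) then (1 : ℚ) else 0)
        = 1 := by
      refine Eq.trans ?_ h
      apply Finset.sum_congr rfl
      intro i _
      have : (q : ℤ) - ((j + 1 * i : ℕ) : ℤ) = q - j - i := by push_cast; ring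
      rw [this]
    rw [h']
    simp

lemma final_even (q A : ℕ) (hA : 1 ≤ A) (hqo : Odd q) (hq : (N + 4) * (2 * (A + A)) < q) :
    ((A + A : ℕ) : ℚ) ^ (N + 4) * (N_D (N + 3) q 0 ((A + A : ℕ) : ℤ) : ℚ) =
      8 * polysum (X ^ (2 * N + 5) * (1 + X ^ 2) * phi2 (A + A) ^ N * phi2 A ^ 4) q (N + 3) := by
  classical
  obtain ⟨b, hb⟩ := hqo
  have hnd : ∀ j : ℕ, ¬ ((A + A : ℕ) : ℤ) ∣ (q : ℤ) - ((j * 2 : ℕ) : ℤ) := by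
    rintro j ⟨k, hk⟩
    have : ((A + A : ℕ) : ℤ) * k = 2 * (A * k) := by push_cast; ring
    rw [this] at hk
    omega
  rw [count_even q (A + A) (by omega) ⟨A, rfl⟩ hq, gen_even, polysum_eq]
  swap
  · intro j
    unfold FF
    rw [if_neg (hnd j)]
  have ha0 : ((A + A : ℕ) : ℚ) ≠ 0 := by exact_mod_cast (show A + A ≠ 0 by omega)
  have key := key_vanish 2 A (q : ℚ) (N + 3)
    (fun j => if Odd j then A * (if ((A + A : ℕ) : ℤ) ∣ (q : ℤ) - j then 1 else 0) - 1 else 0) ?_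
    (X ^ (2 * N + 5) * (1 + X ^ 2) * (1 + X ^ (2 * A)) ^ N)
  · have e1 : (∑ i ∈ Finset.range A, (X : ℚ[X]) ^ (2 * i)) ^ (N + 3 + 1) *
        (X ^ (2 * N + 5) * (1 + X ^ 2) * (1 + X ^ (2 * A)) ^ N) =
        X ^ 1 * expand ℚ 2 (X ^ (N + 2) * (1 + X) * phi (A + A) ^ N * phi A ^ 4) := by
      simp only [map_mul, map_pow, map_add, map_one, expand_X, ← phi2_expand]
      rw [phi2_two_mul, mul_pow]
      unfold phi2
      ring
    have e0 : X ^ (2 * N + 5) * (1 + X ^ 2) * phi2 (A + A) ^ N * phi2 A ^ 4 =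
        X ^ 1 * expand ℚ 2 (X ^ (N + 2) * (1 + X) * phi (A + A) ^ N * phi A ^ 4) := by
      simp only [map_mul, map_pow, map_add, map_one, expand_X, ← phi2_expand]
      ring
    rw [e1] at key
    rw [e0]
    rw [Lam_X_mul, Lam_expand] at key ⊢
    rw [Lam_X_mul, Lam_expand]
    have e2 : (fun j : ℕ => (if Odd (j * 2 + 1) then (A : ℚ) * (if ((A + A : ℕ) : ℤ) ∣
        (q : ℤ) - ((j * 2 + 1 : ℕ) : ℤ) then 1 else 0) - 1 else 0) *
        ((q : ℚ) - ((j * 2 + 1 : ℕ) : ℚ)) ^ (N + 3)) =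
        fun j => (((A + A : ℕ) : ℚ) ^ (N + 4) / 2) * FF (N + 3) q (A + A) (j * 2 + 1) -
          ((q : ℚ) - ((j * 2 + 1 : ℕ) : ℚ)) ^ (N + 3) := by
      funext j
      rw [if_pos ⟨j, by ring⟩]
      unfold FF
      split_ifs
      · rw [div_pow]
        have : (A : ℚ) = ((A + A : ℕ) : ℚ) / 2 := by push_cast; ring
        rw [this]
        generalize ((A + A : ℕ) : ℚ) = y at *
        field_simp
        ring
      · ring
    rw [e2, Lam_sub, Lam_smul] at key
    linarith
  · intro j
    by_cases hj : Odd j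
    · have hall : ∀ i, Odd (j + 2 * i) := fun i => hj.add_even (even_two_mul i)
      simp only [hall, if_true]
      obtain ⟨c, hc⟩ := hj
      have h := one_hit A hA ((b : ℤ) - c)
      rw [Finset.sum_sub_distrib, ← Finset.mul_sum]
      have h' : ∑ i ∈ Finset.range A,
          (if ((A + A : ℕ) : ℤ) ∣ (q : ℤ) - ((j + 2 * i : ℕ) : ℤ) then (1 : ℚ) else 0) = 1 := by
        refine Eq.trans ?_ h
        apply Finset.sum_congr rfl
        intro i _
        have e1 : (q : ℤ) - ((j + 2 * i : ℕ) : ℤ) = 2 * (b - c - i) := by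
          rw [hb, hc]; push_cast; ring
        have e2 : ((A + A : ℕ) : ℤ) = 2 * A := by push_cast; ring
        rw [e1, e2]
        simp only [mul_dvd_mul_iff_left (two_ne_zero (α := ℤ))]
      rw [h']
      simp
    · have hall : ∀ i, ¬ Odd (j + 2 * i) := by
        intro i h
        apply hj
        rw [Nat.odd_iff] at *
        omega
      simp [hall]

end DCount

/-- Proposition 4.5. Formula for the number of points avoiding the
`D_n` deformation with hyperplanes `x_i ± x_j = 0, 1, ..., a`, for all large
odd `q`. -/
theorem statement9 (n a : ℕ) (hn : 3 ≤ n) (ha : 1 ≤ a) :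
    ∃ N : ℕ, ∀ q : ℕ, Odd q → N < q →
      (Even a →
        (a : ℚ) ^ (n + 1) * (N_D n q 0 (a : ℤ) : ℚ) =
          8 * polysum (X ^ (2 * n - 1) * (1 + X ^ 2) * (phi2 a) ^ (n - 3) *
            (phi2 (a / 2)) ^ 4) q n) ∧
      (Odd a →
        (a : ℚ) ^ (n + 1) * (N_D n q 0 (a : ℤ) : ℚ) =
          polysum (X ^ (2 * n - 2) * (phi2 a) ^ (n - 3) * (phi a) ^ 4) q n) := by
  obtain ⟨N, rfl⟩ := Nat.exists_eq_add_of_le' hn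
  refine ⟨(N + 4) * (2 * a), fun q hqo hq => ⟨fun he => ?_, fun ho => ?_⟩⟩
  · obtain ⟨A, rfl⟩ := he
    have h := DCount.final_even (N := N) q A (by omega) hqo hq
    have e1 : 2 * (N + 3) - 1 = 2 * N + 5 := by omega
    have e2 : (A + A) / 2 = A := by omega
    rw [e1, e2, Nat.add_sub_cancel]
    exact h
  · have h := DCount.final_odd (N := N) q a ha ho hq
    have e1 : 2 * (N + 3) - 2 = 2 * N + 4 := by omega
    rw [e1, Nat.add_sub_cancel]
    exact h
end
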